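/- Let α ∈ ℝ \ {0}. Then there exists ε₀ > 0 such that every steady solution of the Euler equations on the non-rotating sphere whose vorticity Ω̄ satisfies ‖Ω̄ + 2αY₁⁰‖_{H⁴} ≤ ε₀ and ⟨Ω̄, Y₁^m⟩ = 0 for |m| = 1, must be zonal: the velocity is Ū = Ū(θ)e_φ and Ω̄ = Ω̄(θ). -/

import Mathlib

open MeasureTheory
open scoped ENNReal

noncomputable section

/-- Functions on the unit sphere, represented in colatitude-longitude coordinates `(θ, φ)`. -/
abbrev SphereFun : Type := ℝ → ℝ → ℝ

/-- The `L²` inner product on the sphere: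
`⟨u,v⟩ = ∫₀^{2π} ∫₀^π u v sin θ dθ dφ`. -/
def sInner (u v : SphereFun) : ℝ :=
  ∫ φ in (0:ℝ)..(2*Real.pi), ∫ θ in (0:ℝ)..Real.pi, u θ φ * v θ φ * Real.sin θ

/-- Legendre polynomials via Rodrigues' formula. -/
def legP (n : ℕ) (s : ℝ) : ℝ :=
  (1 / ((2:ℝ)^n * (Nat.factorial n : ℝ))) * iteratedDeriv n (fun x : ℝ => (x^2 - 1)^n) s

/-- Associated Legendre functions `P_n^m`. -/
def assocLegP (n m : ℕ) (s : ℝ) : ℝ :=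
  (-1 : ℝ)^m * (1 - s^2) ^ ((m : ℝ)/2) * iteratedDeriv m (legP n) s

/-- Real spherical harmonics `Y_n^m`. -/
def Ynm (n : ℕ) (m : ℤ) : SphereFun := fun θ φ =>
  if m = 0 then
    Real.sqrt ((2*(n:ℝ)+1)/(4*Real.pi)) * legP n (Real.cos θ)
  else if 0 < m then
    (-1 : ℝ)^(m.natAbs) * Real.sqrt 2 *
      Real.sqrt ((2*(n:ℝ)+1)/(4*Real.pi) *
        ((Nat.factorial (n - m.natAbs) : ℝ) / (Nat.factorial (n + m.natAbs) : ℝ))) *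
      assocLegP n m.natAbs (Real.cos θ) * Real.cos ((m.natAbs : ℝ) * φ)
  else
    (-1 : ℝ)^(m.natAbs) * Real.sqrt 2 *
      Real.sqrt ((2*(n:ℝ)+1)/(4*Real.pi) *
        ((Nat.factorial (n - m.natAbs) : ℝ) / (Nat.factorial (n + m.natAbs) : ℝ))) *
      assocLegP n m.natAbs (Real.cos θ) * Real.sin ((m.natAbs : ℝ) * φ)

/-- The spherical-harmonic coefficient `u_n^m = ⟨u, Y_n^m⟩`. -/
def coeff (u : SphereFun) (n : ℕ) (m : ℤ) : ℝ := sInner u (Ynm n m)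

/-- `μ_n = n(n+1) + 1`. -/
def muSp (n : ℕ) : ℝ := (n:ℝ)*((n:ℝ)+1)+1

/-- Squared (inhomogeneous) Sobolev norm `‖u‖²_{H^k} = Σ μ_n^k |u_n^m|²`. -/
def sobNormSq (k : ℕ) (u : SphereFun) : ℝ≥0∞ :=
  ∑' p : ℕ × ℤ, if |p.2| ≤ (p.1 : ℤ) then
    ENNReal.ofReal ((muSp p.1)^k * (coeff u p.1 p.2)^2) else 0

/-- Squared homogeneous Sobolev norm `‖u‖²_{Ḣ^k} = Σ_{n ≥ 1} λ_n^k |u_n^m|²`. -/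
def dotNormSq (k : ℕ) (u : SphereFun) : ℝ≥0∞ :=
  ∑' p : ℕ × ℤ, if 1 ≤ p.1 ∧ |p.2| ≤ (p.1 : ℤ) then
    ENNReal.ofReal (((p.1:ℝ)*((p.1:ℝ)+1))^k * (coeff u p.1 p.2)^2) else 0

/-- Squared Gevrey norm `‖u‖²_{G_λ} = Σ_{n ≥ 1} μ_n² e^{2λ√μ_n} |u_n^m|²`. -/
def gevNormSq (lam : ℝ) (u : SphereFun) : ℝ≥0∞ :=
  ∑' p : ℕ × ℤ, if 1 ≤ p.1 ∧ |p.2| ≤ (p.1 : ℤ) then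
    ENNReal.ofReal ((muSp p.1)^2 * Real.exp (2*lam*Real.sqrt (muSp p.1)) *
      (coeff u p.1 p.2)^2) else 0

/-- `∂_θ`. -/
def dTheta (u : SphereFun) : SphereFun := fun θ φ => deriv (fun t => u t φ) θ

/-- `∂_φ`. -/
def dPhi (u : SphereFun) : SphereFun := fun θ φ => deriv (fun p => u θ p) φ

/-- The Laplace–Beltrami operator in colatitude-longitude coordinates:
`Δu = (1/sinθ)∂_θ(sinθ ∂_θu) + (1/sin²θ)∂²_φu`. -/
def lapS (u : SphereFun) : SphereFun := fun θ φ =>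
  (1 / Real.sin θ) * deriv (fun t => Real.sin t * dTheta u t φ) θ
  + (1 / (Real.sin θ)^2) * dPhi (dPhi u) θ φ

/-- A zonal function: one depending only on the colatitude `θ`. -/
def Zonal (u : SphereFun) : Prop := ∀ (θ φ₁ φ₂ : ℝ), u θ φ₁ = u θ φ₂

/-- Zonal on the coordinate chart `θ ∈ [0, π]`. -/
def ZonalOn (u : SphereFun) : Prop :=
  ∀ θ ∈ Set.Icc (0:ℝ) Real.pi, ∀ (φ₁ φ₂ : ℝ), u θ φ₁ = u θ φ₂

/-- `2π`-periodicity in the longitude. -/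
def PeriodicPhi (u : SphereFun) : Prop := ∀ θ φ, u θ (φ + 2*Real.pi) = u θ φ

/-- The advection term `U·∇f` for the velocity `U = ∇⊥Ψ`, i.e.
`(1/sinθ)∂_φΨ ∂_θf − ∂_θΨ (1/sinθ)∂_φf`. -/
def advect (Ψ f : SphereFun) : SphereFun := fun θ φ =>
  (1 / Real.sin θ) * dPhi Ψ θ φ * dTheta f θ φ
  - dTheta Ψ θ φ * ((1 / Real.sin θ) * dPhi f θ φ)

/-- Smoothness in the coordinates. -/
def SphSmooth (u : SphereFun) : Prop := ContDiff ℝ (⊤ : ℕ∞) (Function.uncurry u)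

/-- A function is trivial if it is a zonal function plus an element of
`span{Y₂^m : |m| ≤ 2}`; non-triviality is the negation of this. -/
def SphNontrivial (u : SphereFun) : Prop :=
  ¬ ∃ (z : SphereFun) (c : ℤ → ℝ), Zonal z ∧
      ∀ θ ∈ Set.Icc (0:ℝ) Real.pi, ∀ φ : ℝ,
        u θ φ = z θ φ + ∑ m ∈ Finset.Icc (-2 : ℤ) 2, c m * Ynm 2 m θ φ

/-- Real analyticity on the sphere, characterized by membership in a Gevrey class. -/
def RealAnalyticSphere (u : SphereFun) : Prop := ∃ lam > 0, gevNormSq lam u < ⊤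

/-! Let `v = ∂_φ Ψ`. For a steady flow the vorticity equation, multiplied by `v` and integrated
over circles of latitude, is an identity for the `θ`-derivative of a momentum flux that vanishes
at both poles. When the vorticity is close to that of the rigid rotation, this derivative is
`β (|∇v|² - 2 v²)` up to an error `O(ε₀) |∇v|²`, with `β` a nonzero multiple of `α`; hence
`∫ (|∇v|² - 2 v²) dS²` is at most a small multiple of `∫ |∇v|² dS²`. On the other hand `v` has
zero mean on every circle of latitude and is orthogonal to `Y₁^{±1}`, so its expansion starts at
`λ₂ = 6` and `∫ (|∇v|² - 2 v²) dS²` is at least a fixed fraction of `∫ |∇v|² dS²`. Both can hold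
only if `v = 0`. The error is controlled pointwise by the vorticity perturbation
`w = ΔΨ + 2αY₁⁰`, whose sup norm is at most a constant times `∑ (2n + 1) |w_n^m|`, and so times
its `H⁴` norm. -/

/-! ### Legendre polynomials -/

section Legendre
open Real Polynomial

/-- The `n`-th Legendre polynomial as an element of `ℝ[X]`; its evaluation is `legP n`. -/
def legendrePoly (n : ℕ) : ℝ[X] :=
  C (1 / ((2 : ℝ) ^ n * (n.factorial : ℝ))) * derivative^[n] ((X ^ 2 - 1) ^ n)

lemma iteratedDeriv_polynomial_eval (p : ℝ[X]) (m : ℕ) :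
    iteratedDeriv m (fun x => p.eval x) = fun x => (derivative^[m] p).eval x := by
  induction m with
  | zero => rfl
  | succ k ih =>
    rw [iteratedDeriv_succ, ih, Function.iterate_succ_apply']
    exact funext fun _ => Polynomial.deriv _

lemma legP_eq_eval (n : ℕ) : legP n = fun s => (legendrePoly n).eval s := by
  have h := iteratedDeriv_polynomial_eval ((X ^ 2 - 1) ^ n) n
  simp only [eval_pow, eval_sub, eval_X, eval_one] at h
  funext s
  simp only [legP, legendrePoly, h, eval_mul, eval_C]

lemma iteratedDeriv_legP (n m : ℕ) (s : ℝ) :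
    iteratedDeriv m (legP n) s = (derivative^[m] (legendrePoly n)).eval s := by
  rw [legP_eq_eval, iteratedDeriv_polynomial_eval]

lemma X_sq_sub_one_mul_derivative_pow (n : ℕ) :
    ((X:ℝ[X]) ^ 2 - 1) * derivative ((X ^ 2 - 1) ^ n) = C (2 * (n : ℝ)) * X * (X ^ 2 - 1) ^ n := by
  cases n with
  | zero => simp
  | succ n =>
    simp only [derivative_pow, derivative_sub, derivative_X, derivative_one,
      Nat.add_sub_cancel, map_mul, map_natCast, map_ofNat]
    push_cast
    ring

lemma iterate_derivative_X_sq_sub_one_pow_ode (n k : ℕ) :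
    ((X:ℝ[X]) ^ 2 - 1) * derivative^[k + 2] ((X ^ 2 - 1) ^ n)
      + C (2 * ((k : ℝ) + 1 - n)) * X * derivative^[k + 1] ((X ^ 2 - 1) ^ n)
      + C (((k : ℝ) + 1) * (k - 2 * n)) * derivative^[k] ((X ^ 2 - 1) ^ n) = 0 := by
  induction k with
  | zero =>
    have h := congrArg derivative (X_sq_sub_one_mul_derivative_pow n)
    simp only [derivative_mul, derivative_sub, derivative_X_pow, derivative_one, derivative_X,
      derivative_C] at h
    simp only [Function.iterate_succ_apply', Function.iterate_zero, id, map_mul, map_sub, map_add,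
      map_natCast, map_ofNat, map_one] at h ⊢
    push_cast at h ⊢
    linear_combination h
  | succ k ih =>
    have h := congrArg derivative ih
    simp only [derivative_mul, derivative_sub, derivative_add, derivative_X_pow, derivative_one,
      derivative_X, derivative_zero, derivative_C,
      ← Function.iterate_succ_apply' derivative] at h
    simp only [map_mul, map_sub, map_add, map_natCast, map_ofNat, map_one] at h ⊢
    simp only [show k + 1 + 2 = k + 1 + 1 + 1 from rfl, Nat.succ_eq_add_one] at h ⊢
    push_cast at h ⊢
    linear_combination h

lemma legendrePoly_ode (n m : ℕ) :
    ((X:ℝ[X]) ^ 2 - 1) * derivative^[m + 2] (legendrePoly n)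
      + C (2 * ((m : ℝ) + 1)) * X * derivative^[m + 1] (legendrePoly n)
      + C (((n : ℝ) + m + 1) * (m - n)) * derivative^[m] (legendrePoly n) = 0 := by
  have h := iterate_derivative_X_sq_sub_one_pow_ode n (m + n)
  simp only [legendrePoly, iterate_derivative_C_mul, ← Function.iterate_add_apply]
  rw [add_right_comm m n 2, add_right_comm m n 1] at h
  simp only [map_mul, map_sub, map_add, map_natCast, map_ofNat, map_one] at h ⊢
  push_cast at h
  linear_combination C (1 / ((2 : ℝ) ^ n * (n.factorial : ℝ))) * h

lemma derivative_weight_mul_iterate_derivative_legendrePoly (n m : ℕ) :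
    derivative ((1 - (X:ℝ[X]) ^ 2) ^ (m + 1) * derivative^[m + 1] (legendrePoly n))
      = -C (((n : ℝ) + m + 1) * (n - m)) * ((1 - X ^ 2) ^ m * derivative^[m] (legendrePoly n)) := by
  have h := legendrePoly_ode n m
  rw [derivative_mul, derivative_pow, ← Function.iterate_succ_apply' derivative]
  simp only [derivative_X_pow, derivative_one, Nat.add_sub_cancel, map_mul,
    map_sub, map_add, map_natCast, map_ofNat, map_one] at h ⊢
  push_cast at h ⊢
  linear_combination (-(1 - (X:ℝ[X]) ^ 2) ^ m) * h

lemma eval_iterate_derivative_X_sq_sub_one_pow {a : ℝ} (ha : a ^ 2 = 1) (n : ℕ) :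
    (derivative^[n] (((X:ℝ[X]) ^ 2 - 1) ^ n)).eval a = n.factorial * (2 * a) ^ n := by
  have hfactor : (((X:ℝ[X]) ^ 2 - 1) ^ n).map (algebraMap ℝ ℝ) = (X - C a) ^ n * (X + C a) ^ n := by
    rw [Algebra.algebraMap_self, Polynomial.map_id, ← mul_pow, ← C_1, ← ha, C_pow]
    ring
  have h := aeval_iterate_derivative_self _ n a hfactor
  rw [coe_aeval_eq_eval] at h
  rw [h, nsmul_eq_mul, eval_pow, eval_add, eval_X, eval_C, two_mul]

lemma legendrePoly_eval_of_sq_eq_one {a : ℝ} (ha : a ^ 2 = 1) (n : ℕ) :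
    (legendrePoly n).eval a = a ^ n := by
  rw [legendrePoly, eval_mul, eval_C, eval_iterate_derivative_X_sq_sub_one_pow ha, mul_pow]
  have : (n.factorial : ℝ) ≠ 0 := by positivity
  field_simp

lemma natDegree_X_sq_sub_one_pow (n : ℕ) : (((X:ℝ[X]) ^ 2 - 1) ^ n).natDegree = 2 * n := by
  rw [natDegree_pow, ← C_1, natDegree_X_pow_sub_C, mul_comm]

lemma natDegree_legendrePoly_le (n : ℕ) : (legendrePoly n).natDegree ≤ n := by
  refine (natDegree_C_mul_le _ _).trans ((natDegree_iterate_derivative _ _).trans ?_)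
  rw [natDegree_X_sq_sub_one_pow]
  omega

lemma coeff_legendrePoly_ne_zero (n : ℕ) : (legendrePoly n).coeff n ≠ 0 := by
  have hmonic : (((X:ℝ[X]) ^ 2 - 1) ^ n).Monic := by
    rw [← C_1]
    exact (monic_X_pow_sub_C _ two_ne_zero).pow n
  have hlead := hmonic.coeff_natDegree
  rw [natDegree_X_sq_sub_one_pow] at hlead
  have hfact : ((2 * n).descFactorial n : ℝ) ≠ 0 := by
    rw [Nat.cast_ne_zero, Ne, Nat.descFactorial_eq_zero_iff_lt]
    omega
  rw [legendrePoly, coeff_C_mul, coeff_iterate_derivative, ← two_mul, hlead, nsmul_eq_mul, mul_one]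
  exact mul_ne_zero (by positivity) hfact

lemma degree_iterate_derivative_legendrePoly (m j : ℕ) :
    (derivative^[m] (legendrePoly (m + j))).degree = j := by
  have hle : (derivative^[m] (legendrePoly (m + j))).natDegree ≤ j := by
    have := natDegree_iterate_derivative (legendrePoly (m + j)) m
    have := natDegree_legendrePoly_le (m + j)
    omega
  refine degree_eq_of_le_of_coeff_ne_zero (natDegree_le_iff_degree_le.1 hle) ?_
  rw [coeff_iterate_derivative, add_comm m j, nsmul_eq_mul]
  refine mul_ne_zero ?_ (coeff_legendrePoly_ne_zero _)
  rw [Nat.cast_ne_zero, Ne, Nat.descFactorial_eq_zero_iff_lt]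
  omega

lemma iterate_derivative_legendrePoly_eq_zero {n m : ℕ} (h : n < m) :
    derivative^[m] (legendrePoly n) = 0 :=
  iterate_derivative_eq_zero ((natDegree_legendrePoly_le n).trans_lt h)

lemma exists_sum_of_sequence (S : Polynomial.Sequence ℝ) {N : ℕ} {Q : ℝ[X]} (hQ : Q.degree < N) :
    ∃ a : ℕ → ℝ, Q = ∑ k ∈ Finset.range N, C (a k) * S k := by
  have hmem : Q ∈ Submodule.span ℝ (S '' Set.Iio N) := by
    rw [S.span_degreeLT fun i _ => (leadingCoeff_ne_zero.2 (S.ne_zero i)).isUnit]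
    exact mem_degreeLT.2 hQ
  rw [← Finset.coe_Iio, Submodule.mem_span_image_finset_iff_exists_fun'] at hmem
  obtain ⟨a, ha⟩ := hmem
  exact ⟨a, by simp only [← smul_eq_C_mul, ← Nat.Iio_eq_range, ha]⟩

/-- The Legendre polynomials as a polynomial sequence. -/
def legendreSequence : Polynomial.Sequence ℝ where
  elems' := legendrePoly
  degree_eq' n := by simpa using degree_iterate_derivative_legendrePoly 0 n

end Legendre

/-! ### Orthogonality and sup bounds for Legendre functions -/

section LegendreIntegrals
open Real Polynomial

/-- Integration of polynomials over `[-1, 1]`, as a linear functional. -/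
def polyIntegral : ℝ[X] →ₗ[ℝ] ℝ where
  toFun p := ∫ x in (-1 : ℝ)..1, p.eval x
  map_add' p q := by
    simp only [eval_add]
    exact intervalIntegral.integral_add (p.continuous.intervalIntegrable _ _)
      (q.continuous.intervalIntegrable _ _)
  map_smul' c p := by
    simp only [eval_smul, smul_eq_mul, RingHom.id_apply]
    exact intervalIntegral.integral_const_mul _ _

lemma polyIntegral_apply (p : ℝ[X]) : polyIntegral p = ∫ x in (-1 : ℝ)..1, p.eval x := rfl

lemma polyIntegral_C_mul (c : ℝ) (p : ℝ[X]) : polyIntegral (C c * p) = c * polyIntegral p := by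
  rw [← smul_eq_C_mul, map_smul, smul_eq_mul]

lemma polyIntegral_derivative (p : ℝ[X]) :
    polyIntegral (derivative p) = p.eval 1 - p.eval (-1) :=
  intervalIntegral.integral_eq_sub_of_hasDerivAt (fun x _ => p.hasDerivAt x)
    ((derivative p).continuous.intervalIntegrable _ _)

/-- The weighted inner product of the `m`-th derivatives of two Legendre polynomials. -/
def derivLegendreInner (m n k : ℕ) : ℝ :=
  polyIntegral ((1 - X ^ 2) ^ m * derivative^[m] (legendrePoly n) * derivative^[m] (legendrePoly k))

lemma derivLegendreInner_comm (m n k : ℕ) :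
    derivLegendreInner m n k = derivLegendreInner m k n := by
  rw [derivLegendreInner, mul_right_comm, derivLegendreInner]

lemma derivLegendreInner_succ (m n k : ℕ) :
    derivLegendreInner (m + 1) n k = ((n : ℝ) + m + 1) * (n - m) * derivLegendreInner m n k := by
  have hboundary := polyIntegral_derivative ((1 - X ^ 2) ^ (m + 1) *
    derivative^[m + 1] (legendrePoly n) * derivative^[m] (legendrePoly k))
  rw [derivative_mul, derivative_weight_mul_iterate_derivative_legendrePoly, map_add,
    ← Function.iterate_succ_apply' derivative, neg_mul, neg_mul, mul_assoc (C _), map_neg,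
    polyIntegral_C_mul] at hboundary
  simp only [eval_mul, eval_pow, eval_sub, eval_one, eval_X, one_pow, neg_one_sq, sub_self,
    zero_pow (Nat.succ_ne_zero m), zero_mul] at hboundary
  simp only [derivLegendreInner]
  linarith

lemma derivLegendreInner_eq_zero {n k : ℕ} (m : ℕ) (hnk : n ≠ k) :
    derivLegendreInner m n k = 0 := by
  induction m with
  | succ m ih => rw [derivLegendreInner_succ, ih, mul_zero]
  | zero =>
    have hn := derivLegendreInner_succ 0 n k
    have hk := derivLegendreInner_succ 0 k n
    rw [derivLegendreInner_comm, derivLegendreInner_comm 0 k, hn] at hk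
    have hfactor : ((n : ℝ) - k) * (n + k + 1) ≠ 0 :=
      mul_ne_zero (sub_ne_zero.2 (by exact_mod_cast hnk)) (by positivity)
    refine (mul_eq_zero.1 ?_).resolve_left hfactor
    push_cast at hk
    linarith

lemma polyIntegral_legendrePoly_mul_legendrePoly {n k : ℕ} (hnk : n ≠ k) :
    polyIntegral (legendrePoly n * legendrePoly k) = 0 := by
  simpa [derivLegendreInner] using derivLegendreInner_eq_zero 0 hnk

lemma polyIntegral_legendrePoly_mul_eq_zero {n : ℕ} {Q : ℝ[X]} (hQ : Q.degree < n) :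
    polyIntegral (legendrePoly n * Q) = 0 := by
  obtain ⟨a, rfl⟩ := exists_sum_of_sequence legendreSequence hQ
  rw [Finset.mul_sum, map_sum]
  refine Finset.sum_eq_zero fun k hk => ?_
  rw [mul_left_comm, polyIntegral_C_mul]
  exact mul_eq_zero_of_right _
    (polyIntegral_legendrePoly_mul_legendrePoly (Finset.mem_range.1 hk).ne')

lemma degree_X_mul_derivative_sub_lt {n : ℕ} {p : ℝ[X]} (hp : p.natDegree ≤ n) :
    (X * derivative p - C (n : ℝ) * p).degree < (n : WithBot ℕ) := by
  refine (degree_lt_iff_coeff_zero _ _).2 fun k hk => ?_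
  have hcoeff : (X * derivative p).coeff k = k * p.coeff k := by
    cases k with
    | zero => simp
    | succ k => rw [coeff_X_mul, coeff_derivative, mul_comm]; push_cast; rfl
  rw [coeff_sub, hcoeff, coeff_C_mul]
  rcases hk.eq_or_lt with rfl | hlt
  · exact sub_self _
  · rw [coeff_eq_zero_of_natDegree_lt (hp.trans_lt hlt), mul_zero, mul_zero, sub_zero]

lemma polyIntegral_legendrePoly_sq (n : ℕ) :
    polyIntegral (legendrePoly n * legendrePoly n) = 2 / (2 * n + 1) := by
  have hboundary := polyIntegral_derivative (X * (legendrePoly n * legendrePoly n))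
  have hexpand : derivative (X * (legendrePoly n * legendrePoly n)) =
      C (2 * n + 1 : ℝ) * (legendrePoly n * legendrePoly n) +
      C 2 * (legendrePoly n * (X * derivative (legendrePoly n) - C (n : ℝ) * legendrePoly n)) := by
    simp only [derivative_mul, derivative_X, map_add, map_mul, map_one, map_ofNat]
    ring
  rw [hexpand, map_add, polyIntegral_C_mul, polyIntegral_C_mul,
    polyIntegral_legendrePoly_mul_eq_zero
      (degree_X_mul_derivative_sub_lt (natDegree_legendrePoly_le n)),
    eval_mul, eval_mul, eval_mul, eval_mul, legendrePoly_eval_of_sq_eq_one (one_pow 2),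
    legendrePoly_eval_of_sq_eq_one neg_one_sq] at hboundary
  have hsign : (-1 : ℝ) ^ n * (-1) ^ n = 1 := by rw [← mul_pow, neg_mul_neg, one_mul, one_pow]
  norm_num [hsign] at hboundary
  rw [eq_div_iff (by positivity), mul_comm, hboundary]

lemma derivLegendreInner_self {m n : ℕ} (hmn : m ≤ n) :
    derivLegendreInner m n n = 2 / (2 * n + 1) * ((n + m).factorial / (n - m).factorial) := by
  induction m with
  | zero =>
    have : (n.factorial : ℝ) ≠ 0 := by positivity
    simpa [derivLegendreInner, this] using polyIntegral_legendrePoly_sq n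
  | succ m ih =>
    obtain ⟨j, rfl⟩ : ∃ j, n = m + 1 + j := Nat.exists_eq_add_of_le hmn
    rw [derivLegendreInner_succ, ih (by omega), show m + 1 + j - m = j + 1 by omega,
      Nat.add_sub_cancel_left, ← add_assoc, Nat.factorial_succ, Nat.factorial_succ (m + 1 + j + m)]
    push_cast
    field_simp
    ring

/-- The energy whose monotonicity on either side of `0` bounds the Legendre polynomial. -/
def legendreEnergy (n : ℕ) : ℝ[X] :=
  C ((n : ℝ) * (n + 1)) * legendrePoly n ^ 2 + (1 - X ^ 2) * derivative (legendrePoly n) ^ 2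

lemma derivative_legendreEnergy (n : ℕ) :
    derivative (legendreEnergy n) = X * (C 2 * derivative (legendrePoly n) ^ 2) := by
  have hode := legendrePoly_ode n 0
  simp only [Function.iterate_succ_apply', Function.iterate_zero, id] at hode
  simp [legendreEnergy, derivative_mul, derivative_pow, map_ofNat C 2] at hode ⊢
  linear_combination (-2 * derivative (legendrePoly n)) * hode

lemma legendreEnergy_eval_of_sq_eq_one {a : ℝ} (ha : a ^ 2 = 1) (n : ℕ) :
    (legendreEnergy n).eval a = n * (n + 1) := by
  simp only [legendreEnergy, eval_add, eval_mul, eval_C, eval_pow, eval_sub, eval_one, eval_X,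
    legendrePoly_eval_of_sq_eq_one ha, pow_right_comm a n 2, ha]
  ring

lemma eval_le_of_derivative_eq_X_mul {p r : ℝ[X]} {M s : ℝ} (hp : derivative p = X * r)
    (hr : ∀ x, 0 ≤ r.eval x) (hM : p.eval 1 ≤ M) (hM' : p.eval (-1) ≤ M)
    (hs : s ∈ Set.Icc (-1 : ℝ) 1) : p.eval s ≤ M := by
  have hderiv (x : ℝ) : deriv (fun x => p.eval x) x = x * r.eval x := by
    rw [Polynomial.deriv, hp, eval_mul, eval_X]
  rcases le_total 0 s with h | h
  · have hmono : MonotoneOn (fun x => p.eval x) (Set.Icc 0 1) := by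
      refine monotoneOn_of_deriv_nonneg (convex_Icc _ _) p.continuous.continuousOn
        p.differentiable.differentiableOn fun x hx => ?_
      rw [interior_Icc] at hx
      exact hderiv x ▸ mul_nonneg hx.1.le (hr x)
    exact (hmono ⟨h, hs.2⟩ ⟨zero_le_one, le_rfl⟩ hs.2).trans hM
  · have hanti : AntitoneOn (fun x => p.eval x) (Set.Icc (-1) 0) := by
      refine antitoneOn_of_deriv_nonpos (convex_Icc _ _) p.continuous.continuousOn
        p.differentiable.differentiableOn fun x hx => ?_
      rw [interior_Icc] at hx
      exact hderiv x ▸ mul_nonpos_of_nonpos_of_nonneg hx.2.le (hr x)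
    exact (hanti ⟨le_rfl, by norm_num⟩ ⟨hs.1, h⟩ hs.1).trans hM'

lemma abs_legendrePoly_eval_le_one (n : ℕ) {s : ℝ} (hs : s ∈ Set.Icc (-1 : ℝ) 1) :
    |(legendrePoly n).eval s| ≤ 1 := by
  rcases Nat.eq_zero_or_pos n with rfl | hn
  · simp [legendrePoly]
  have henergy : (legendreEnergy n).eval s ≤ n * (n + 1) := by
    refine eval_le_of_derivative_eq_X_mul (derivative_legendreEnergy n) (fun x => ?_)
      (legendreEnergy_eval_of_sq_eq_one (one_pow 2) n).le
      (legendreEnergy_eval_of_sq_eq_one neg_one_sq n).le hs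
    simp only [eval_mul, eval_C, eval_pow]
    positivity
  simp only [legendreEnergy, eval_add, eval_mul, eval_C, eval_pow, eval_sub, eval_one,
    eval_X] at henergy
  have hweight : 0 ≤ 1 - s ^ 2 := by nlinarith [hs.1, hs.2]
  refine (sq_le_one_iff_abs_le_one _).1
    (le_of_mul_le_mul_left ?_ (by positivity : 0 < (n : ℝ) * (n + 1)))
  nlinarith [mul_nonneg hweight (sq_nonneg ((derivative (legendrePoly n)).eval s))]

lemma abs_polyIntegral_mul_legendrePoly_le {Q : ℝ[X]}
    (hQ : ∀ s ∈ Set.Icc (-1 : ℝ) 1, 0 ≤ Q.eval s) (k : ℕ) :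
    |polyIntegral (Q * legendrePoly k)| ≤ polyIntegral Q := by
  rw [polyIntegral_apply, polyIntegral_apply, ← norm_eq_abs]
  refine intervalIntegral.norm_integral_le_of_norm_le (by norm_num)
    (.of_forall fun x hx => ?_) (Q.continuous.intervalIntegrable _ _)
  have hx' := Set.Ioc_subset_Icc_self hx
  rw [eval_mul, norm_eq_abs, abs_mul, abs_of_nonneg (hQ x hx')]
  exact mul_le_of_le_one_right (hQ x hx') (abs_legendrePoly_eval_le_one k hx')

lemma exists_legendre_expansion {N : ℕ} {Q : ℝ[X]} (hQ : Q.natDegree ≤ N) :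
    Q = ∑ k ∈ Finset.range (N + 1),
      C ((2 * k + 1) / 2 * polyIntegral (Q * legendrePoly k)) * legendrePoly k := by
  obtain ⟨a, ha⟩ := exists_sum_of_sequence legendreSequence
    (degree_lt_iff_coeff_zero Q (N + 1) |>.2 fun k hk =>
      coeff_eq_zero_of_natDegree_lt (by omega))
  have hcoeff (k : ℕ) (hk : k ∈ Finset.range (N + 1)) :
      (2 * k + 1) / 2 * polyIntegral (Q * legendrePoly k) = a k := by
    have hsum : polyIntegral (Q * legendrePoly k) = a k * (2 / (2 * k + 1)) := by
      rw [ha, Finset.sum_mul, map_sum, Finset.sum_eq_single_of_mem k hk]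
      · rw [mul_assoc, polyIntegral_C_mul, ← polyIntegral_legendrePoly_sq]; rfl
      · intro j _ hj
        rw [mul_assoc, polyIntegral_C_mul]
        exact mul_eq_zero_of_right _ (polyIntegral_legendrePoly_mul_legendrePoly hj)
    rw [hsum]
    field_simp
  conv_lhs => rw [ha]
  exact Finset.sum_congr rfl fun k hk => by rw [hcoeff k hk]; rfl

lemma sum_range_odd_div_two (N : ℕ) :
    ∑ k ∈ Finset.range N, (2 * (k : ℝ) + 1) / 2 = (N : ℝ) ^ 2 / 2 := by
  induction N with
  | zero => simp
  | succ N ih => rw [Finset.sum_range_succ, ih]; push_cast; ring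

lemma eval_le_polyIntegral_of_nonneg {N : ℕ} {Q : ℝ[X]} (hQ : Q.natDegree ≤ N)
    (hpos : ∀ s ∈ Set.Icc (-1 : ℝ) 1, 0 ≤ Q.eval s) {s : ℝ} (hs : s ∈ Set.Icc (-1 : ℝ) 1) :
    Q.eval s ≤ ((N : ℝ) + 1) ^ 2 / 2 * polyIntegral Q := by
  calc Q.eval s = ∑ k ∈ Finset.range (N + 1),
          (2 * (k : ℝ) + 1) / 2 *
            (polyIntegral (Q * legendrePoly k) * (legendrePoly k).eval s) := by
        conv_lhs => rw [exists_legendre_expansion hQ]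
        simp only [eval_finsetSum, eval_mul, eval_C, mul_assoc]
    _ ≤ ∑ k ∈ Finset.range (N + 1), (2 * (k : ℝ) + 1) / 2 * polyIntegral Q := by
        gcongr with k
        refine (le_abs_self _).trans ?_
        rw [abs_mul]
        exact (mul_le_of_le_one_right (abs_nonneg _) (abs_legendrePoly_eval_le_one k hs)).trans
          (abs_polyIntegral_mul_legendrePoly_le hpos k)
    _ = ((N : ℝ) + 1) ^ 2 / 2 * polyIntegral Q := by
        rw [← Finset.sum_mul, sum_range_odd_div_two, Nat.cast_succ]

/-- The polynomial factor of the associated Legendre function, normalized in `L²`. -/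
def assocLegendrePoly (n m : ℕ) : ℝ[X] :=
  C √((2 * (n : ℝ) + 1) / 2 * ((n - m).factorial / (n + m).factorial)) *
    derivative^[m] (legendrePoly n)

lemma assocLegendrePoly_eq_zero {n m : ℕ} (h : n < m) : assocLegendrePoly n m = 0 := by
  rw [assocLegendrePoly, iterate_derivative_legendrePoly_eq_zero h, mul_zero]

lemma degree_assocLegendrePoly (m j : ℕ) : (assocLegendrePoly (m + j) m).degree = j := by
  rw [assocLegendrePoly, degree_C_mul (by positivity), degree_iterate_derivative_legendrePoly]

/-- The associated Legendre polynomials of a fixed order `m`, as a polynomial sequence. -/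
def assocLegendreSequence (m : ℕ) : Polynomial.Sequence ℝ where
  elems' j := assocLegendrePoly (m + j) m
  degree_eq' j := degree_assocLegendrePoly m j

lemma polyIntegral_assocLegendrePoly_mul {n m : ℕ} (hmn : m ≤ n) (k : ℕ) :
    polyIntegral ((1 - X ^ 2) ^ m * assocLegendrePoly n m * assocLegendrePoly k m) =
      if n = k then 1 else 0 := by
  have hscale (c d : ℝ) : polyIntegral ((1 - X ^ 2) ^ m * (C c * derivative^[m] (legendrePoly n)) *
      (C d * derivative^[m] (legendrePoly k))) = c * d * derivLegendreInner m n k := by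
    rw [derivLegendreInner, ← polyIntegral_C_mul, C_mul]
    congr 1
    ring
  rw [assocLegendrePoly, assocLegendrePoly, hscale]
  split_ifs with hnk
  · subst hnk
    rw [derivLegendreInner_self hmn, mul_self_sqrt (by positivity)]
    field_simp
  · rw [derivLegendreInner_eq_zero m hnk, mul_zero]

lemma natDegree_weight_mul_assocLegendrePoly_sq_le {n m : ℕ} (hmn : m ≤ n) :
    ((1 - X ^ 2) ^ m * assocLegendrePoly n m * assocLegendrePoly n m).natDegree ≤ 2 * n := by
  obtain ⟨j, rfl⟩ := Nat.exists_eq_add_of_le hmn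
  have hassoc := natDegree_eq_of_degree_eq_some (degree_assocLegendrePoly m j)
  have hweight : ((1 - (X:ℝ[X]) ^ 2) ^ m).natDegree ≤ m * 2 :=
    natDegree_pow_le_of_le m ((natDegree_sub_le _ _).trans (by simp))
  have := (natDegree_mul_le (p := (1 - (X:ℝ[X]) ^ 2) ^ m * assocLegendrePoly (m + j) m)
    (q := assocLegendrePoly (m + j) m))
  have := (natDegree_mul_le (p := (1 - (X:ℝ[X]) ^ 2) ^ m) (q := assocLegendrePoly (m + j) m))
  omega

lemma weight_mul_assocLegendrePoly_eval_sq_le (n m : ℕ) {s : ℝ} (hs : s ∈ Set.Icc (-1 : ℝ) 1) :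
    (1 - s ^ 2) ^ m * (assocLegendrePoly n m).eval s ^ 2 ≤ (2 * n + 1) ^ 2 := by
  rcases lt_or_ge n m with h | h
  · rw [assocLegendrePoly_eq_zero h]
    simp only [eval_zero, ne_eq, OfNat.ofNat_ne_zero, not_false_eq_true, zero_pow, mul_zero]
    positivity
  have hnonneg : ∀ x ∈ Set.Icc (-1 : ℝ) 1,
      0 ≤ ((1 - X ^ 2) ^ m * assocLegendrePoly n m * assocLegendrePoly n m).eval x := by
    intro x hx
    have hweight : 0 ≤ 1 - x ^ 2 := by nlinarith [hx.1, hx.2]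
    simp only [eval_mul, eval_pow, eval_sub, eval_one, eval_X, mul_assoc]
    exact mul_nonneg (pow_nonneg hweight m) (mul_self_nonneg _)
  have hbound := eval_le_polyIntegral_of_nonneg
    (natDegree_weight_mul_assocLegendrePoly_sq_le h) hnonneg hs
  rw [polyIntegral_assocLegendrePoly_mul h, if_pos rfl] at hbound
  simp only [eval_mul, eval_pow, eval_sub, eval_one, eval_X] at hbound
  push_cast at hbound
  nlinarith [sq_nonneg (2 * (n : ℝ) + 1)]

/-- The `L²(sin θ dθ)`-normalized associated Legendre function of degree `n` and order `m`
as a function of the colatitude. -/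
def assocLegendreFun (n m : ℕ) (θ : ℝ) : ℝ := sin θ ^ m * (assocLegendrePoly n m).eval (cos θ)

@[fun_prop]
lemma continuous_assocLegendreFun (n m : ℕ) : Continuous (assocLegendreFun n m) :=
  (continuous_sin.pow m).mul ((assocLegendrePoly n m).continuous.comp continuous_cos)

lemma abs_assocLegendreFun_le (n m : ℕ) (θ : ℝ) : |assocLegendreFun n m θ| ≤ 2 * n + 1 := by
  have h := weight_mul_assocLegendrePoly_eval_sq_le n m
    (s := cos θ) ⟨neg_one_le_cos _, cos_le_one _⟩
  rw [← sin_sq, ← pow_mul, mul_comm 2 m, pow_mul, ← mul_pow] at h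
  exact abs_le_of_sq_le_sq h (by positivity)

lemma integral_comp_cos_mul_sin {g : ℝ → ℝ} (hg : Continuous g) :
    ∫ θ in (0 : ℝ)..π, g (cos θ) * sin θ = ∫ x in (-1 : ℝ)..1, g x := by
  have h := intervalIntegral.integral_comp_mul_deriv (a := 0) (b := π) (f := cos)
    (f' := fun x => -sin x) (g := g) (fun x _ => hasDerivAt_cos x) (by fun_prop) hg
  simp only [Function.comp, cos_zero, cos_pi, mul_neg, intervalIntegral.integral_neg] at h
  rw [intervalIntegral.integral_symm (-1) 1] at h
  linarith

lemma integral_assocLegendreFun_mul {n m : ℕ} (hmn : m ≤ n) (k : ℕ) :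
    ∫ θ in (0 : ℝ)..π, assocLegendreFun n m θ * assocLegendreFun k m θ * sin θ =
      if n = k then 1 else 0 := by
  rw [← polyIntegral_assocLegendrePoly_mul hmn k, polyIntegral_apply,
    ← integral_comp_cos_mul_sin (Polynomial.continuous _)]
  refine intervalIntegral.integral_congr fun θ _ => ?_
  simp only [assocLegendreFun, eval_mul, eval_pow, eval_sub, eval_one, eval_X, ← sin_sq]
  ring

end LegendreIntegrals

/-! ### Expansion in associated Legendre functions -/

section LegendreSeries
open Real Polynomial

lemma eq_zero_of_integral_mul_self_nonpos {K : ℝ → ℝ} {a b : ℝ} (hab : a < b)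
    (hK : ContinuousOn K (Set.Icc a b)) (h : ∫ θ in a..b, K θ * K θ ≤ 0) :
    ∀ θ ∈ Set.Icc a b, K θ = 0 := by
  intro θ hθ
  by_contra hne
  exact h.not_gt (intervalIntegral.integral_pos hab (hK.mul hK)
    (fun x _ => mul_self_nonneg (K x)) ⟨θ, hθ, mul_self_pos.2 hne⟩)

lemma integral_mul_self_le_of_integral_mul_cos_eq_zero {K : ℝ → ℝ} (hK : Continuous K)
    (h : ∀ p : ℝ[X], ∫ θ in (0 : ℝ)..π, K θ * p.eval (cos θ) = 0) {ε : ℝ} (hε : 0 < ε) :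
    ∫ θ in (0 : ℝ)..π, K θ * K θ ≤ ε * ∫ θ in (0 : ℝ)..π, |K θ| := by
  obtain ⟨p, hp⟩ := exists_polynomial_near_of_continuousOn (-1) 1 (fun x => K (arccos x))
    (hK.comp continuous_arccos).continuousOn ε hε
  have hpc : Continuous fun θ => p.eval (cos θ) := p.continuous.comp continuous_cos
  calc ∫ θ in (0 : ℝ)..π, K θ * K θ = ∫ θ in (0 : ℝ)..π, K θ * (K θ - p.eval (cos θ)) := by
        simp only [mul_sub]
        rw [intervalIntegral.integral_sub, h p, sub_zero]
        exacts [(hK.mul hK).intervalIntegrable _ _, (hK.mul hpc).intervalIntegrable _ _]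
    _ ≤ ∫ θ in (0 : ℝ)..π, ε * |K θ| := by
        refine intervalIntegral.integral_mono_on pi_pos.le
          ((hK.mul (hK.sub hpc)).intervalIntegrable _ _)
          ((continuous_const.mul hK.abs).intervalIntegrable _ _) fun θ hθ => ?_
        have hnear := hp (cos θ) ⟨neg_one_le_cos _, cos_le_one _⟩
        rw [arccos_cos hθ.1 hθ.2, abs_sub_comm] at hnear
        rw [mul_comm ε]
        refine (le_abs_self _).trans ?_
        rw [abs_mul]
        exact mul_le_mul_of_nonneg_left hnear.le (abs_nonneg _)
    _ = ε * ∫ θ in (0 : ℝ)..π, |K θ| := intervalIntegral.integral_const_mul _ _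

lemma eq_zero_of_integral_mul_cos_eq_zero {K : ℝ → ℝ} (hK : Continuous K)
    (h : ∀ p : ℝ[X], ∫ θ in (0 : ℝ)..π, K θ * p.eval (cos θ) = 0) :
    ∀ θ ∈ Set.Icc 0 π, K θ = 0 := by
  refine eq_zero_of_integral_mul_self_nonpos pi_pos hK.continuousOn
    (le_of_forall_pos_le_add fun δ hδ => ?_)
  have hM : 0 ≤ ∫ θ in (0 : ℝ)..π, |K θ| :=
    intervalIntegral.integral_nonneg pi_pos.le fun _ _ => abs_nonneg _
  set M := ∫ θ in (0 : ℝ)..π, |K θ|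
  calc ∫ θ in (0 : ℝ)..π, K θ * K θ ≤ δ / (M + 1) * M :=
        integral_mul_self_le_of_integral_mul_cos_eq_zero hK h (by positivity)
    _ ≤ 0 + δ := by
        rw [zero_add, div_mul_eq_mul_div, div_le_iff₀ (by positivity)]
        nlinarith

/-- The coefficient of `H / sin ^ (m + 1)` along the `n`-th associated Legendre function of
order `m` in `L²(sin θ dθ)`; the powers of `sin θ` cancel. -/
def legendreCoeff (m n : ℕ) (H : ℝ → ℝ) : ℝ :=
  ∫ θ in (0 : ℝ)..π, H θ * (assocLegendrePoly n m).eval (cos θ)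

/-- The series of associated Legendre functions of order `m` with coefficients `c`. -/
def legendreSeries (m : ℕ) (c : ℕ → ℝ) (θ : ℝ) : ℝ := ∑' n, c n * assocLegendreFun n m θ

lemma continuous_assocLegendrePoly_eval_cos (n m : ℕ) :
    Continuous fun θ => (assocLegendrePoly n m).eval (cos θ) :=
  (assocLegendrePoly n m).continuous.comp continuous_cos

lemma norm_mul_assocLegendreFun_le (m : ℕ) (c : ℕ → ℝ) (n : ℕ) (θ : ℝ) :
    ‖c n * assocLegendreFun n m θ‖ ≤ |c n| * (2 * n + 1) := by
  rw [norm_eq_abs, abs_mul]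
  exact mul_le_mul_of_nonneg_left (abs_assocLegendreFun_le n m θ) (abs_nonneg _)

section
variable {m : ℕ} {c : ℕ → ℝ} (hc : Summable fun n : ℕ => |c n| * (2 * n + 1))
include hc

lemma continuous_legendreSeries : Continuous (legendreSeries m c) :=
  continuous_tsum (fun n => continuous_const.mul (continuous_assocLegendreFun n m)) hc
    (norm_mul_assocLegendreFun_le m c)

lemma abs_legendreSeries_le (θ : ℝ) :
    |legendreSeries m c θ| ≤ ∑' n : ℕ, |c n| * (2 * n + 1) :=
  tsum_of_norm_bounded hc.hasSum fun n => norm_mul_assocLegendreFun_le m c n θ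

lemma hasSum_integral_legendreSeries_mul {g : ℝ → ℝ} (hg : Continuous g) {M : ℝ}
    (hM : ∀ θ, |g θ| ≤ M) :
    HasSum (fun n => ∫ θ in (0 : ℝ)..π, c n * assocLegendreFun n m θ * g θ)
      (∫ θ in (0 : ℝ)..π, legendreSeries m c θ * g θ) := by
  refine intervalIntegral.hasSum_integral_of_dominated_convergence
    (fun n _ => |c n| * (2 * n + 1) * M) (fun n => ?_) (fun n => .of_forall fun θ _ => ?_)
    (.of_forall fun θ _ => hc.mul_right _) (by simp) (.of_forall fun θ _ => ?_)
  · exact ((continuous_const.mul (continuous_assocLegendreFun n m)).mul hg).aestronglyMeasurable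
  · rw [norm_mul]
    exact mul_le_mul (norm_mul_assocLegendreFun_le m c n θ) (hM θ) (norm_nonneg _) (by positivity)
  · exact (Summable.of_norm_bounded hc
      fun n => norm_mul_assocLegendreFun_le m c n θ).hasSum.mul_right _

lemma integral_legendreSeries_mul_assocLegendreFun {k : ℕ} (hmk : m ≤ k) :
    ∫ θ in (0 : ℝ)..π, legendreSeries m c θ * (assocLegendreFun k m θ * sin θ) = c k := by
  have hbound (θ : ℝ) : |assocLegendreFun k m θ * sin θ| ≤ 2 * k + 1 := by
    rw [abs_mul]
    exact (mul_le_of_le_one_right (abs_nonneg _) (abs_sin_le_one _)).trans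
      (abs_assocLegendreFun_le k m θ)
  have hseries := hasSum_integral_legendreSeries_mul (m := m)
    (g := fun θ => assocLegendreFun k m θ * sin θ) hc
    ((continuous_assocLegendreFun k m).mul continuous_sin) hbound
  have hterm (n : ℕ) : ∫ θ in (0 : ℝ)..π, c n * assocLegendreFun n m θ *
      (assocLegendreFun k m θ * sin θ) = if n = k then c k else 0 := by
    calc _ = c n * ∫ θ in (0 : ℝ)..π, assocLegendreFun k m θ * assocLegendreFun n m θ * sin θ := by
          rw [← intervalIntegral.integral_const_mul]
          congr 1 with θ
          ring
      _ = if n = k then c k else 0 := by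
          rw [integral_assocLegendreFun_mul hmk, mul_ite, mul_one, mul_zero]
          rcases eq_or_ne n k with rfl | hnk
          · rfl
          · rw [if_neg hnk, if_neg hnk.symm]
  simp only [hterm] at hseries
  exact hseries.unique (hasSum_ite_eq k (c k))

end

lemma eq_zero_of_legendreCoeff_eq_zero {m : ℕ} {K : ℝ → ℝ} (hK : Continuous K)
    (h : ∀ n, m ≤ n → legendreCoeff m n K = 0) : ∀ θ ∈ Set.Icc 0 π, K θ = 0 := by
  refine eq_zero_of_integral_mul_cos_eq_zero hK fun p => ?_
  obtain ⟨a, ha⟩ := exists_sum_of_sequence (assocLegendreSequence m)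
    (degree_lt_iff_coeff_zero p (p.natDegree + 1) |>.2 fun k hk =>
      coeff_eq_zero_of_natDegree_lt (by omega))
  rw [ha]
  simp only [eval_finsetSum, eval_mul, eval_C, Finset.mul_sum, mul_left_comm (K _)]
  rw [intervalIntegral.integral_finsetSum]
  · refine Finset.sum_eq_zero fun j _ => ?_
    rw [intervalIntegral.integral_const_mul]
    exact mul_eq_zero_of_right _ (h (m + j) (Nat.le_add_right m j))
  · exact fun j _ => (continuous_const.mul
      (hK.mul (continuous_assocLegendrePoly_eval_cos (m + j) m))).intervalIntegrable _ _

section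
variable {m : ℕ} {H : ℝ → ℝ} (hH : Continuous H)
  (hs : Summable fun n : ℕ => |legendreCoeff m n H| * (2 * n + 1))
include hH hs

lemma eq_legendreSeries_mul_sin_pow : ∀ θ ∈ Set.Icc 0 π,
    H θ = legendreSeries m (fun n => legendreCoeff m n H) θ * sin θ ^ (m + 1) := by
  set v := legendreSeries m fun n => legendreCoeff m n H
  have hv : Continuous v := continuous_legendreSeries hs
  have hcoeff (n : ℕ) (hmn : m ≤ n) :
      legendreCoeff m n (fun θ => H θ - v θ * sin θ ^ (m + 1)) = 0 := by
    have hsplit (θ : ℝ) : (H θ - v θ * sin θ ^ (m + 1)) * (assocLegendrePoly n m).eval (cos θ) =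
        H θ * (assocLegendrePoly n m).eval (cos θ) - v θ * (assocLegendreFun n m θ * sin θ) := by
      rw [assocLegendreFun]
      ring
    simp_rw [legendreCoeff, hsplit]
    rw [intervalIntegral.integral_sub, integral_legendreSeries_mul_assocLegendreFun hs hmn]
    · exact sub_self _
    · exact (hH.mul (continuous_assocLegendrePoly_eval_cos n m)).intervalIntegrable _ _
    · exact (hv.mul ((continuous_assocLegendreFun n m).mul continuous_sin)).intervalIntegrable _ _
  exact fun θ hθ => sub_eq_zero.1 (eq_zero_of_legendreCoeff_eq_zero
    (hH.sub (hv.mul (continuous_sin.pow _))) hcoeff θ hθ)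

lemma abs_le_tsum_legendreCoeff_mul_sin_pow : ∀ θ ∈ Set.Icc 0 π,
    |H θ| ≤ (∑' n : ℕ, |legendreCoeff m n H| * (2 * n + 1)) * sin θ ^ (m + 1) := by
  intro θ hθ
  have hsin := pow_nonneg (sin_nonneg_of_mem_Icc hθ) (m + 1)
  rw [eq_legendreSeries_mul_sin_pow hH hs θ hθ, abs_mul, abs_of_nonneg hsin]
  exact mul_le_mul_of_nonneg_right (abs_legendreSeries_le hs θ) hsin

end

end LegendreSeries

/-! ### Differential calculus in the coordinates `(θ, φ)` -/

section SphereCalculus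
open Real

variable {u v : SphereFun}

protected lemma SphSmooth.continuous (hu : SphSmooth u) : Continuous fun p : ℝ × ℝ => u p.1 p.2 :=
  ContDiff.continuous hu

lemma SphSmooth.continuous_phi (hu : SphSmooth u) (θ : ℝ) : Continuous (u θ) :=
  hu.continuous.comp (Continuous.prodMk_right θ)

lemma SphSmooth.intervalIntegrable (hu : SphSmooth u) (θ a b : ℝ) :
    IntervalIntegrable (u θ) volume a b :=
  (hu.continuous_phi θ).intervalIntegrable _ _

lemma SphSmooth.hasFDerivAt (hu : SphSmooth u) (p : ℝ × ℝ) :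
    HasFDerivAt (Function.uncurry u) (fderiv ℝ (Function.uncurry u) p) p :=
  (ContDiff.differentiable hu (by simp) p).hasFDerivAt

lemma SphSmooth.hasDerivAt_theta_fderiv (hu : SphSmooth u) (θ φ : ℝ) :
    HasDerivAt (fun t => u t φ) (fderiv ℝ (Function.uncurry u) (θ, φ) (1, 0)) θ :=
  (hu.hasFDerivAt (θ, φ)).comp_hasDerivAt (f := fun t => (t, φ)) θ
    ((hasDerivAt_id θ).prodMk (hasDerivAt_const θ φ))

lemma SphSmooth.hasDerivAt_phi_fderiv (hu : SphSmooth u) (θ φ : ℝ) :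
    HasDerivAt (u θ) (fderiv ℝ (Function.uncurry u) (θ, φ) (0, 1)) φ :=
  (hu.hasFDerivAt (θ, φ)).comp_hasDerivAt (f := fun p => (θ, p)) φ
    ((hasDerivAt_const φ θ).prodMk (hasDerivAt_id φ))

lemma SphSmooth.hasDerivAt_theta (hu : SphSmooth u) (θ φ : ℝ) :
    HasDerivAt (fun t => u t φ) (dTheta u θ φ) θ :=
  (hu.hasDerivAt_theta_fderiv θ φ).differentiableAt.hasDerivAt

lemma SphSmooth.hasDerivAt_phi (hu : SphSmooth u) (θ φ : ℝ) :
    HasDerivAt (u θ) (dPhi u θ φ) φ :=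
  (hu.hasDerivAt_phi_fderiv θ φ).differentiableAt.hasDerivAt

lemma SphSmooth.dTheta_eq_fderiv (hu : SphSmooth u) :
    dTheta u = fun θ φ => fderiv ℝ (Function.uncurry u) (θ, φ) (1, 0) :=
  funext₂ fun θ φ => (hu.hasDerivAt_theta_fderiv θ φ).deriv

lemma SphSmooth.dPhi_eq_fderiv (hu : SphSmooth u) :
    dPhi u = fun θ φ => fderiv ℝ (Function.uncurry u) (θ, φ) (0, 1) :=
  funext₂ fun θ φ => (hu.hasDerivAt_phi_fderiv θ φ).deriv

lemma SphSmooth.contDiff_fderiv (hu : SphSmooth u) :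
    ContDiff ℝ (⊤ : ℕ∞) (fderiv ℝ (Function.uncurry u)) :=
  ContDiff.fderiv_right hu (by simp)

protected lemma SphSmooth.dTheta (hu : SphSmooth u) : SphSmooth (dTheta u) := by
  rw [hu.dTheta_eq_fderiv]
  exact hu.contDiff_fderiv.clm_apply contDiff_const

protected lemma SphSmooth.dPhi (hu : SphSmooth u) : SphSmooth (dPhi u) := by
  rw [hu.dPhi_eq_fderiv]
  exact hu.contDiff_fderiv.clm_apply contDiff_const

lemma SphSmooth.dTheta_dPhi (hu : SphSmooth u) (θ φ : ℝ) :
    dTheta (dPhi u) θ φ = dPhi (dTheta u) θ φ := by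
  have hdiff : DifferentiableAt ℝ (fderiv ℝ (Function.uncurry u)) (θ, φ) :=
    hu.contDiff_fderiv.differentiable (by simp) _
  have hsymm : IsSymmSndFDerivAt ℝ (Function.uncurry u) (θ, φ) :=
    (ContDiff.contDiffAt hu).isSymmSndFDerivAt (by
      rw [minSmoothness_of_isRCLikeNormedField]
      exact WithTop.coe_le_coe.2 (le_top : (2 : ℕ∞) ≤ ⊤))
  rw [congr_fun₂ hu.dPhi.dTheta_eq_fderiv θ φ, congr_fun₂ hu.dTheta.dPhi_eq_fderiv θ φ,
    hu.dTheta_eq_fderiv, hu.dPhi_eq_fderiv]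
  change fderiv ℝ (fun p => fderiv ℝ (Function.uncurry u) p (0, 1)) (θ, φ) (1, 0) =
    fderiv ℝ (fun p => fderiv ℝ (Function.uncurry u) p (1, 0)) (θ, φ) (0, 1)
  rw [fderiv_clm_apply hdiff (by fun_prop), fderiv_clm_apply hdiff (by fun_prop)]
  simpa using hsymm.eq (1, 0) (0, 1)

protected lemma SphSmooth.add (hu : SphSmooth u) (hv : SphSmooth v) :
    SphSmooth fun θ φ => u θ φ + v θ φ :=
  ContDiff.add hu hv

protected lemma SphSmooth.sub (hu : SphSmooth u) (hv : SphSmooth v) :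
    SphSmooth fun θ φ => u θ φ - v θ φ :=
  ContDiff.sub hu hv

protected lemma SphSmooth.mul (hu : SphSmooth u) (hv : SphSmooth v) :
    SphSmooth fun θ φ => u θ φ * v θ φ :=
  ContDiff.mul hu hv

lemma sphSmooth_of_theta {g : ℝ → ℝ} (hg : ContDiff ℝ (⊤ : ℕ∞) g) : SphSmooth fun θ _ => g θ :=
  hg.comp contDiff_fst

lemma sphSmooth_of_phi {g : ℝ → ℝ} (hg : ContDiff ℝ (⊤ : ℕ∞) g) : SphSmooth fun _ φ => g φ :=
  hg.comp contDiff_snd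

lemma SphSmooth.dTheta_mul (hu : SphSmooth u) (hv : SphSmooth v) :
    dTheta (fun θ φ => u θ φ * v θ φ) = fun θ φ => dTheta u θ φ * v θ φ + u θ φ * dTheta v θ φ :=
  funext₂ fun θ φ => ((hu.hasDerivAt_theta θ φ).mul (hv.hasDerivAt_theta θ φ)).deriv

lemma SphSmooth.dPhi_mul (hu : SphSmooth u) (hv : SphSmooth v) :
    dPhi (fun θ φ => u θ φ * v θ φ) = fun θ φ => dPhi u θ φ * v θ φ + u θ φ * dPhi v θ φ :=
  funext₂ fun θ φ => ((hu.hasDerivAt_phi θ φ).mul (hv.hasDerivAt_phi θ φ)).deriv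

protected lemma PeriodicPhi.dTheta (hu : PeriodicPhi u) : PeriodicPhi (dTheta u) := fun θ φ => by
  simp only [_root_.dTheta, hu _ φ]

protected lemma PeriodicPhi.dPhi (hu : PeriodicPhi u) : PeriodicPhi (dPhi u) := fun θ φ => by
  simp only [_root_.dPhi, ← deriv_comp_add_const, hu θ]

/-- The integral of `u` over the parallel at colatitude `θ`, against `dφ`. -/
def longitudeIntegral (u : SphereFun) (θ : ℝ) : ℝ := ∫ φ in (0 : ℝ)..(2 * π), u θ φ

lemma longitudeIntegral_congr {θ : ℝ} (h : ∀ φ, u θ φ = v θ φ) :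
    longitudeIntegral u θ = longitudeIntegral v θ := by
  simp only [longitudeIntegral, h]

lemma longitudeIntegral_add (hu : SphSmooth u) (hv : SphSmooth v) (θ : ℝ) :
    longitudeIntegral (fun θ φ => u θ φ + v θ φ) θ =
      longitudeIntegral u θ + longitudeIntegral v θ :=
  intervalIntegral.integral_add (hu.intervalIntegrable _ _ _) (hv.intervalIntegrable _ _ _)

lemma longitudeIntegral_sub (hu : SphSmooth u) (hv : SphSmooth v) (θ : ℝ) :
    longitudeIntegral (fun θ φ => u θ φ - v θ φ) θ =
      longitudeIntegral u θ - longitudeIntegral v θ :=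
  intervalIntegral.integral_sub (hu.intervalIntegrable _ _ _) (hv.intervalIntegrable _ _ _)

lemma longitudeIntegral_theta_mul (g : ℝ → ℝ) (u : SphereFun) (θ : ℝ) :
    longitudeIntegral (fun θ φ => g θ * u θ φ) θ = g θ * longitudeIntegral u θ :=
  intervalIntegral.integral_const_mul _ _

lemma abs_longitudeIntegral_le {θ C : ℝ} (h : ∀ φ ∈ Set.Icc 0 (2 * π), |u θ φ| ≤ C) :
    |longitudeIntegral u θ| ≤ 2 * π * C := by
  have hnorm := intervalIntegral.norm_integral_le_of_norm_le_const (a := 0) (b := 2 * π)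
    (f := u θ) (C := C) fun φ hφ =>
      h φ (Set.Ioc_subset_Icc_self (by rwa [Set.uIoc_of_le (by positivity)] at hφ))
  rwa [sub_zero, abs_of_pos two_pi_pos, mul_comm C] at hnorm

lemma abs_longitudeIntegral_le_of_abs_le (hv : SphSmooth v) {θ : ℝ}
    (h : ∀ φ, |u θ φ| ≤ v θ φ) : |longitudeIntegral u θ| ≤ longitudeIntegral v θ :=
  intervalIntegral.norm_integral_le_of_norm_le (f := u θ) (g := v θ) two_pi_pos.le
    (Filter.Eventually.of_forall fun φ _ => h φ) (hv.intervalIntegrable _ _ _)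

lemma SphSmooth.continuous_longitudeIntegral (hu : SphSmooth u) :
    Continuous (longitudeIntegral u) :=
  intervalIntegral.continuous_parametric_intervalIntegral_of_continuous' hu.continuous 0 (2 * π)

lemma SphSmooth.hasDerivAt_longitudeIntegral (hu : SphSmooth u) (θ : ℝ) :
    HasDerivAt (longitudeIntegral u) (longitudeIntegral (dTheta u) θ) θ := by
  obtain ⟨M, hM⟩ := ((isCompact_Icc (a := θ - 1) (b := θ + 1)).prod
    (isCompact_Icc (a := 0) (b := 2 * π))).exists_bound_of_continuousOn
      hu.dTheta.continuous.continuousOn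
  refine (intervalIntegral.hasDerivAt_integral_of_dominated_loc_of_deriv_le
    (F := u) (F' := _root_.dTheta u) (bound := fun _ => M)
    (s := Set.Icc (θ - 1) (θ + 1)) (Icc_mem_nhds (by linarith) (by linarith))
    (Filter.Eventually.of_forall fun t => (hu.continuous_phi t).aestronglyMeasurable)
    (hu.intervalIntegrable _ _ _) (hu.dTheta.continuous_phi θ).aestronglyMeasurable
    (Filter.Eventually.of_forall fun φ hφ t ht => ?_) intervalIntegrable_const
    (Filter.Eventually.of_forall fun φ _ t _ => hu.hasDerivAt_theta t φ)).2
  rw [Set.uIoc_of_le (by positivity)] at hφ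
  exact hM (t, φ) ⟨ht, Set.Ioc_subset_Icc_self hφ⟩

lemma SphSmooth.longitudeIntegral_dPhi (hu : SphSmooth u) (pu : PeriodicPhi u) (θ : ℝ) :
    longitudeIntegral (dPhi u) θ = 0 := by
  rw [longitudeIntegral, intervalIntegral.integral_eq_sub_of_hasDerivAt
    (fun φ _ => hu.hasDerivAt_phi θ φ) (hu.dPhi.intervalIntegrable _ _ _), sub_eq_zero]
  simpa using pu θ 0

lemma longitudeIntegral_mul_dPhi (hu : SphSmooth u) (hv : SphSmooth v) (pu : PeriodicPhi u)
    (pv : PeriodicPhi v) (θ : ℝ) :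
    longitudeIntegral (fun θ φ => u θ φ * dPhi v θ φ) θ =
      -longitudeIntegral (fun θ φ => dPhi u θ φ * v θ φ) θ := by
  have hzero := (hu.mul hv).longitudeIntegral_dPhi (fun θ φ => by simp only [pu θ φ, pv θ φ]) θ
  rw [hu.dPhi_mul hv, longitudeIntegral_add (hu.dPhi.mul hv) (hu.mul hv.dPhi)] at hzero
  exact eq_neg_of_add_eq_zero_right hzero

lemma le_two_mul_sin {θ : ℝ} (h0 : 0 ≤ θ) (h1 : θ ≤ π / 2) : θ ≤ 2 * sin θ := by
  have hjordan := mul_le_sin h0 h1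
  have hhalf : (1 : ℝ) / 2 ≤ 2 / π := by
    rw [div_le_div_iff₀ two_pos pi_pos]
    linarith [pi_le_four]
  nlinarith

lemma abs_le_two_mul_sin_of_deriv_bound {f f' : ℝ → ℝ} {M : ℝ} (hf : ∀ θ, HasDerivAt f (f' θ) θ)
    (hM : ∀ θ ∈ Set.Icc 0 π, |f' θ| ≤ M) (h0 : f 0 = 0) (hπ : f π = 0) :
    ∀ θ ∈ Set.Icc 0 π, |f θ| ≤ 2 * M * sin θ := by
  have hlip : ∀ x ∈ Set.Icc 0 π, ∀ y ∈ Set.Icc 0 π, |f y - f x| ≤ M * |y - x| := fun x hx y hy =>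
    (convex_Icc 0 π).norm_image_sub_le_of_norm_hasDerivWithin_le
      (fun t _ => (hf t).hasDerivWithinAt) hM hx hy
  have hM0 : 0 ≤ M := (abs_nonneg _).trans (hM 0 ⟨le_rfl, pi_pos.le⟩)
  intro θ hθ
  rcases le_total θ (π / 2) with hle | hle
  · have hnear := hlip 0 ⟨le_rfl, pi_pos.le⟩ θ hθ
    rw [h0, sub_zero, sub_zero, abs_of_nonneg hθ.1] at hnear
    nlinarith [le_two_mul_sin hθ.1 hle]
  · have hnear := hlip π ⟨pi_pos.le, le_rfl⟩ θ hθ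
    rw [hπ, sub_zero, abs_sub_comm θ, abs_of_nonneg (sub_nonneg.2 hθ.2)] at hnear
    have hsin := le_two_mul_sin (sub_nonneg.2 hθ.2) (by linarith)
    rw [sin_pi_sub] at hsin
    nlinarith

lemma SphSmooth.exists_abs_le_mul_sin (hu : SphSmooth u) (h0 : ∀ φ, u 0 φ = 0)
    (hπ : ∀ φ, u π φ = 0) :
    ∃ C, ∀ θ ∈ Set.Icc 0 π, ∀ φ ∈ Set.Icc 0 (2 * π), |u θ φ| ≤ C * sin θ := by
  obtain ⟨M, hM⟩ := ((isCompact_Icc (a := 0) (b := π)).prod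
    (isCompact_Icc (a := 0) (b := 2 * π))).exists_bound_of_continuousOn
      hu.dTheta.continuous.continuousOn
  exact ⟨2 * M, fun θ hθ φ hφ => abs_le_two_mul_sin_of_deriv_bound
    (fun t => hu.hasDerivAt_theta t φ) (fun t ht => hM (t, φ) ⟨ht, hφ⟩) (h0 φ) (hπ φ) θ hθ⟩

lemma intervalIntegrable_of_continuousOn_Ioo_of_bounded {g : ℝ → ℝ} {a b C : ℝ} (hab : a ≤ b)
    (hg : ContinuousOn g (Set.Ioo a b)) (hC : ∀ x ∈ Set.Ioo a b, |g x| ≤ C) :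
    IntervalIntegrable g volume a b := by
  rw [intervalIntegrable_iff_integrableOn_Ioo_of_le hab]
  exact IntegrableOn.of_bound (by simp) (hg.aestronglyMeasurable measurableSet_Ioo) C
    ((ae_restrict_iff' measurableSet_Ioo).2 (Filter.Eventually.of_forall hC))

end SphereCalculus

/-! ### Fourier modes in the longitude -/

section FourierModes
open Real

/-- The unnormalised `n`-th cosine coefficient of `h` over a period. -/
def cosMode (h : ℝ → ℝ) (n : ℤ) : ℝ := ∫ x in (0 : ℝ)..(2 * π), h x * cos (n * x)

/-- The unnormalised `n`-th sine coefficient of `h` over a period. -/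
def sinMode (h : ℝ → ℝ) (n : ℤ) : ℝ := ∫ x in (0 : ℝ)..(2 * π), h x * sin (n * x)

lemma cosMode_neg (h : ℝ → ℝ) (n : ℤ) : cosMode h (-n) = cosMode h n := by simp [cosMode]

lemma sinMode_neg (h : ℝ → ℝ) (n : ℤ) : sinMode h (-n) = -sinMode h n := by simp [sinMode]

lemma cosMode_zero (h : ℝ → ℝ) : cosMode h 0 = ∫ x in (0 : ℝ)..(2 * π), h x := by simp [cosMode]

lemma sinMode_zero (h : ℝ → ℝ) : sinMode h 0 = 0 := by simp [sinMode]

lemma integral_exp_mul_eq {h : ℝ → ℝ} (hc : Continuous h) (n : ℤ) :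
    ∫ x in (0 : ℝ)..(2 * π), Complex.exp (-(Complex.I * n * x)) * (h x : ℂ) =
      (cosMode h n : ℂ) - Complex.I * (sinMode h n : ℂ) := by
  have heuler : ∀ x : ℝ, Complex.exp (-(Complex.I * n * x)) * (h x : ℂ) =
      ((h x * cos (n * x) : ℝ) : ℂ) - Complex.I * ((h x * sin (n * x) : ℝ) : ℂ) := fun x => by
    rw [show -(Complex.I * n * x) = ((-(n * x) : ℝ) : ℂ) * Complex.I by push_cast; ring,
      Complex.exp_mul_I, ← Complex.ofReal_cos, ← Complex.ofReal_sin, cos_neg, sin_neg]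
    push_cast
    ring
  simp_rw [heuler]
  rw [intervalIntegral.integral_sub, intervalIntegral.integral_const_mul,
    intervalIntegral.integral_ofReal, intervalIntegral.integral_ofReal]
  · rfl
  all_goals exact Continuous.intervalIntegrable (by fun_prop) _ _

-- The period is a variable because `fourierCoeffOn` works on `AddCircle (2 * π - 0)`.
lemma fourier_neg_coe_eq {T : ℝ} (hT : T = 2 * π) (n : ℤ) (x : ℝ) :
    fourier (-n) (x : AddCircle T) = Complex.exp (-(Complex.I * n * x)) := by
  subst hT
  rw [fourier_coe_apply]
  congr 1
  have hpi : (π : ℂ) ≠ 0 := by exact_mod_cast pi_ne_zero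
  push_cast
  field_simp

lemma norm_sq_fourierCoeffOn {h : ℝ → ℝ} (hc : Continuous h) (n : ℤ) :
    ‖fourierCoeffOn two_pi_pos (fun x => (h x : ℂ)) n‖ ^ 2 =
      (1 / (2 * π)) ^ 2 * (cosMode h n ^ 2 + sinMode h n ^ 2) := by
  rw [fourierCoeffOn_eq_integral]
  simp only [fourier_neg_coe_eq (sub_zero (2 * π)), smul_eq_mul]
  rw [sub_zero, integral_exp_mul_eq hc, norm_smul, mul_pow, ← Complex.normSq_eq_norm_sq,
    Complex.normSq_apply]
  simp [abs_of_pos pi_pos]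
  ring

lemma hasSum_sq_cosMode_add_sq_sinMode {h : ℝ → ℝ} (hc : Continuous h) :
    HasSum (fun n : ℤ => cosMode h n ^ 2 + sinMode h n ^ 2)
      (2 * π * ∫ x in (0 : ℝ)..(2 * π), h x ^ 2) := by
  have hcc : Continuous fun x => (h x : ℂ) := by fun_prop
  have hL : MemLp (fun x => (h x : ℂ)) 2 (volume.restrict (Set.Ioc 0 (2 * π))) := by
    obtain ⟨M, hM⟩ := (isCompact_Icc (a := 0) (b := 2 * π)).exists_bound_of_continuousOn
      hcc.continuousOn
    exact MemLp.of_bound hcc.aestronglyMeasurable M ((ae_restrict_iff' measurableSet_Ioc).2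
      (Filter.Eventually.of_forall fun x hx => hM x ⟨hx.1.le, hx.2⟩))
  have hsum := (hasSum_sq_fourierCoeffOn two_pi_pos hL).mul_left ((2 * π) ^ 2)
  have hscale : ∀ x, (2 * π) ^ 2 * ((1 / (2 * π)) ^ 2 * x) = x := fun x => by field_simp
  have hscale' : ∀ x, (2 * π) ^ 2 * ((2 * π)⁻¹ * x) = 2 * π * x := fun x => by field_simp
  simp_rw [norm_sq_fourierCoeffOn hc, Complex.norm_real, norm_eq_abs, sq_abs, sub_zero,
    smul_eq_mul, hscale] at hsum
  rwa [hscale'] at hsum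

lemma abs_cosMode_add_abs_sinMode_le {h : ℝ → ℝ} {b : ℤ → ℝ} (hcos : ∀ m : ℕ, |cosMode h m| ≤ b m)
    (hsin : ∀ m : ℕ, 0 < m → |sinMode h m| ≤ b (-m)) (n : ℤ) :
    |cosMode h n| + |sinMode h n| ≤ b n + b (-n) := by
  obtain ⟨k, rfl | rfl⟩ := n.eq_nat_or_neg <;> rcases k.eq_zero_or_pos with rfl | hk
  · have h0 := hcos 0
    have hb0 := (abs_nonneg _).trans h0
    simp only [Nat.cast_zero, sinMode_zero, abs_zero, neg_zero] at h0 hb0 ⊢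
    linarith
  · linarith [hcos k, hsin k hk]
  · have h0 := hcos 0
    have hb0 := (abs_nonneg _).trans h0
    simp only [Nat.cast_zero, sinMode_zero, abs_zero, neg_zero] at h0 hb0 ⊢
    linarith
  · rw [cosMode_neg, sinMode_neg, abs_neg, neg_neg]
    linarith [hcos k, hsin k hk]

lemma norm_le_tsum_of_norm_fourierCoeff_le {T : ℝ} [Fact (0 < T)] (f : C(AddCircle T, ℂ))
    {b : ℤ → ℝ} (hb : Summable b) (hf : ∀ n, ‖fourierCoeff f n‖ ≤ b n) (x : AddCircle T) :
    ‖f x‖ ≤ ∑' n, b n := by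
  have hsum := has_pointwise_sum_fourier_series_of_summable (.of_norm_bounded hb hf) x
  rw [← hsum.tsum_eq]
  refine tsum_of_norm_bounded hb.hasSum fun n => ?_
  rw [norm_smul, show ‖fourier n x‖ = 1 from Circle.norm_coe _, mul_one]
  exact hf n

lemma norm_le_tsum_abs_modes {h : ℝ → ℝ} (hc : Continuous h) (hp : Function.Periodic h (2 * π))
    {b : ℤ → ℝ} (hb : Summable b) (hle : ∀ n, |cosMode h n| + |sinMode h n| ≤ b n) (x : ℝ) :
    |h x| ≤ 1 / (2 * π) * ∑' n, b n := by
  have hF : Fact (0 < 2 * π) := ⟨two_pi_pos⟩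
  have hper : Function.Periodic (fun x => (h x : ℂ)) (2 * π) := fun x => by simp [hp x]
  let f : C(AddCircle (2 * π), ℂ) :=
    ⟨hper.lift, (by fun_prop : Continuous fun x => (h x : ℂ)).quotient_liftOn' _⟩
  have hfx : ∀ x : ℝ, f (x : AddCircle (2 * π)) = (h x : ℂ) := fun x => hper.lift_coe x
  have hcoeff : ∀ n : ℤ, ‖fourierCoeff f n‖ ≤ 1 / (2 * π) * b n := fun n => by
    rw [fourierCoeff_eq_intervalIntegral f n 0]
    simp only [zero_add, fourier_neg_coe_eq rfl, smul_eq_mul, hfx]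
    rw [integral_exp_mul_eq hc, norm_smul, norm_of_nonneg (by positivity)]
    gcongr
    exact (norm_sub_le _ _).trans (by simpa using hle n)
  have hbound := norm_le_tsum_of_norm_fourierCoeff_le f (hb.mul_left _) hcoeff x
  rwa [hfx, Complex.norm_real, tsum_mul_left] at hbound

lemma abs_le_tsum_of_abs_modes_le {h : ℝ → ℝ} (hc : Continuous h)
    (hp : Function.Periodic h (2 * π)) {b : ℤ → ℝ} (hb : Summable b)
    (hcos : ∀ m : ℕ, |cosMode h m| ≤ b m) (hsin : ∀ m : ℕ, 0 < m → |sinMode h m| ≤ b (-m))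
    (x : ℝ) : |h x| ≤ ∑' m, b m := by
  have hneg : Summable fun n => b (-n) := (Equiv.neg ℤ).summable_iff.2 hb
  have hbound := norm_le_tsum_abs_modes hc hp (hb.add hneg)
    (abs_cosMode_add_abs_sinMode_le hcos hsin) x
  rw [hb.tsum_add hneg, show ∑' n, b (-n) = ∑' n, b n from (Equiv.neg ℤ).tsum_eq b, ← two_mul,
    ← mul_assoc, show 1 / (2 * π) * 2 = 1 / π by field_simp] at hbound
  have hnonneg : 0 ≤ ∑' n, b n :=
    nonneg_of_mul_nonneg_right ((abs_nonneg _).trans hbound) (by positivity)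
  refine hbound.trans (mul_le_of_le_one_left hnonneg ?_)
  rw [div_le_one pi_pos]
  linarith [pi_gt_three]

section Derivative
variable {h h' : ℝ → ℝ}

lemma cosMode_deriv (hd : ∀ x, HasDerivAt h (h' x) x) (hc' : Continuous h')
    (hp : h (2 * π) = h 0) (n : ℤ) : cosMode h' n = n * sinMode h n := by
  have hderiv : ∀ x : ℝ, HasDerivAt (fun x : ℝ => cos (n * x)) (-(n * sin (n * x))) x := fun x =>
    (((hasDerivAt_id x).const_mul (n : ℝ)).cos).congr_deriv (by simp [mul_comm])
  have hparts := intervalIntegral.integral_mul_deriv_eq_deriv_mul (fun x _ => hderiv x)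
    (fun x _ => hd x) (Continuous.intervalIntegrable (by fun_prop) 0 (2 * π))
    (hc'.intervalIntegrable _ _)
  rw [hp, cos_int_mul_two_pi, mul_zero, cos_zero, sub_self, zero_sub] at hparts
  simp only [cosMode, sinMode, mul_comm (h' _), hparts, ← intervalIntegral.integral_const_mul,
    ← intervalIntegral.integral_neg]
  exact intervalIntegral.integral_congr fun x _ => by ring

lemma sinMode_deriv (hd : ∀ x, HasDerivAt h (h' x) x) (hc' : Continuous h') (n : ℤ) :
    sinMode h' n = -(n * cosMode h n) := by
  have hderiv : ∀ x : ℝ, HasDerivAt (fun x : ℝ => sin (n * x)) (n * cos (n * x)) x := fun x =>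
    (((hasDerivAt_id x).const_mul (n : ℝ)).sin).congr_deriv (by simp [mul_comm])
  have hparts := intervalIntegral.integral_mul_deriv_eq_deriv_mul (fun x _ => hderiv x)
    (fun x _ => hd x) (Continuous.intervalIntegrable (by fun_prop) 0 (2 * π))
    (hc'.intervalIntegrable _ _)
  have hsin : sin ((n : ℝ) * (2 * π)) = 0 := by
    rw [show (n : ℝ) * (2 * π) = ((2 * n : ℤ) : ℝ) * π by push_cast; ring, sin_int_mul_pi]
  rw [hsin, mul_zero, sin_zero, zero_mul, zero_mul, sub_self, zero_sub] at hparts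
  simp only [cosMode, sinMode, mul_comm (h' _), hparts, ← intervalIntegral.integral_const_mul]
  exact congr_arg _ (intervalIntegral.integral_congr fun x _ => by ring)

lemma sq_modes_deriv (hd : ∀ x, HasDerivAt h (h' x) x) (hc' : Continuous h')
    (hp : h (2 * π) = h 0) (n : ℤ) : cosMode h' n ^ 2 + sinMode h' n ^ 2 =
      (n : ℝ) ^ 2 * (cosMode h n ^ 2 + sinMode h n ^ 2) := by
  rw [cosMode_deriv hd hc' hp, sinMode_deriv hd hc']
  ring

lemma integral_sq_le_integral_deriv_sq (hd : ∀ x, HasDerivAt h (h' x) x) (hc' : Continuous h')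
    (hp : h (2 * π) = h 0) (h0 : ∫ x in (0 : ℝ)..(2 * π), h x = 0) :
    ∫ x in (0 : ℝ)..(2 * π), h x ^ 2 ≤ ∫ x in (0 : ℝ)..(2 * π), h' x ^ 2 := by
  have hc : Continuous h := continuous_iff_continuousAt.2 fun x => (hd x).continuousAt
  refine le_of_mul_le_mul_left (hasSum_le (fun n => ?_) (hasSum_sq_cosMode_add_sq_sinMode hc)
    (hasSum_sq_cosMode_add_sq_sinMode hc')) two_pi_pos
  rw [sq_modes_deriv hd hc' hp]
  rcases eq_or_ne n 0 with rfl | hn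
  · simp [cosMode_zero, sinMode_zero, h0]
  · exact le_mul_of_one_le_left (by positivity)
      (by exact_mod_cast Int.one_le_abs hn |> one_le_pow₀ (n := 2) |>.trans_eq (sq_abs n))

lemma four_mul_integral_sq_sub_le_integral_deriv_sq (hd : ∀ x, HasDerivAt h (h' x) x)
    (hc' : Continuous h') (hp : h (2 * π) = h 0) (h0 : ∫ x in (0 : ℝ)..(2 * π), h x = 0) :
    4 * (∫ x in (0 : ℝ)..(2 * π), h x ^ 2) - 3 / π * (cosMode h 1 ^ 2 + sinMode h 1 ^ 2) ≤
      ∫ x in (0 : ℝ)..(2 * π), h' x ^ 2 := by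
  have hc : Continuous h := continuous_iff_continuousAt.2 fun x => (hd x).continuousAt
  set y := cosMode h 1 ^ 2 + sinMode h 1 ^ 2 with hy
  have hle := hasSum_le (fun n => ?_)
    (((hasSum_sq_cosMode_add_sq_sinMode hc).mul_left 4).sub
      ((hasSum_ite_eq (1 : ℤ) (3 * y)).add (hasSum_ite_eq (-1 : ℤ) (3 * y))))
    (hasSum_sq_cosMode_add_sq_sinMode hc')
  · refine le_of_mul_le_mul_left (le_of_eq_of_le ?_ hle) two_pi_pos
    have hpi := pi_ne_zero
    field_simp
    ring
  · rw [sq_modes_deriv hd hc' hp]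
    rcases eq_or_ne n 0 with rfl | hn0
    · simp [cosMode_zero, sinMode_zero, h0]
    rcases eq_or_ne n 1 with rfl | hn1
    · norm_num [← hy]
      linarith
    rcases eq_or_ne n (-1) with rfl | hn2
    · norm_num [cosMode_neg, sinMode_neg, ← hy]
      linarith
    · have hsq : (4 : ℝ) ≤ (n : ℝ) ^ 2 := by
        have : (4 : ℤ) ≤ n ^ 2 := by
          rcases (by omega : n ≤ -2 ∨ 2 ≤ n) with h | h <;> nlinarith
        exact_mod_cast this
      rw [if_neg hn1, if_neg hn2, add_zero, sub_zero]
      gcongr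

lemma eq_zero_of_modes_deriv_eq_zero (hd : ∀ x, HasDerivAt h (h' x) x) (hc' : Continuous h')
    (hp : Function.Periodic h (2 * π)) (h0 : ∫ x in (0 : ℝ)..(2 * π), h x = 0)
    (hcos : ∀ m : ℕ, 0 < m → cosMode h' m = 0) (hsin : ∀ m : ℕ, 0 < m → sinMode h' m = 0) (x : ℝ) :
    h x = 0 := by
  have hc : Continuous h := continuous_iff_continuousAt.2 fun x => (hd x).continuousAt
  have hper : h (2 * π) = h 0 := by simpa using hp 0
  have hcos' : ∀ m : ℕ, cosMode h m = 0 := fun m => by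
    rcases m.eq_zero_or_pos with rfl | hm
    · exact (cosMode_zero h).trans h0
    · simpa [sinMode_deriv hd hc', hm.ne'] using hsin m hm
  have hsin' : ∀ m : ℕ, 0 < m → sinMode h m = 0 := fun m hm => by
    simpa [cosMode_deriv hd hc' hper, hm.ne'] using hcos m hm
  simpa using abs_le_tsum_of_abs_modes_le hc hp (b := fun _ => 0) summable_zero
    (fun m => (abs_eq_zero.2 (hcos' m)).le) (fun m hm => (abs_eq_zero.2 (hsin' m hm)).le) x

end Derivative

lemma sq_modes_one_div_pi_le_integral_sq {h : ℝ → ℝ} (hc : Continuous h) :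
    (cosMode h 1 ^ 2 + sinMode h 1 ^ 2) / π ≤ ∫ x in (0 : ℝ)..(2 * π), h x ^ 2 := by
  have hle := sum_le_hasSum {1, -1} (fun n _ => by positivity) (hasSum_sq_cosMode_add_sq_sinMode hc)
  rw [Finset.sum_pair (by norm_num), cosMode_neg, sinMode_neg, neg_sq] at hle
  rw [div_le_iff₀ pi_pos]
  linarith

end FourierModes

/-! ### The vorticity perturbation in spherical harmonics -/

section Vorticity
open Real

/-- `sin² θ · ΔΨ`, which unlike `lapS Ψ` involves no division and so is smooth up to the poles. -/
def sinSqLaplacian (Ψ : SphereFun) : SphereFun := fun θ φ =>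
  sin θ * cos θ * dTheta Ψ θ φ + sin θ ^ 2 * dTheta (dTheta Ψ) θ φ + dPhi (dPhi Ψ) θ φ

/-- `sin² θ` times the vorticity perturbation `ΔΨ + 2 α Y₁⁰`, where `α Y₁⁰ = β cos θ`. -/
def sinSqPerturbation (β : ℝ) (Ψ : SphereFun) : SphereFun := fun θ φ =>
  sinSqLaplacian Ψ θ φ + 2 * β * cos θ * sin θ ^ 2

section
variable {Ψ : SphereFun}

lemma SphSmooth.sinSqLaplacian (hΨ : SphSmooth Ψ) : SphSmooth (sinSqLaplacian Ψ) :=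
  (((sphSmooth_of_theta (g := fun θ => sin θ * cos θ) (by fun_prop)).mul hΨ.dTheta).add
    ((sphSmooth_of_theta (g := fun θ => sin θ ^ 2) (by fun_prop)).mul hΨ.dTheta.dTheta)).add
      hΨ.dPhi.dPhi

lemma SphSmooth.sinSqPerturbation (hΨ : SphSmooth Ψ) (β : ℝ) : SphSmooth (sinSqPerturbation β Ψ) :=
  hΨ.sinSqLaplacian.add
    (sphSmooth_of_theta (g := fun θ => 2 * β * cos θ * sin θ ^ 2) (by fun_prop))

lemma PeriodicPhi.sinSqLaplacian (pΨ : PeriodicPhi Ψ) : PeriodicPhi (sinSqLaplacian Ψ) :=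
  fun θ φ => by
    simp only [_root_.sinSqLaplacian, pΨ.dTheta θ φ, pΨ.dTheta.dTheta θ φ, pΨ.dPhi.dPhi θ φ]

lemma PeriodicPhi.sinSqPerturbation (pΨ : PeriodicPhi Ψ) (β : ℝ) :
    PeriodicPhi (sinSqPerturbation β Ψ) := fun θ φ => by
  simp only [_root_.sinSqPerturbation, pΨ.sinSqLaplacian θ φ]

lemma lapS_eq_sinSqLaplacian_div (hΨ : SphSmooth Ψ) {θ : ℝ} (hθ : θ ∈ Set.Ioo 0 π) (φ : ℝ) :
    lapS Ψ θ φ = sinSqLaplacian Ψ θ φ / sin θ ^ 2 := by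
  have hsin : 0 < sin θ := sin_pos_of_mem_Ioo hθ
  have hderiv : deriv (fun t => sin t * dTheta Ψ t φ) θ =
      cos θ * dTheta Ψ θ φ + sin θ * dTheta (dTheta Ψ) θ φ :=
    ((hasDerivAt_sin θ).mul (hΨ.dTheta.hasDerivAt_theta θ φ)).deriv
  rw [lapS, hderiv, sinSqLaplacian]
  field_simp

lemma legP_one (s : ℝ) : legP 1 s = s := by
  simp [legP, iteratedDeriv_one]

lemma lapS_add_Ynm_eq_sinSqPerturbation_div (α : ℝ) (hΨ : SphSmooth Ψ) {θ : ℝ}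
    (hθ : θ ∈ Set.Ioo 0 π) (φ : ℝ) :
    lapS Ψ θ φ + 2 * α * Ynm 1 0 θ φ =
      sinSqPerturbation (α * √(3 / (4 * π))) Ψ θ φ / sin θ ^ 2 := by
  have hsin : 0 < sin θ := sin_pos_of_mem_Ioo hθ
  rw [lapS_eq_sinSqLaplacian_div hΨ hθ, sinSqPerturbation, Ynm, if_pos rfl, legP_one,
    show 2 * ((1 : ℕ):ℝ) + 1 = 3 by norm_num]
  field_simp

lemma longitudeIntegral_sinSqLaplacian_mul {v : SphereFun} (hΨ : SphSmooth Ψ) (hv : SphSmooth v)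
    (θ : ℝ) : longitudeIntegral (fun θ φ => sinSqLaplacian Ψ θ φ * v θ φ) θ =
      sin θ * cos θ * longitudeIntegral (fun θ φ => dTheta Ψ θ φ * v θ φ) θ +
        sin θ ^ 2 * longitudeIntegral (fun θ φ => dTheta (dTheta Ψ) θ φ * v θ φ) θ +
        longitudeIntegral (fun θ φ => dPhi (dPhi Ψ) θ φ * v θ φ) θ := by
  have hθ := (sphSmooth_of_theta (g := fun θ => sin θ * cos θ) (by fun_prop)).mul (hΨ.dTheta.mul hv)
  have hθθ := (sphSmooth_of_theta (g := fun θ => sin θ ^ 2) (by fun_prop)).mul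
    (hΨ.dTheta.dTheta.mul hv)
  rw [← longitudeIntegral_theta_mul (fun θ => sin θ * cos θ),
    ← longitudeIntegral_theta_mul (fun θ => sin θ ^ 2), ← longitudeIntegral_add hθ hθθ,
    ← longitudeIntegral_add (hθ.add hθθ) (hΨ.dPhi.dPhi.mul hv)]
  refine longitudeIntegral_congr fun φ => ?_
  simp only [sinSqLaplacian]
  ring

lemma longitudeIntegral_sinSqPerturbation_mul {v : SphereFun} (hΨ : SphSmooth Ψ)
    (hv : SphSmooth v) (β θ : ℝ) :
    longitudeIntegral (fun θ φ => sinSqPerturbation β Ψ θ φ * v θ φ) θ =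
      longitudeIntegral (fun θ φ => sinSqLaplacian Ψ θ φ * v θ φ) θ +
        2 * β * cos θ * sin θ ^ 2 * longitudeIntegral v θ := by
  rw [← longitudeIntegral_theta_mul (fun θ => 2 * β * cos θ * sin θ ^ 2), ← longitudeIntegral_add
    (hΨ.sinSqLaplacian.mul hv)
    ((sphSmooth_of_theta (g := fun θ => 2 * β * cos θ * sin θ ^ 2) (by fun_prop)).mul hv)]
  exact longitudeIntegral_congr fun φ => add_mul _ _ _

lemma SphSmooth.longitudeIntegral_sinSqLaplacian (hΨ : SphSmooth Ψ) (pΨ : PeriodicPhi Ψ) (θ : ℝ) :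
    longitudeIntegral (_root_.sinSqLaplacian Ψ) θ =
      sin θ * (cos θ * longitudeIntegral (_root_.dTheta Ψ) θ +
        sin θ * longitudeIntegral (_root_.dTheta (_root_.dTheta Ψ)) θ) := by
  have hmul := longitudeIntegral_sinSqLaplacian_mul hΨ
    (sphSmooth_of_phi (contDiff_const (c := (1 : ℝ)))) θ
  simp only [mul_one, hΨ.dPhi.longitudeIntegral_dPhi pΨ.dPhi θ] at hmul
  linear_combination hmul

end

/-! ### Spherical harmonics as products of modes -/

lemma rpow_one_sub_cos_sq {θ : ℝ} (hs : 0 ≤ sin θ) (m : ℕ) :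
    (1 - cos θ ^ 2) ^ ((m : ℝ) / 2) = sin θ ^ m := by
  rw [← sin_sq, ← rpow_natCast, ← rpow_mul hs, ← rpow_natCast]
  congr 1
  push_cast
  ring

lemma assocLegendrePoly_eval (n m : ℕ) (s : ℝ) : (assocLegendrePoly n m).eval s =
    √((2 * n + 1) / 2 * ((n - m).factorial / (n + m).factorial)) * iteratedDeriv m (legP n) s := by
  simp [iteratedDeriv_legP, assocLegendrePoly]

lemma sqrt_two_mul_sqrt_div_four_pi (x y : ℝ) :
    √2 * √(x / (4 * π) * y) = 1 / √π * √(x / 2 * y) := by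
  rw [← sqrt_mul zero_le_two, one_div, ← sqrt_inv, ← sqrt_mul (inv_nonneg.2 pi_pos.le)]
  congr 1
  field_simp
  ring

lemma Ynm_amplitude_eq (n m : ℕ) {θ : ℝ} (hs : 0 ≤ sin θ) :
    (-1 : ℝ) ^ m * √2 *
      √((2 * (n : ℝ) + 1) / (4 * π) * ((n - m).factorial / (n + m).factorial)) *
      assocLegP n m (cos θ) = 1 / √π * assocLegendreFun n m θ := by
  have hsign : (-1 : ℝ) ^ m * (-1) ^ m = 1 := by rw [← mul_pow, neg_one_mul, neg_neg, one_pow]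
  rw [mul_assoc ((-1 : ℝ) ^ m), sqrt_two_mul_sqrt_div_four_pi, assocLegP, rpow_one_sub_cos_sq hs,
    assocLegendreFun, assocLegendrePoly_eval]
  linear_combination (1 / √π *
    √((2 * (n : ℝ) + 1) / 2 * ((n - m).factorial / (n + m).factorial)) * sin θ ^ m *
      iteratedDeriv m (legP n) (cos θ)) * hsign

section
variable (n : ℕ) {m : ℕ} {θ : ℝ}

lemma Ynm_natCast (hm : 0 < m) (hs : 0 ≤ sin θ) (φ : ℝ) :
    Ynm n m θ φ = 1 / √π * assocLegendreFun n m θ * cos (m * φ) := by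
  rw [Ynm, if_neg (by omega), if_pos (by omega), Int.natAbs_natCast, Ynm_amplitude_eq n m hs]

lemma Ynm_neg_natCast (hm : 0 < m) (hs : 0 ≤ sin θ) (φ : ℝ) :
    Ynm n (-m) θ φ = 1 / √π * assocLegendreFun n m θ * sin (m * φ) := by
  rw [Ynm, if_neg (by omega), if_neg (by omega), Int.natAbs_neg, Int.natAbs_natCast,
    Ynm_amplitude_eq n m hs]

lemma Ynm_zero (θ φ : ℝ) : Ynm n 0 θ φ = 1 / √(2 * π) * assocLegendreFun n 0 θ := by
  rw [Ynm, if_pos rfl, assocLegendreFun, assocLegendrePoly_eval, iteratedDeriv_zero, pow_zero,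
    one_mul, Nat.sub_zero, Nat.add_zero, div_self (by positivity), mul_one, ← mul_assoc, one_div,
    ← sqrt_inv, ← sqrt_mul (by positivity)]
  congr 2
  field_simp
  ring

end

/-! ### The Sobolev norm bounds a weighted `ℓ¹` norm of the coefficients -/

/-- `(2 n + 1) |w_n^m|`, the `(n, m)` term of the series that bounds the sup norm of `w`. -/
def weightedCoeff (w : SphereFun) (p : ℕ × ℤ) : ℝ :=
  if |p.2| ≤ (p.1 : ℤ) then |coeff w p.1 p.2| * (2 * p.1 + 1) else 0

/-- A summable majorant of `(2 n + 1)² / μ_n⁴` over `|m| ≤ n`. -/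
def sobolevWeight (p : ℕ × ℤ) : ℝ := 4 * (1 / (1 + (p.1 : ℝ) ^ 2) * (1 / (1 + (p.2 : ℝ) ^ 2)))

/-- The sum of `sobolevWeight`; it controls the constant of the embedding `H⁴ ⊂ L^∞`. -/
def sobolevConstant : ℝ := ∑' p, sobolevWeight p

lemma weightedCoeff_nonneg (w : SphereFun) (p : ℕ × ℤ) : 0 ≤ weightedCoeff w p := by
  unfold weightedCoeff
  split_ifs <;> positivity

lemma sobolevWeight_nonneg (p : ℕ × ℤ) : 0 ≤ sobolevWeight p := by
  unfold sobolevWeight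
  positivity

lemma sobolevConstant_nonneg : 0 ≤ sobolevConstant := tsum_nonneg sobolevWeight_nonneg

lemma summable_one_div_one_add_int_sq : Summable fun n : ℤ => 1 / (1 + (n : ℝ) ^ 2) := by
  refine (summable_one_div_int_pow.2 one_lt_two).of_norm_bounded_eventually ?_
  filter_upwards [Filter.eventually_cofinite_ne (0 : ℤ)] with n hn
  have : (n : ℝ) ≠ 0 := by exact_mod_cast hn
  rw [norm_of_nonneg (by positivity)]
  gcongr
  linarith

lemma summable_sobolevWeight : Summable sobolevWeight := by
  have hnat : Summable fun n : ℕ => 1 / (1 + (n : ℝ) ^ 2) :=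
    (summable_one_div_one_add_int_sq.comp_injective Nat.cast_injective).congr fun n => by simp
  exact (hnat.mul_of_nonneg summable_one_div_one_add_int_sq (fun _ => by positivity)
    fun _ => by positivity).mul_left 4

lemma sq_div_muSp_sq_le_sobolevWeight {n : ℕ} {m : ℤ} (hm : |m| ≤ n) :
    ((2 * n + 1) / muSp n ^ 2) ^ 2 ≤ sobolevWeight (n, m) := by
  set μ := muSp n
  have hμn : μ = n * (n + 1) + 1 := rfl
  have : (0 : ℝ) ≤ n := n.cast_nonneg
  have hμ1 : 1 ≤ μ := by nlinarith
  have hmn : (m : ℝ) ^ 2 ≤ n ^ 2 := by exact_mod_cast sq_le_sq' (by grind) (abs_le.1 hm).2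
  have hweight : sobolevWeight (n, m) = 4 / ((1 + (n : ℝ) ^ 2) * (1 + (m : ℝ) ^ 2)) := by
    rw [sobolevWeight]
    field_simp
  rw [hweight, div_pow, div_le_div_iff₀ (by positivity) (by positivity)]
  calc (2 * (n : ℝ) + 1) ^ 2 * ((1 + (n : ℝ) ^ 2) * (1 + (m : ℝ) ^ 2))
      ≤ 4 * μ * (μ * μ) := by gcongr <;> nlinarith
    _ ≤ 4 * (μ ^ 2) ^ 2 := by nlinarith [pow_pos (zero_lt_one.trans_le hμ1) 3]

/-- The `(n, m)` term of `sobNormSq 4 w`, as a real number. -/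
def sobolevTerm (w : SphereFun) (p : ℕ × ℤ) : ℝ :=
  if |p.2| ≤ (p.1 : ℤ) then muSp p.1 ^ 4 * coeff w p.1 p.2 ^ 2 else 0

lemma sum_sobolevTerm_le {w : SphereFun} {ε : ℝ} (h : sobNormSq 4 w ≤ ENNReal.ofReal (ε ^ 2))
    (s : Finset (ℕ × ℤ)) : ∑ p ∈ s, sobolevTerm w p ≤ ε ^ 2 := by
  have hnonneg : ∀ p, 0 ≤ sobolevTerm w p := fun p => by
    unfold sobolevTerm
    split_ifs <;> positivity
  rw [← ENNReal.ofReal_le_ofReal_iff (sq_nonneg ε),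
    ENNReal.ofReal_sum_of_nonneg fun p _ => hnonneg p]
  refine (ENNReal.sum_le_tsum s).trans (le_of_eq_of_le (tsum_congr fun p => ?_) h)
  unfold sobolevTerm
  split_ifs
  · rfl
  · exact ENNReal.ofReal_zero

lemma weightedCoeff_le {w : SphereFun} {ε : ℝ} (hε : 0 < ε) (p : ℕ × ℤ) :
    weightedCoeff w p ≤ 1 / (2 * ε) * sobolevTerm w p + ε / 2 * sobolevWeight p := by
  unfold weightedCoeff sobolevTerm
  split_ifs with hp
  · have hμ : 0 < muSp p.1 := by unfold muSp; positivity
    set c := coeff w p.1 p.2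
    set μ := muSp p.1
    have hweight := mul_le_mul_of_nonneg_left (sq_div_muSp_sq_le_sobolevWeight hp) (half_pos hε).le
    have hamgm : 0 ≤ 1 / (2 * ε) * (μ ^ 2 * |c| - ε * ((2 * p.1 + 1) / μ ^ 2)) ^ 2 := by positivity
    have hexpand : 1 / (2 * ε) * (μ ^ 2 * |c| - ε * ((2 * p.1 + 1) / μ ^ 2)) ^ 2 =
        1 / (2 * ε) * (μ ^ 4 * c ^ 2) + ε / 2 * ((2 * p.1 + 1) / μ ^ 2) ^ 2 -
          |c| * (2 * p.1 + 1) := by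
      rw [← sq_abs c]
      field_simp
      ring
    linarith
  · have := sobolevWeight_nonneg p
    positivity

lemma sum_weightedCoeff_le {w : SphereFun} {ε : ℝ} (hε : 0 < ε)
    (h : sobNormSq 4 w ≤ ENNReal.ofReal (ε ^ 2)) (s : Finset (ℕ × ℤ)) :
    ∑ p ∈ s, weightedCoeff w p ≤ (1 + sobolevConstant) * ε := by
  have hK := sobolevConstant_nonneg
  calc ∑ p ∈ s, weightedCoeff w p
      ≤ ∑ p ∈ s, (1 / (2 * ε) * sobolevTerm w p + ε / 2 * sobolevWeight p) :=
        Finset.sum_le_sum fun p _ => weightedCoeff_le hε p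
    _ = 1 / (2 * ε) * ∑ p ∈ s, sobolevTerm w p + ε / 2 * ∑ p ∈ s, sobolevWeight p := by
        rw [Finset.sum_add_distrib, Finset.mul_sum, Finset.mul_sum]
    _ ≤ 1 / (2 * ε) * ε ^ 2 + ε / 2 * sobolevConstant := by
        gcongr
        · exact sum_sobolevTerm_le h s
        · exact summable_sobolevWeight.sum_le_tsum s fun p _ => sobolevWeight_nonneg p
    _ = (1 + sobolevConstant) * ε / 2 := by field_simp
    _ ≤ (1 + sobolevConstant) * ε := half_le_self (by positivity)

lemma summable_weightedCoeff {w : SphereFun} {ε : ℝ} (hε : 0 < ε)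
    (h : sobNormSq 4 w ≤ ENNReal.ofReal (ε ^ 2)) : Summable (weightedCoeff w) :=
  summable_of_sum_le (weightedCoeff_nonneg w) (sum_weightedCoeff_le hε h)

lemma tsum_weightedCoeff_le {w : SphereFun} {ε : ℝ} (hε : 0 < ε)
    (h : sobNormSq 4 w ≤ ENNReal.ofReal (ε ^ 2)) :
    ∑' p, weightedCoeff w p ≤ (1 + sobolevConstant) * ε :=
  Real.tsum_le_of_sum_le (weightedCoeff_nonneg w) (sum_weightedCoeff_le hε h)

/-- The part of `∑ (2 n + 1) |w_n^m|` of a fixed order `m`. -/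
def orderSum (w : SphereFun) (m : ℤ) : ℝ := ∑' n : ℕ, weightedCoeff w (n, m)

lemma orderSum_nonneg (w : SphereFun) (m : ℤ) : 0 ≤ orderSum w m :=
  tsum_nonneg fun _ => weightedCoeff_nonneg w _

section
variable {w : SphereFun} (hw : Summable (weightedCoeff w))
include hw

lemma summable_weightedCoeff_order (m : ℤ) : Summable fun n : ℕ => weightedCoeff w (n, m) :=
  hw.prod_symm.prod_factor m

lemma summable_orderSum : Summable (orderSum w) := hw.prod_symm.prod

lemma tsum_orderSum : ∑' m, orderSum w m = ∑' p, weightedCoeff w p := by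
  rw [← (Equiv.prodComm ℤ ℕ).tsum_eq (weightedCoeff w)]
  exact hw.prod_symm.tsum_prod.symm

end

end Vorticity

/-! ### Smallness of the vorticity perturbation -/

section SupBound
open Real

lemma integrableOn_div_sin {F : SphereFun} {C : ℝ} (hF : Continuous fun p : ℝ × ℝ => F p.1 p.2)
    (hC : ∀ θ ∈ Set.Icc 0 π, ∀ φ ∈ Set.Icc 0 (2 * π), |F θ φ| ≤ C * sin θ) :
    IntegrableOn (Function.uncurry fun φ θ => F θ φ / sin θ)
      (Set.uIoc 0 (2 * π) ×ˢ Set.uIoc 0 π) := by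
  rw [Set.uIoc_of_le two_pi_pos.le, Set.uIoc_of_le pi_pos.le]
  refine IntegrableOn.of_bound (C := |C|) ?_ ?_ ?_
  · rw [Measure.volume_eq_prod, Measure.prod_prod]
    simp [ENNReal.mul_lt_top]
  · exact ((hF.comp continuous_swap).measurable.div
      (continuous_sin.comp continuous_snd).measurable).aestronglyMeasurable
  · refine ae_restrict_of_forall_mem (measurableSet_Ioc.prod measurableSet_Ioc) ?_
    rintro ⟨φ, θ⟩ ⟨hφ, hθ⟩
    have hθ' : θ ∈ Set.Icc 0 π := Set.Ioc_subset_Icc_self hθ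
    have hsin := sin_nonneg_of_mem_Icc hθ'
    simp only [Function.uncurry, norm_eq_abs]
    rw [abs_div, abs_of_nonneg hsin]
    exact div_le_of_le_mul₀ hsin (abs_nonneg C) ((hC θ hθ' φ (Set.Ioc_subset_Icc_self hφ)).trans
      (mul_le_mul_of_nonneg_right (le_abs_self C) hsin))

section
variable {w W : SphereFun} (hW : SphSmooth W)
  (hw : ∀ θ ∈ Set.Ioo 0 π, ∀ φ, w θ φ = W θ φ / sin θ ^ 2)
include hW hw

lemma legendreCoeff_eq_mul_coeff {n m : ℕ} {k : ℤ} {c : ℝ} (hc : c ≠ 0) {g : ℝ → ℝ}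
    (hg : ContDiff ℝ (⊤ : ℕ∞) g)
    (hY : ∀ θ, 0 ≤ sin θ → ∀ φ, Ynm n k θ φ = 1 / c * assocLegendreFun n m θ * g φ)
    (hpole : ∀ θ ∈ Set.Icc 0 π, sin θ = 0 → ∀ φ, sin θ ^ m * W θ φ = 0) {H : ℝ → ℝ}
    (hH : ∀ θ, sin θ ^ m * longitudeIntegral (fun θ φ => W θ φ * g φ) θ = sin θ * H θ) :
    legendreCoeff m n H = c * coeff w n k := by
  let F : SphereFun := fun θ φ =>
    (assocLegendrePoly n m).eval (cos θ) * (sin θ ^ m * (W θ φ * g φ))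
  have hP : ContDiff ℝ (⊤ : ℕ∞) fun θ => (assocLegendrePoly n m).eval (cos θ) := by
    simpa only [Polynomial.coe_aeval_eq_eval] using
      ((assocLegendrePoly n m).contDiff_aeval (𝕜 := ℝ) _).fun_comp contDiff_cos
  have hF : SphSmooth F :=
    (sphSmooth_of_theta hP).mul
      ((sphSmooth_of_theta (g := fun θ => sin θ ^ m) (by fun_prop)).mul
        (hW.mul (sphSmooth_of_phi hg)))
  have hFpole : ∀ θ ∈ Set.Icc 0 π, sin θ = 0 → ∀ φ, F θ φ = 0 := fun θ hθ hs φ => by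
    simp only [F]
    rw [← mul_assoc (sin θ ^ m), hpole θ hθ hs φ, zero_mul, mul_zero]
  obtain ⟨C, hC⟩ := hF.exists_abs_le_mul_sin (hFpole 0 (Set.left_mem_Icc.2 pi_pos.le) sin_zero)
    (hFpole π (Set.right_mem_Icc.2 pi_pos.le) sin_pi)
  have hintegrand : ∀ φ, ∫ θ in (0 : ℝ)..π, w θ φ * Ynm n k θ φ * sin θ =
      1 / c * ∫ θ in (0 : ℝ)..π, F θ φ / sin θ := fun φ => by
    rw [← intervalIntegral.integral_const_mul]
    refine intervalIntegral.integral_congr_Ioo_of_le pi_pos.le fun θ hθ => ?_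
    have hsin : 0 < sin θ := sin_pos_of_mem_Ioo hθ
    simp only [F, hw θ hθ, hY θ hsin.le, assocLegendreFun]
    field_simp
  rw [coeff, sInner]
  simp_rw [hintegrand]
  rw [intervalIntegral.integral_const_mul,
    intervalIntegral_intervalIntegral_swap (integrableOn_div_sin hF.continuous hC), ← mul_assoc,
    mul_one_div_cancel hc, one_mul]
  refine intervalIntegral.integral_congr_Ioo_of_le pi_pos.le fun θ hθ => ?_
  have hsin : sin θ ≠ 0 := (sin_pos_of_mem_Ioo hθ).ne'
  have hHθ : ∫ φ in (0 : ℝ)..(2 * π), F θ φ =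
      (assocLegendrePoly n m).eval (cos θ) * (sin θ * H θ) := by
    simp only [F, intervalIntegral.integral_const_mul, ← hH θ]
    rfl
  simp only [intervalIntegral.integral_div, hHθ]
  field_simp

variable (hsum : Summable (weightedCoeff w))
include hsum

lemma abs_le_orderSum_mul_sin_pow {m : ℕ} {k : ℤ} (hk : |k| = m) {c : ℝ} (hc : 0 < c)
    {g : ℝ → ℝ} (hg : ContDiff ℝ (⊤ : ℕ∞) g)
    (hY : ∀ n θ, 0 ≤ sin θ → ∀ φ, Ynm n k θ φ = 1 / c * assocLegendreFun n m θ * g φ)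
    (hpole : ∀ θ ∈ Set.Icc 0 π, sin θ = 0 → ∀ φ, sin θ ^ m * W θ φ = 0)
    {H : ℝ → ℝ} (hHc : Continuous H)
    (hH : ∀ θ, sin θ ^ m * longitudeIntegral (fun θ φ => W θ φ * g φ) θ = sin θ * H θ) :
    ∀ θ ∈ Set.Icc 0 π, |H θ| ≤ c * orderSum w k * sin θ ^ (m + 1) := by
  have hcoeff : (fun n : ℕ => |legendreCoeff m n H| * (2 * n + 1)) =
      fun n : ℕ => c * weightedCoeff w (n, k) := funext fun n => by
    rw [weightedCoeff, hk]
    split_ifs with hn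
    · rw [legendreCoeff_eq_mul_coeff hW hw hc.ne' hg (hY n) hpole hH, abs_mul, abs_of_pos hc,
        mul_assoc]
    · rw [legendreCoeff, assocLegendrePoly_eq_zero (by simpa using hn)]
      simp
  have hbound := abs_le_tsum_legendreCoeff_mul_sin_pow hHc
    (hcoeff ▸ (summable_weightedCoeff_order hsum k).mul_left c)
  rwa [hcoeff, tsum_mul_left] at hbound

lemma abs_longitudeIntegral_mul_le_orderSum {m : ℕ} (hm : 0 < m) {k : ℤ} (hk : |k| = m) {g : ℝ → ℝ}
    (hg : ContDiff ℝ (⊤ : ℕ∞) g)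
    (hY : ∀ n θ, 0 ≤ sin θ → ∀ φ, Ynm n k θ φ = 1 / √π * assocLegendreFun n m θ * g φ) :
    ∀ θ ∈ Set.Icc 0 π, |longitudeIntegral (fun θ φ => W θ φ * g φ) θ| ≤
      √π * orderSum w k * sin θ ^ 2 := by
  set D := longitudeIntegral fun θ φ => W θ φ * g φ
  have hD : Continuous D := (hW.mul (sphSmooth_of_phi hg)).continuous_longitudeIntegral
  obtain ⟨j, rfl⟩ : ∃ j, m = j + 1 := Nat.exists_eq_succ_of_ne_zero hm.ne'
  have hH := abs_le_orderSum_mul_sin_pow (H := fun θ => sin θ ^ j * D θ) hW hw hsum hk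
    (sqrt_pos.2 pi_pos) hg hY (fun θ _ hθ φ => by simp [hθ]) (by fun_prop) fun θ => by
      rw [pow_succ']
      ring
  have hIoo : ∀ θ ∈ Set.Ioo 0 π, |D θ| ≤ √π * orderSum w k * sin θ ^ 2 := fun θ hθ => by
    have hsin := pow_pos (sin_pos_of_mem_Ioo hθ) j
    have hle := hH θ (Set.Ioo_subset_Icc_self hθ)
    rw [abs_mul, abs_of_pos hsin] at hle
    refine le_of_mul_le_mul_left (hle.trans_eq ?_) hsin
    ring
  intro θ hθ
  rw [← closure_Ioo pi_pos.ne] at hθ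
  exact le_on_closure hIoo (by fun_prop) (by fun_prop) hθ

lemma abs_cosMode_le_orderSum {m : ℕ} (hm : 0 < m) {θ : ℝ} (hθ : θ ∈ Set.Icc 0 π) :
    |cosMode (W θ) m| ≤ √π * orderSum w m * sin θ ^ 2 := by
  simpa [cosMode, longitudeIntegral] using
    abs_longitudeIntegral_mul_le_orderSum hW hw hsum hm (k := m)
    (by simp) (g := fun φ => cos (m * φ)) (by fun_prop) (fun n _ => Ynm_natCast n hm) θ hθ

lemma abs_sinMode_le_orderSum {m : ℕ} (hm : 0 < m) {θ : ℝ} (hθ : θ ∈ Set.Icc 0 π) :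
    |sinMode (W θ) m| ≤ √π * orderSum w (-m) * sin θ ^ 2 := by
  simpa [sinMode, longitudeIntegral] using
    abs_longitudeIntegral_mul_le_orderSum hW hw hsum hm (k := -m)
    (by simp) (g := fun φ => sin (m * φ)) (by fun_prop) (fun n _ => Ynm_neg_natCast n hm) θ hθ

end

section
variable {Ψ w : SphereFun} {β : ℝ} (hΨ : SphSmooth Ψ) (pΨ : PeriodicPhi Ψ)
  (hw : ∀ θ ∈ Set.Ioo 0 π, ∀ φ, w θ φ = sinSqPerturbation β Ψ θ φ / sin θ ^ 2)
  (hsum : Summable (weightedCoeff w))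
include hΨ pΨ hw hsum

-- At a pole `sin² θ · ΔΨ` reduces to `∂_φ² Ψ`, whose modes vanish by the bounds above.
lemma dPhi_eq_zero_of_sin_eq_zero {θ : ℝ} (hθ : θ ∈ Set.Icc 0 π) (hsin : sin θ = 0) (φ : ℝ) :
    dPhi Ψ θ φ = 0 := by
  have hW := hΨ.sinSqPerturbation β
  have heq : dPhi (dPhi Ψ) θ = sinSqPerturbation β Ψ θ := funext fun φ => by
    simp [sinSqPerturbation, sinSqLaplacian, hsin]
  refine eq_zero_of_modes_deriv_eq_zero (hΨ.dPhi.hasDerivAt_phi θ) (hΨ.dPhi.dPhi.continuous_phi θ)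
    (pΨ.dPhi θ) (hΨ.longitudeIntegral_dPhi pΨ θ) (fun m hm => ?_) (fun m hm => ?_) φ
  · simpa [heq, hsin] using abs_cosMode_le_orderSum hW hw hsum hm hθ
  · simpa [heq, hsin] using abs_sinMode_le_orderSum hW hw hsum hm hθ

lemma sinSqPerturbation_eq_zero_of_sin_eq_zero {θ : ℝ} (hθ : θ ∈ Set.Icc 0 π) (hsin : sin θ = 0)
    (φ : ℝ) : sinSqPerturbation β Ψ θ φ = 0 := by
  have hφφ : dPhi (dPhi Ψ) θ φ = 0 := by
    rw [dPhi, funext (dPhi_eq_zero_of_sin_eq_zero hΨ pΨ hw hsum hθ hsin), deriv_const]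
  simp [sinSqPerturbation, sinSqLaplacian, hsin, hφφ]

end

lemma longitudeIntegral_sinSqPerturbation {Ψ : SphereFun} (hΨ : SphSmooth Ψ) (β θ : ℝ) :
    longitudeIntegral (sinSqPerturbation β Ψ) θ =
      longitudeIntegral (sinSqLaplacian Ψ) θ + 4 * π * β * cos θ * sin θ ^ 2 := by
  have hmul := longitudeIntegral_sinSqPerturbation_mul hΨ
    (sphSmooth_of_phi (contDiff_const (c := (1 : ℝ)))) β θ
  have hone : longitudeIntegral (fun _ _ => 1) θ = 2 * π := by simp [longitudeIntegral]
  simp only [mul_one, hone] at hmul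
  linear_combination hmul

section
variable {Ψ w : SphereFun} {β : ℝ} (hΨ : SphSmooth Ψ) (pΨ : PeriodicPhi Ψ)
  (hw : ∀ θ ∈ Set.Ioo 0 π, ∀ φ, w θ φ = sinSqPerturbation β Ψ θ φ / sin θ ^ 2)
  (hsum : Summable (weightedCoeff w))
include hΨ pΨ hw hsum

lemma abs_longitudeIntegral_sinSqPerturbation_le {θ : ℝ} (hθ : θ ∈ Set.Icc 0 π) :
    |longitudeIntegral (sinSqPerturbation β Ψ) θ| ≤ √(2 * π) * orderSum w 0 * sin θ ^ 2 := by
  set H : ℝ → ℝ := fun θ => cos θ * longitudeIntegral (dTheta Ψ) θ +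
    sin θ * longitudeIntegral (dTheta (dTheta Ψ)) θ + 4 * π * β * cos θ * sin θ with hH
  have hfactor : ∀ θ, longitudeIntegral (sinSqPerturbation β Ψ) θ = sin θ * H θ := fun θ => by
    rw [longitudeIntegral_sinSqPerturbation hΨ, hΨ.longitudeIntegral_sinSqLaplacian pΨ, hH]
    ring
  have hHc : Continuous H := by
    have hcont := hΨ.dTheta.continuous_longitudeIntegral
    have hcont' := hΨ.dTheta.dTheta.continuous_longitudeIntegral
    fun_prop
  have hle := abs_le_orderSum_mul_sin_pow (hΨ.sinSqPerturbation β) hw hsum (m := 0) (k := 0)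
    (by simp) (sqrt_pos.2 two_pi_pos) (g := fun _ => 1) contDiff_const
    (fun n θ _ φ => by rw [mul_one, Ynm_zero])
    (fun θ hθ hs φ => by
      rw [sinSqPerturbation_eq_zero_of_sin_eq_zero hΨ pΨ hw hsum hθ hs, mul_zero])
    hHc (fun θ => by simp only [pow_zero, one_mul, mul_one, ← hfactor]) θ hθ
  have hsin := sin_nonneg_of_mem_Icc hθ
  rw [hfactor, abs_mul, abs_of_nonneg hsin]
  exact (mul_le_mul_of_nonneg_left hle hsin).trans_eq (by ring)

lemma abs_sinSqPerturbation_le {θ : ℝ} (hθ : θ ∈ Set.Icc 0 π) (φ : ℝ) :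
    |sinSqPerturbation β Ψ θ φ| ≤ √(2 * π) * (∑' p, weightedCoeff w p) * sin θ ^ 2 := by
  have hW := hΨ.sinSqPerturbation β
  have hsqrt : √π ≤ √(2 * π) := sqrt_le_sqrt (by linarith [pi_pos])
  have henlarge : ∀ k : ℤ, √π * orderSum w k * sin θ ^ 2 ≤ √(2 * π) * sin θ ^ 2 * orderSum w k :=
    fun k => by
      have := orderSum_nonneg w k
      rw [mul_right_comm]
      gcongr
  have hsup := abs_le_tsum_of_abs_modes_le (hW.continuous_phi θ) (pΨ.sinSqPerturbation β θ)
    (b := fun k => √(2 * π) * sin θ ^ 2 * orderSum w k) ((summable_orderSum hsum).mul_left _)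
    (fun m => ?_) (fun m hm => (abs_sinMode_le_orderSum hW hw hsum hm hθ).trans (henlarge _)) φ
  · rwa [tsum_mul_left, tsum_orderSum hsum, mul_right_comm] at hsup
  · rcases m.eq_zero_or_pos with rfl | hm
    · rw [Nat.cast_zero, cosMode_zero, mul_right_comm]
      exact abs_longitudeIntegral_sinSqPerturbation_le hΨ pΨ hw hsum hθ
    · exact (abs_cosMode_le_orderSum hW hw hsum hm hθ).trans (henlarge _)

end
end SupBound

/-! ### The spectral gap on the first Fourier modes -/

section SpectralGap
open Real

/-- Dirichlet energy density, in the colatitude, of the function `A(θ) cos φ` on the sphere (up to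
the factor `π`); `A'` stands for the derivative of `A`. -/
def modeEnergy (A A' : ℝ → ℝ) (θ : ℝ) : ℝ := sin θ * A' θ ^ 2 + A θ ^ 2 / sin θ

/-- The part of `modeEnergy` that sees the distance of `A` from the rigid rotation mode `sin`: it is
unchanged when a multiple of `sin` is added to `A`. -/
def modeDefect (A A' : ℝ → ℝ) (θ : ℝ) : ℝ := (A' θ * sin θ - A θ * cos θ) ^ 2 / sin θ

variable {A A' : ℝ → ℝ}

lemma modeDefect_sub_const_mul_sin (a θ : ℝ) :
    modeDefect (fun x => A x - a * sin x) (fun x => A' x - a * cos x) θ = modeDefect A A' θ := by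
  unfold modeDefect
  ring

-- The difference of the two sides, times `sin x`, is
-- `(2 D + (1 - cos x) A) ^ 2 / 2 + 3 cos x (1 - cos x) A ^ 2` with `D = A' sin - A cos`.
lemma half_sq_mul_sin_le_flux_add_modeDefect {x : ℝ} (hs : 0 < sin x) (hc : 0 ≤ cos x) :
    1 / 2 * (A x ^ 2 * sin x) ≤
      (sin x * A x ^ 2 + (1 - cos x) * (2 * A x * A' x)) + 2 * modeDefect A A' x := by
  unfold modeDefect
  set D := A' x * sin x - A x * cos x with hD
  have hA' : A' x = (D + A x * cos x) / sin x := by rw [hD]; field_simp; ring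
  have hid : (sin x * A x ^ 2 + (1 - cos x) * (2 * A x * A' x)) + 2 * (D ^ 2 / sin x)
      - 1 / 2 * (A x ^ 2 * sin x) =
      (1 / 2 * (2 * D + (1 - cos x) * A x) ^ 2 + 3 * (cos x * (1 - cos x)) * A x ^ 2) / sin x := by
    rw [hA']
    field_simp
    linear_combination (A x ^ 2) * sin_sq_add_cos_sq x
  have h1 : 0 ≤ 1 - cos x := by linarith [cos_le_one x]
  have : 0 ≤ (1 / 2 * (2 * D + (1 - cos x) * A x) ^ 2
      + 3 * (cos x * (1 - cos x)) * A x ^ 2) / sin x := by positivity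
  linarith

lemma integral_sq_mul_sin_le_modeDefect_of_eq_zero (hd : ∀ x, HasDerivAt A (A' x) x)
    (hc' : Continuous A') (h0 : A (π / 2) = 0)
    (hN : IntervalIntegrable (modeDefect A A') volume 0 (π / 2)) :
    ∫ x in (0 : ℝ)..π / 2, A x ^ 2 * sin x ≤ 4 * ∫ x in (0 : ℝ)..π / 2, modeDefect A A' x := by
  have hc : Continuous A := continuous_iff_continuousAt.2 fun x => (hd x).continuousAt
  have hflux : ∀ x, HasDerivAt (fun x => (1 - cos x) * A x ^ 2)
      (sin x * A x ^ 2 + (1 - cos x) * (2 * A x * A' x)) x := fun x =>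
    (((hasDerivAt_cos x).const_sub 1).mul ((hd x).pow 2)).congr_deriv (by simp)
  have hfi : IntervalIntegrable (fun x => sin x * A x ^ 2 + (1 - cos x) * (2 * A x * A' x))
      volume 0 (π / 2) := Continuous.intervalIntegrable (by fun_prop) _ _
  have hflux0 := intervalIntegral.integral_eq_sub_of_hasDerivAt (fun x _ => hflux x) hfi
  have hmono : ∫ x in (0 : ℝ)..π / 2, 1 / 2 * (A x ^ 2 * sin x) ≤ ∫ x in (0 : ℝ)..π / 2,
      ((sin x * A x ^ 2 + (1 - cos x) * (2 * A x * A' x)) + 2 * modeDefect A A' x) := by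
    refine intervalIntegral.integral_mono_on_of_le_Ioo (by positivity)
      (Continuous.intervalIntegrable (by fun_prop) _ _) (hfi.add (hN.const_mul _)) fun x hx => ?_
    exact half_sq_mul_sin_le_flux_add_modeDefect
      (sin_pos_of_mem_Ioo ⟨hx.1, by linarith [hx.2, pi_pos]⟩)
      (cos_nonneg_of_mem_Icc ⟨by linarith [hx.1, pi_pos], hx.2.le⟩)
  rw [intervalIntegral.integral_add hfi (hN.const_mul _), hflux0,
    intervalIntegral.integral_const_mul, intervalIntegral.integral_const_mul] at hmono
  simp only [cos_zero, h0] at hmono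
  linarith

lemma modeDefect_comp_pi_sub (x : ℝ) :
    modeDefect (fun x => A (π - x)) (fun x => -A' (π - x)) x = modeDefect A A' (π - x) := by
  simp only [modeDefect, sin_pi_sub, cos_pi_sub]
  ring

-- The second half of the interval is the first one reflected.
lemma integral_sq_mul_sin_le_modeDefect (hd : ∀ x, HasDerivAt A (A' x) x) (hc' : Continuous A')
    (h0 : A (π / 2) = 0) (hN : IntervalIntegrable (modeDefect A A') volume 0 π) :
    ∫ x in (0 : ℝ)..π, A x ^ 2 * sin x ≤ 4 * ∫ x in (0 : ℝ)..π, modeDefect A A' x := by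
  have hc : Continuous A := continuous_iff_continuousAt.2 fun x => (hd x).continuousAt
  have hmid : π / 2 ∈ Set.uIcc 0 π :=
    Set.mem_uIcc_of_le (by positivity) (by linarith [pi_pos])
  have hN1 : IntervalIntegrable (modeDefect A A') volume 0 (π / 2) :=
    hN.mono_set (Set.uIcc_subset_uIcc_left hmid)
  have hN2 : IntervalIntegrable (modeDefect A A') volume (π / 2) π :=
    hN.mono_set (Set.uIcc_subset_uIcc_right hmid)
  have hsq : ∀ a b, IntervalIntegrable (fun x => A x ^ 2 * sin x) volume a b := fun _ _ =>
    Continuous.intervalIntegrable (by fun_prop) _ _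
  have hleft := integral_sq_mul_sin_le_modeDefect_of_eq_zero hd hc' h0 hN1
  have hdrefl : ∀ x, HasDerivAt (fun x => A (π - x)) (-A' (π - x)) x := fun x =>
    (hd (π - x)).comp_const_sub π x
  have hhalf : π - π / 2 = π / 2 := by ring
  have hNrefl : IntervalIntegrable (modeDefect (fun x => A (π - x)) fun x => -A' (π - x))
      volume 0 (π / 2) := by
    simp only [funext modeDefect_comp_pi_sub]
    simpa [hhalf] using (hN2.comp_sub_left π).symm
  have hright := integral_sq_mul_sin_le_modeDefect_of_eq_zero hdrefl (by fun_prop)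
    (by rw [hhalf, h0]) hNrefl
  simp only [modeDefect_comp_pi_sub] at hright
  have hsub := intervalIntegral.integral_comp_sub_left (a := 0) (b := π / 2)
    (fun x => A x ^ 2 * sin x) π
  rw [intervalIntegral.integral_comp_sub_left (fun x => modeDefect A A' x) π] at hright
  simp only [sin_pi_sub, hhalf, sub_zero] at hright hsub
  rw [hsub] at hright
  rw [← intervalIntegral.integral_add_adjacent_intervals hN1 hN2,
    ← intervalIntegral.integral_add_adjacent_intervals (hsq _ _) (hsq _ _)]
  exact (add_le_add hleft hright).trans_eq (mul_add _ _ _).symm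

lemma intervalIntegrable_sq_div_sin (hc : Continuous A) {C : ℝ}
    (hC : ∀ θ ∈ Set.Icc 0 π, |A θ| ≤ C * sin θ) :
    IntervalIntegrable (fun θ => A θ ^ 2 / sin θ) volume 0 π := by
  refine intervalIntegrable_of_continuousOn_Ioo_of_bounded pi_pos.le (C := C ^ 2)
    (ContinuousOn.div (by fun_prop) (by fun_prop) fun x hx => (sin_pos_of_mem_Ioo hx).ne')
    fun x hx => ?_
  have hs := sin_pos_of_mem_Ioo hx
  rw [abs_of_nonneg (by positivity), div_le_iff₀ hs]
  calc A x ^ 2 = |A x| ^ 2 := (sq_abs _).symm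
    _ ≤ (C * sin x) ^ 2 := by gcongr; exact hC x ⟨hx.1.le, hx.2.le⟩
    _ = C ^ 2 * sin x * sin x := by ring
    _ ≤ C ^ 2 * sin x * 1 := by gcongr; exact sin_le_one x
    _ = C ^ 2 * sin x := mul_one _

lemma intervalIntegrable_modeEnergy (hd : ∀ x, HasDerivAt A (A' x) x) (hc' : Continuous A') {C : ℝ}
    (hC : ∀ θ ∈ Set.Icc 0 π, |A θ| ≤ C * sin θ) :
    IntervalIntegrable (modeEnergy A A') volume 0 π :=
  (Continuous.intervalIntegrable (by fun_prop) _ _).add (intervalIntegrable_sq_div_sin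
    (continuous_iff_continuousAt.2 fun x => (hd x).continuousAt) hC)

lemma modeDefect_eq_modeEnergy_sub {θ : ℝ} (hs : 0 < sin θ) :
    modeDefect A A' θ = modeEnergy A A' θ - 2 * (A θ ^ 2 * sin θ)
      - (-sin θ * A θ ^ 2 + cos θ * (2 * A θ * A' θ)) := by
  unfold modeDefect modeEnergy
  field_simp
  linear_combination (A θ ^ 2) * sin_sq_add_cos_sq θ

lemma integral_modeDefect (hd : ∀ x, HasDerivAt A (A' x) x) (hc' : Continuous A')
    (h0 : A 0 = 0) (hπ : A π = 0) (hE : IntervalIntegrable (modeEnergy A A') volume 0 π) :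
    IntervalIntegrable (modeDefect A A') volume 0 π ∧ ∫ θ in (0 : ℝ)..π, modeDefect A A' θ =
      (∫ θ in (0 : ℝ)..π, modeEnergy A A' θ) - 2 * ∫ θ in (0 : ℝ)..π, A θ ^ 2 * sin θ := by
  have hc : Continuous A := continuous_iff_continuousAt.2 fun x => (hd x).continuousAt
  have hsq : IntervalIntegrable (fun θ => 2 * (A θ ^ 2 * sin θ)) volume 0 π :=
    Continuous.intervalIntegrable (by fun_prop) _ _
  have hflux : IntervalIntegrable (fun θ => -sin θ * A θ ^ 2 + cos θ * (2 * A θ * A' θ))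
      volume 0 π := Continuous.intervalIntegrable (by fun_prop) _ _
  have hflux0 : ∫ θ in (0 : ℝ)..π, (-sin θ * A θ ^ 2 + cos θ * (2 * A θ * A' θ)) = 0 := by
    rw [intervalIntegral.integral_eq_sub_of_hasDerivAt (f := fun θ => cos θ * A θ ^ 2) _ hflux]
    · simp [h0, hπ]
    · exact fun x _ => ((hasDerivAt_cos x).mul ((hd x).pow 2)).congr_deriv (by simp)
  have heq : Set.EqOn (fun θ => modeEnergy A A' θ - 2 * (A θ ^ 2 * sin θ)
      - (-sin θ * A θ ^ 2 + cos θ * (2 * A θ * A' θ))) (modeDefect A A') (Set.Ioo 0 π) :=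
    fun θ hθ => (modeDefect_eq_modeEnergy_sub (sin_pos_of_mem_Ioo hθ)).symm
  refine ⟨((hE.sub hsq).sub hflux).congr_uIoo (by rwa [Set.uIoo_of_le pi_pos.le]), ?_⟩
  rw [← intervalIntegral.integral_congr_Ioo_of_le pi_pos.le heq,
    intervalIntegral.integral_sub (hE.sub hsq) hflux, hflux0, intervalIntegral.integral_sub hE hsq,
    intervalIntegral.integral_const_mul, sub_zero]

lemma integral_sq_mul_sin_le_of_orthogonal (hc : Continuous A)
    (ho : ∫ θ in (0 : ℝ)..π, A θ * sin θ ^ 2 = 0) (a : ℝ) :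
    ∫ θ in (0 : ℝ)..π, A θ ^ 2 * sin θ ≤ ∫ θ in (0 : ℝ)..π, (A θ - a * sin θ) ^ 2 * sin θ := by
  have hexp : ∀ θ, (A θ - a * sin θ) ^ 2 * sin θ =
      A θ ^ 2 * sin θ + ((-2 * a) * (A θ * sin θ ^ 2) + a ^ 2 * sin θ ^ 3) := fun θ => by ring
  have hnonneg : 0 ≤ ∫ θ in (0 : ℝ)..π, a ^ 2 * sin θ ^ 3 :=
    intervalIntegral.integral_nonneg pi_pos.le fun θ hθ => by
      have := sin_nonneg_of_mem_Icc hθ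
      positivity
  simp_rw [hexp]
  rw [intervalIntegral.integral_add, intervalIntegral.integral_add,
    intervalIntegral.integral_const_mul, ho]
  · linarith
  all_goals exact Continuous.intervalIntegrable (by fun_prop) _ _

-- `sin` minimises the Rayleigh quotient `∫ modeEnergy / ∫ A² sin`, with value `2`; the gap opens up
-- on its orthogonal complement.
theorem integral_modeEnergy_le_of_orthogonal (hd : ∀ x, HasDerivAt A (A' x) x)
    (hc' : Continuous A') {C : ℝ} (hC : ∀ θ ∈ Set.Icc 0 π, |A θ| ≤ C * sin θ)
    (ho : ∫ θ in (0 : ℝ)..π, A θ * sin θ ^ 2 = 0) :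
    1 / 9 * ∫ θ in (0 : ℝ)..π, modeEnergy A A' θ ≤
      (∫ θ in (0 : ℝ)..π, modeEnergy A A' θ) - 2 * ∫ θ in (0 : ℝ)..π, A θ ^ 2 * sin θ := by
  have hc : Continuous A := continuous_iff_continuousAt.2 fun x => (hd x).continuousAt
  obtain ⟨hNi, hN⟩ := integral_modeDefect hd hc'
    (by simpa using hC 0 ⟨le_rfl, pi_pos.le⟩) (by simpa using hC π ⟨pi_pos.le, le_rfl⟩)
    (intervalIntegrable_modeEnergy hd hc' hC)
  have hNeq := funext (modeDefect_sub_const_mul_sin (A := A) (A' := A') (A (π / 2)))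
  have hardy := integral_sq_mul_sin_le_modeDefect (A := fun x => A x - A (π / 2) * sin x)
    (fun x => (hd x).sub ((hasDerivAt_sin x).const_mul (A (π / 2)))) (by fun_prop)
    (by simp) (by rwa [hNeq])
  rw [hNeq] at hardy
  linarith [integral_sq_mul_sin_le_of_orthogonal hc ho (A (π / 2))]

end SpectralGap

/-! ### Orthogonality to the first spherical harmonics -/

section Orthogonality
open Real

variable {Ψ : SphereFun}

lemma SphSmooth.hasDerivAt_longitudeIntegral_mul {u : SphereFun} (hu : SphSmooth u) {g : ℝ → ℝ}
    (hg : ContDiff ℝ (⊤ : ℕ∞) g) (θ : ℝ) :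
    HasDerivAt (longitudeIntegral fun θ φ => u θ φ * g φ)
      (longitudeIntegral (fun θ φ => _root_.dTheta u θ φ * g φ) θ) θ := by
  refine ((hu.mul (sphSmooth_of_phi hg)).hasDerivAt_longitudeIntegral θ).congr_deriv
    (longitudeIntegral_congr fun φ => ?_)
  simp [_root_.dTheta]

-- The left-hand side is the derivative of `sin² θ ⟨Ψ_θ, g⟩ - sin θ cos θ ⟨Ψ, g⟩`.
lemma integral_sinSqLaplacian_mode_add_eq_zero (hΨ : SphSmooth Ψ) {g : ℝ → ℝ}
    (hg : ContDiff ℝ (⊤ : ℕ∞) g)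
    (hgg : ∀ θ, longitudeIntegral (fun θ φ => dPhi (dPhi Ψ) θ φ * g φ) θ =
      -longitudeIntegral (fun θ φ => Ψ θ φ * g φ) θ) :
    (∫ θ in (0 : ℝ)..π, longitudeIntegral (fun θ φ => sinSqLaplacian Ψ θ φ * g φ) θ) +
      2 * ∫ θ in (0 : ℝ)..π, longitudeIntegral (fun θ φ => Ψ θ φ * g φ) θ * sin θ ^ 2 = 0 := by
  have sg := sphSmooth_of_phi hg
  set P := longitudeIntegral fun θ φ => Ψ θ φ * g φ
  have hP : Continuous P := (hΨ.mul sg).continuous_longitudeIntegral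
  have hL := (hΨ.sinSqLaplacian.mul sg).continuous_longitudeIntegral
  have hderiv : ∀ θ, HasDerivAt (fun θ => sin θ ^ 2 * longitudeIntegral
      (fun θ φ => dTheta Ψ θ φ * g φ) θ - sin θ * cos θ * P θ)
      (longitudeIntegral (fun θ φ => sinSqLaplacian Ψ θ φ * g φ) θ + 2 * (P θ * sin θ ^ 2)) θ := by
    intro θ
    refine ((((hasDerivAt_sin θ).fun_pow 2).mul
      (hΨ.dTheta.hasDerivAt_longitudeIntegral_mul hg θ)).sub
      (((hasDerivAt_sin θ).fun_mul (hasDerivAt_cos θ)).mul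
        (hΨ.hasDerivAt_longitudeIntegral_mul hg θ))).congr_deriv ?_
    rw [longitudeIntegral_sinSqLaplacian_mul hΨ sg, hgg]
    push_cast
    linear_combination -P θ * sin_sq_add_cos_sq θ
  have hint : IntervalIntegrable (fun θ => 2 * (P θ * sin θ ^ 2)) volume 0 π :=
    Continuous.intervalIntegrable (by fun_prop) _ _
  have hFTC := intervalIntegral.integral_eq_sub_of_hasDerivAt (fun θ _ => hderiv θ)
    ((hL.intervalIntegrable 0 π).add hint)
  rw [intervalIntegral.integral_add (hL.intervalIntegrable _ _) hint,
    intervalIntegral.integral_const_mul] at hFTC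
  simpa using hFTC

lemma assocLegendrePoly_one_one_eval (s : ℝ) : (assocLegendrePoly 1 1).eval s = √(3 / 4) := by
  rw [assocLegendrePoly_eval, iteratedDeriv_one, funext legP_one, deriv_id'', mul_one]
  norm_num [Nat.factorial]

lemma integral_mode_mul_sin_sq_eq_zero (hΨ : SphSmooth Ψ) {k : ℤ} {g : ℝ → ℝ}
    (hg : ContDiff ℝ (⊤ : ℕ∞) g)
    (hgg : ∀ θ, longitudeIntegral (fun θ φ => dPhi (dPhi Ψ) θ φ * g φ) θ =
      -longitudeIntegral (fun θ φ => Ψ θ φ * g φ) θ)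
    (hY : ∀ θ, 0 ≤ sin θ → ∀ φ, Ynm 1 k θ φ = 1 / √π * assocLegendreFun 1 1 θ * g φ)
    (hk : coeff (lapS Ψ) 1 k = 0) :
    ∫ θ in (0 : ℝ)..π, longitudeIntegral (fun θ φ => Ψ θ φ * g φ) θ * sin θ ^ 2 = 0 := by
  have hcoeff := legendreCoeff_eq_mul_coeff hΨ.sinSqLaplacian
    (fun θ hθ φ => lapS_eq_sinSqLaplacian_div hΨ hθ φ) (sqrt_ne_zero'.2 pi_pos) hg hY
    (fun θ _ hθ φ => by simp [hθ]) (m := 1) fun θ => by rw [pow_one]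
  rw [hk, mul_zero] at hcoeff
  simp only [legendreCoeff, assocLegendrePoly_one_one_eval, intervalIntegral.integral_mul_const,
    mul_eq_zero, show √(3 / 4 : ℝ) ≠ 0 by positivity, or_false] at hcoeff
  have hsum := integral_sinSqLaplacian_mode_add_eq_zero hΨ hg hgg
  linarith

section
variable (hΨ : SphSmooth Ψ) (pΨ : PeriodicPhi Ψ)
include hΨ pΨ

lemma integral_cosMode_dPhi_mul_sin_sq_eq_zero (hcoeff : coeff (lapS Ψ) 1 (-1) = 0) :
    ∫ θ in (0 : ℝ)..π, cosMode (dPhi Ψ θ) 1 * sin θ ^ 2 = 0 := by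
  have hmode : ∀ θ, cosMode (dPhi Ψ θ) 1 = sinMode (Ψ θ) 1 := fun θ => by
    simpa using cosMode_deriv (hΨ.hasDerivAt_phi θ) (hΨ.dPhi.continuous_phi θ)
      (by simpa using pΨ θ 0) 1
  have hmode' : ∀ θ, sinMode (dPhi (dPhi Ψ) θ) 1 = -sinMode (Ψ θ) 1 := fun θ => by
    rw [← hmode]
    simpa using sinMode_deriv (hΨ.dPhi.hasDerivAt_phi θ) (hΨ.dPhi.dPhi.continuous_phi θ) 1
  simp only [hmode]
  exact integral_mode_mul_sin_sq_eq_zero hΨ (by fun_prop) hmode'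
    (fun θ hθ φ => by simpa using Ynm_neg_natCast 1 one_pos hθ φ) hcoeff

lemma integral_sinMode_dPhi_mul_sin_sq_eq_zero (hcoeff : coeff (lapS Ψ) 1 1 = 0) :
    ∫ θ in (0 : ℝ)..π, sinMode (dPhi Ψ θ) 1 * sin θ ^ 2 = 0 := by
  have hmode : ∀ θ, sinMode (dPhi Ψ θ) 1 = -cosMode (Ψ θ) 1 := fun θ => by
    simpa using sinMode_deriv (hΨ.hasDerivAt_phi θ) (hΨ.dPhi.continuous_phi θ) 1
  have hmode' : ∀ θ, cosMode (dPhi (dPhi Ψ) θ) 1 = -cosMode (Ψ θ) 1 := fun θ => by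
    rw [← hmode]
    simpa using cosMode_deriv (hΨ.dPhi.hasDerivAt_phi θ) (hΨ.dPhi.dPhi.continuous_phi θ)
      (by simpa using pΨ.dPhi θ 0) 1
  simp only [hmode, neg_mul, intervalIntegral.integral_neg, neg_eq_zero]
  exact integral_mode_mul_sin_sq_eq_zero hΨ (by fun_prop) hmode'
    (fun θ hθ φ => by simpa using Ynm_natCast 1 one_pos hθ φ) hcoeff

end

end Orthogonality

/-! ### The zonal mean flow -/

section MeanFlow
open Real

/-- The zonal mean of `u`, a function of colatitude alone. -/
def longitudeMean (u : SphereFun) (θ : ℝ) : ℝ := longitudeIntegral u θ / (2 * π)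

lemma SphSmooth.continuous_longitudeMean {u : SphereFun} (hu : SphSmooth u) :
    Continuous (longitudeMean u) :=
  hu.continuous_longitudeIntegral.div_const _

lemma SphSmooth.hasDerivAt_longitudeMean {u : SphereFun} (hu : SphSmooth u) (θ : ℝ) :
    HasDerivAt (longitudeMean u) (longitudeMean (_root_.dTheta u) θ) θ :=
  (hu.hasDerivAt_longitudeIntegral θ).div_const _

lemma abs_longitudeMean_le {u : SphereFun} {θ C : ℝ} (h : ∀ φ, |u θ φ| ≤ C) :
    |longitudeMean u θ| ≤ C := by
  rw [longitudeMean, abs_div, abs_of_pos two_pi_pos, div_le_iff₀' two_pi_pos]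
  exact abs_longitudeIntegral_le fun φ _ => h φ

lemma abs_sub_le_mul_cos_sub_cos {S S' : ℝ → ℝ} {η : ℝ} (hS : ∀ θ, HasDerivAt S (S' θ) θ)
    (hS' : Continuous S') (hb : ∀ θ ∈ Set.Icc 0 π, |S' θ| ≤ η * sin θ) {x y : ℝ} (hx : 0 ≤ x)
    (hxy : x ≤ y) (hy : y ≤ π) : |S y - S x| ≤ η * (cos x - cos y) := by
  have hint : ∫ θ in x..y, S' θ = S y - S x :=
    intervalIntegral.integral_eq_sub_of_hasDerivAt (fun θ _ => hS θ) (hS'.intervalIntegrable _ _)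
  rw [← hint, ← integral_sin, ← intervalIntegral.integral_const_mul]
  exact intervalIntegral.norm_integral_le_of_norm_le (f := S') (g := fun θ => η * sin θ) hxy
    (Filter.Eventually.of_forall fun θ hθ => hb θ ⟨hx.trans hθ.1.le, hθ.2.trans hy⟩)
    (Continuous.intervalIntegrable (by fun_prop) _ _)

lemma abs_le_mul_sin_sq_of_abs_deriv_le {S S' : ℝ → ℝ} {η : ℝ}
    (hS : ∀ θ, HasDerivAt S (S' θ) θ) (hS' : Continuous S')
    (hb : ∀ θ ∈ Set.Icc 0 π, |S' θ| ≤ η * sin θ) (h0 : S 0 = 0) (hπ : S π = 0) {θ : ℝ}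
    (hθ : θ ∈ Set.Icc 0 π) : |S θ| ≤ η * sin θ ^ 2 := by
  have hη : 0 ≤ η := by
    simpa using (abs_nonneg _).trans (hb (π / 2) ⟨by positivity, by linarith [pi_pos]⟩)
  have hnorth := abs_sub_le_mul_cos_sub_cos hS hS' hb le_rfl hθ.1 hθ.2
  have hsouth := abs_sub_le_mul_cos_sub_cos hS hS' hb hθ.1 hθ.2 le_rfl
  rw [h0, sub_zero, cos_zero] at hnorth
  rw [hπ, zero_sub, abs_neg, cos_pi, sub_neg_eq_add] at hsouth
  rw [sin_sq]
  rcases le_total 0 (cos θ) with hcos | hcos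
  · exact hnorth.trans (mul_le_mul_of_nonneg_left (by nlinarith [cos_le_one θ]) hη)
  · exact hsouth.trans (mul_le_mul_of_nonneg_left (by nlinarith [neg_one_le_cos θ]) hη)

variable {Ψ : SphereFun} (hΨ : SphSmooth Ψ)
include hΨ

section
variable (pΨ : PeriodicPhi Ψ) {β η : ℝ}
  (hη : ∀ θ ∈ Set.Ioo 0 π, ∀ φ, |sinSqPerturbation β Ψ θ φ| ≤ η * sin θ ^ 2)
include pΨ hη

-- The quantity estimated is the zonal mean of `sin θ · (ΔΨ + 2αY₁⁰)`.
lemma abs_meanVorticity_le {θ : ℝ} (hθ : θ ∈ Set.Icc 0 π) :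
    |cos θ * longitudeMean (dTheta Ψ) θ + sin θ * longitudeMean (dTheta (dTheta Ψ)) θ +
      2 * β * sin θ * cos θ| ≤ η * sin θ := by
  have hIoo : ∀ θ ∈ Set.Ioo 0 π, |cos θ * longitudeMean (dTheta Ψ) θ +
      sin θ * longitudeMean (dTheta (dTheta Ψ)) θ + 2 * β * sin θ * cos θ| ≤ η * sin θ := by
    intro θ hθ
    have hsin := sin_pos_of_mem_Ioo hθ
    have hfactor : longitudeMean (sinSqPerturbation β Ψ) θ = sin θ *
        (cos θ * longitudeMean (dTheta Ψ) θ + sin θ * longitudeMean (dTheta (dTheta Ψ)) θ +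
          2 * β * sin θ * cos θ) := by
      simp only [longitudeMean]
      rw [longitudeIntegral_sinSqPerturbation hΨ, hΨ.longitudeIntegral_sinSqLaplacian pΨ]
      field_simp
      ring
    have hmean := abs_longitudeMean_le (hη θ hθ)
    rw [hfactor, abs_mul, abs_of_pos hsin] at hmean
    exact le_of_mul_le_mul_left (hmean.trans_eq (by ring)) hsin
  have hm := hΨ.dTheta.continuous_longitudeMean
  have hm' := hΨ.dTheta.dTheta.continuous_longitudeMean
  rw [← closure_Ioo pi_pos.ne] at hθ
  exact le_on_closure hIoo (by fun_prop) (by fun_prop) hθ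

lemma abs_longitudeMean_dTheta_add_le {θ : ℝ} (hθ : θ ∈ Set.Ioo 0 π) :
    |longitudeMean (dTheta Ψ) θ + β * sin θ| ≤ η * sin θ := by
  have hsin := sin_pos_of_mem_Ioo hθ
  have hm := hΨ.dTheta.continuous_longitudeMean
  have hm' := hΨ.dTheta.dTheta.continuous_longitudeMean
  have hderiv : ∀ θ, HasDerivAt (fun θ => sin θ * longitudeMean (dTheta Ψ) θ + β * sin θ ^ 2)
      (cos θ * longitudeMean (dTheta Ψ) θ + sin θ * longitudeMean (dTheta (dTheta Ψ)) θ +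
        2 * β * sin θ * cos θ) θ := fun θ => by
    refine (((hasDerivAt_sin θ).mul (hΨ.dTheta.hasDerivAt_longitudeMean θ)).add
      (((hasDerivAt_sin θ).fun_pow 2).const_mul β)).congr_deriv ?_
    push_cast
    ring
  have hle := abs_le_mul_sin_sq_of_abs_deriv_le hderiv (by fun_prop)
    (fun θ hθ => abs_meanVorticity_le hΨ pΨ hη hθ) (by simp) (by simp) (Set.Ioo_subset_Icc_self hθ)
  rw [show sin θ * longitudeMean (dTheta Ψ) θ + β * sin θ ^ 2 =
    sin θ * (longitudeMean (dTheta Ψ) θ + β * sin θ) by ring, abs_mul, abs_of_pos hsin] at hle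
  exact le_of_mul_le_mul_left (hle.trans_eq (by ring)) hsin

lemma abs_longitudeMean_dTheta_mul_cot_sub_le {θ : ℝ} (hθ : θ ∈ Set.Ioo 0 π) :
    |longitudeMean (dTheta Ψ) θ * cos θ / sin θ - longitudeMean (dTheta (dTheta Ψ)) θ| ≤
      3 * η := by
  have hsin := sin_pos_of_mem_Ioo hθ
  have hvel := abs_longitudeMean_dTheta_add_le hΨ pΨ hη hθ
  have hvort := abs_meanVorticity_le hΨ pΨ hη (Set.Ioo_subset_Icc_self hθ)
  set κ := longitudeMean (dTheta Ψ) θ + β * sin θ with hκ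
  set ω := cos θ * longitudeMean (dTheta Ψ) θ + sin θ * longitudeMean (dTheta (dTheta Ψ)) θ +
    2 * β * sin θ * cos θ with hω
  have hsplit : longitudeMean (dTheta Ψ) θ * cos θ / sin θ -
      longitudeMean (dTheta (dTheta Ψ)) θ = (2 * cos θ * κ - ω) / sin θ := by
    rw [hκ, hω]
    field_simp
    ring
  have hcos : |2 * cos θ * κ| ≤ 2 * |κ| := by
    rw [abs_mul, abs_mul, abs_two]
    nlinarith [abs_cos_le_one θ, abs_nonneg κ]
  rw [hsplit, abs_div, abs_of_pos hsin, div_le_iff₀ hsin]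
  linarith [abs_sub (2 * cos θ * κ) ω]

end

lemma dTheta_lapS_eq {θ : ℝ} (hθ : θ ∈ Set.Ioo 0 π) (φ : ℝ) :
    dTheta (lapS Ψ) θ φ =
      (dTheta (sinSqLaplacian Ψ) θ φ - 2 * cos θ / sin θ * sinSqLaplacian Ψ θ φ) / sin θ ^ 2 := by
  have hsin := sin_pos_of_mem_Ioo hθ
  have hquot : (fun t => lapS Ψ t φ) =ᶠ[nhds θ] fun t => sinSqLaplacian Ψ t φ / sin t ^ 2 :=
    Filter.eventually_of_mem (isOpen_Ioo.mem_nhds hθ) fun t ht =>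
      lapS_eq_sinSqLaplacian_div hΨ ht φ
  rw [dTheta, hquot.deriv_eq, ((hΨ.sinSqLaplacian.hasDerivAt_theta θ φ).fun_div
    ((hasDerivAt_sin θ).fun_pow 2) (by positivity)).deriv]
  field_simp
  push_cast
  ring

lemma dPhi_lapS_eq {θ : ℝ} (hθ : θ ∈ Set.Ioo 0 π) (φ : ℝ) :
    dPhi (lapS Ψ) θ φ = dPhi (sinSqLaplacian Ψ) θ φ / sin θ ^ 2 := by
  simp only [dPhi, lapS_eq_sinSqLaplacian_div hΨ hθ, deriv_div_const]

lemma dPhi_mul_eq_dTheta_mul_of_advect_eq_zero {θ : ℝ} (hθ : θ ∈ Set.Ioo 0 π) {φ : ℝ}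
    (hsteady : advect Ψ (lapS Ψ) θ φ = 0) :
    dPhi Ψ θ φ *
        (dTheta (sinSqLaplacian Ψ) θ φ - 2 * cos θ / sin θ * sinSqLaplacian Ψ θ φ) =
      dTheta Ψ θ φ * dPhi (sinSqLaplacian Ψ) θ φ := by
  have hsin := sin_pos_of_mem_Ioo hθ
  rw [advect, dTheta_lapS_eq hΨ hθ, dPhi_lapS_eq hΨ hθ] at hsteady
  field_simp at hsteady ⊢
  linarith

end MeanFlow

/-! ### The momentum flux of a steady flow -/

section Flux
open Real

/-- `∫ v² dφ` over a circle of latitude, where `v = ∂_φ Ψ` is `sin θ` times the meridional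
velocity. -/
def meridionalSq (Ψ : SphereFun) : ℝ → ℝ :=
  longitudeIntegral fun θ φ => dPhi Ψ θ φ * dPhi Ψ θ φ

/-- `∫ v ∂_θ v dφ` over a circle of latitude, where `v = ∂_φ Ψ`. -/
def meridionalCross (Ψ : SphereFun) : ℝ → ℝ :=
  longitudeIntegral fun θ φ => dPhi Ψ θ φ * dTheta (dPhi Ψ) θ φ

/-- `∫ (∂_θ v)² dφ` over a circle of latitude, where `v = ∂_φ Ψ`. -/
def meridionalThetaSq (Ψ : SphereFun) : ℝ → ℝ :=
  longitudeIntegral fun θ φ => dTheta (dPhi Ψ) θ φ * dTheta (dPhi Ψ) θ φ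

/-- `∫ (∂_φ v)² dφ` over a circle of latitude, where `v = ∂_φ Ψ`. -/
def meridionalPhiSq (Ψ : SphereFun) : ℝ → ℝ :=
  longitudeIntegral fun θ φ => dPhi (dPhi Ψ) θ φ * dPhi (dPhi Ψ) θ φ

/-- The density in `θ` of the Dirichlet energy `∫ |∇v|² dS²` of `v = ∂_φ Ψ`. -/
def meridionalEnergy (Ψ : SphereFun) (θ : ℝ) : ℝ :=
  sin θ * meridionalThetaSq Ψ θ + meridionalPhiSq Ψ θ / sin θ

/-- The part of the derivative of `steadyFlux` that is linear in the vorticity perturbation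
`ΔΨ + 2αY₁⁰`, hence small against `meridionalEnergy`. -/
def fluxRemainder (β : ℝ) (Ψ : SphereFun) (θ : ℝ) : ℝ :=
  longitudeIntegral (fun t φ => sinSqPerturbation β Ψ t φ *
    ((dTheta Ψ t φ - longitudeMean (dTheta Ψ) θ) * dPhi (dPhi Ψ) t φ -
      dPhi Ψ t φ * dTheta (dPhi Ψ) t φ)) θ / sin θ ^ 2

/-- A momentum flux through the circle of latitude `θ`. It vanishes at both poles, so for a steady
flow the integral of its derivative `steadyFluxDeriv` is zero. -/
def steadyFlux (β : ℝ) (Ψ : SphereFun) (θ : ℝ) : ℝ :=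
  longitudeIntegral (fun t φ => sinSqPerturbation β Ψ t φ * (dPhi Ψ t φ * dPhi Ψ t φ)) θ /
    sin θ ^ 2 - longitudeMean (dTheta Ψ) θ * meridionalCross Ψ θ

/-- The derivative of `steadyFlux` along a steady flow. Where the mean flow is
`longitudeMean (dTheta Ψ) θ ≈ -β sin θ`, this is close to
`β * (meridionalEnergy Ψ θ - 2 * sin θ * meridionalSq Ψ θ)`. -/
def steadyFluxDeriv (β : ℝ) (Ψ : SphereFun) (θ : ℝ) : ℝ :=
  -fluxRemainder β Ψ θ -
    longitudeMean (dTheta Ψ) θ * (meridionalThetaSq Ψ θ + meridionalPhiSq Ψ θ / sin θ ^ 2) +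
    (longitudeMean (dTheta Ψ) θ * cos θ / sin θ - longitudeMean (dTheta (dTheta Ψ)) θ) *
      meridionalCross Ψ θ -
    2 * β * sin θ * meridionalSq Ψ θ

variable {Ψ : SphereFun} (hΨ : SphSmooth Ψ)
include hΨ

lemma hasDerivAt_meridionalSq (θ : ℝ) :
    HasDerivAt (meridionalSq Ψ) (2 * meridionalCross Ψ θ) θ := by
  have hv := hΨ.dPhi
  refine ((hv.mul hv).hasDerivAt_longitudeIntegral θ).congr_deriv ?_
  rw [meridionalCross, ← longitudeIntegral_theta_mul fun _ => 2, SphSmooth.dTheta_mul hv hv]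
  exact longitudeIntegral_congr fun φ => by ring

lemma hasDerivAt_meridionalCross (θ : ℝ) :
    HasDerivAt (meridionalCross Ψ) (meridionalThetaSq Ψ θ +
      longitudeIntegral (fun t φ => dPhi Ψ t φ * dTheta (dTheta (dPhi Ψ)) t φ) θ) θ := by
  have hv := hΨ.dPhi
  refine ((hv.mul hv.dTheta).hasDerivAt_longitudeIntegral θ).congr_deriv ?_
  rw [SphSmooth.dTheta_mul hv hv.dTheta,
    longitudeIntegral_add (hv.dTheta.mul hv.dTheta) (hv.mul hv.dTheta.dTheta), meridionalThetaSq]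

lemma hasDerivAt_longitudeIntegral_sinSqLaplacian_mul_sq (θ : ℝ) :
    HasDerivAt (longitudeIntegral fun t φ => sinSqLaplacian Ψ t φ * (dPhi Ψ t φ * dPhi Ψ t φ))
      (longitudeIntegral (fun t φ => dTheta (sinSqLaplacian Ψ) t φ *
          (dPhi Ψ t φ * dPhi Ψ t φ)) θ +
        2 * longitudeIntegral (fun t φ => sinSqLaplacian Ψ t φ *
          (dPhi Ψ t φ * dTheta (dPhi Ψ) t φ)) θ) θ := by
  have hv := hΨ.dPhi
  have hW := hΨ.sinSqLaplacian
  refine ((hW.mul (hv.mul hv)).hasDerivAt_longitudeIntegral θ).congr_deriv ?_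
  rw [SphSmooth.dTheta_mul hW (hv.mul hv), SphSmooth.dTheta_mul hv hv,
    longitudeIntegral_add (hW.dTheta.mul (hv.mul hv))
      (hW.mul ((hv.dTheta.mul hv).add (hv.mul hv.dTheta))),
    ← longitudeIntegral_theta_mul fun _ => 2]
  congr 1
  exact longitudeIntegral_congr fun φ => by ring

variable (pΨ : PeriodicPhi Ψ)
include pΨ

lemma longitudeIntegral_dTheta_mul_dPhi_dPhi (θ : ℝ) :
    longitudeIntegral (fun t φ => dTheta Ψ t φ * dPhi (dPhi Ψ) t φ) θ = -meridionalCross Ψ θ := by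
  rw [longitudeIntegral_mul_dPhi hΨ.dTheta hΨ.dPhi pΨ.dTheta pΨ.dPhi, meridionalCross]
  congr 1
  exact longitudeIntegral_congr fun φ => by rw [hΨ.dTheta_dPhi, mul_comm]

lemma longitudeIntegral_sinSqLaplacian_mul_dPhi_dPhi (θ : ℝ) :
    longitudeIntegral (fun t φ => sinSqLaplacian Ψ t φ * dPhi (dPhi Ψ) t φ) θ =
      meridionalPhiSq Ψ θ - sin θ * cos θ * meridionalCross Ψ θ - sin θ ^ 2 *
        longitudeIntegral (fun t φ => dPhi Ψ t φ * dTheta (dTheta (dPhi Ψ)) t φ) θ := by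
  have hcomm : dTheta (dPhi Ψ) = dPhi (dTheta Ψ) := funext₂ hΨ.dTheta_dPhi
  have hparts : longitudeIntegral (fun t φ => dTheta (dTheta Ψ) t φ * dPhi (dPhi Ψ) t φ) θ =
      -longitudeIntegral (fun t φ => dPhi Ψ t φ * dTheta (dTheta (dPhi Ψ)) t φ) θ := by
    rw [longitudeIntegral_mul_dPhi hΨ.dTheta.dTheta hΨ.dPhi pΨ.dTheta.dTheta pΨ.dPhi]
    congr 1
    exact longitudeIntegral_congr fun φ => by rw [hcomm, hΨ.dTheta.dTheta_dPhi, mul_comm]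
  rw [longitudeIntegral_sinSqLaplacian_mul hΨ hΨ.dPhi.dPhi, hparts,
    longitudeIntegral_dTheta_mul_dPhi_dPhi hΨ pΨ, meridionalPhiSq]
  ring

lemma fluxRemainder_eq (β : ℝ) {θ : ℝ} (hθ : θ ∈ Set.Ioo 0 π) :
    fluxRemainder β Ψ θ =
      longitudeIntegral (fun t φ => sinSqLaplacian Ψ t φ *
        (dTheta Ψ t φ * dPhi (dPhi Ψ) t φ - dPhi Ψ t φ * dTheta (dPhi Ψ) t φ)) θ / sin θ ^ 2 -
      longitudeMean (dTheta Ψ) θ * (meridionalPhiSq Ψ θ / sin θ ^ 2 -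
        cos θ / sin θ * meridionalCross Ψ θ -
        longitudeIntegral (fun t φ => dPhi Ψ t φ * dTheta (dTheta (dPhi Ψ)) t φ) θ) -
      4 * β * cos θ * meridionalCross Ψ θ := by
  have hsin := sin_pos_of_mem_Ioo hθ
  have hv := hΨ.dPhi
  have hW := hΨ.sinSqLaplacian
  set m := longitudeMean (dTheta Ψ) θ
  have hq : SphSmooth fun t φ =>
      dTheta Ψ t φ * dPhi (dPhi Ψ) t φ - dPhi Ψ t φ * dTheta (dPhi Ψ) t φ :=
    (hΨ.dTheta.mul hv.dPhi).sub (hv.mul hv.dTheta)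
  have hconst : SphSmooth fun _ _ => m := sphSmooth_of_theta (g := fun _ => m) (by fun_prop)
  have hsub : ∀ {w : SphereFun}, SphSmooth w → longitudeIntegral (fun t φ => w t φ *
      ((dTheta Ψ t φ - m) * dPhi (dPhi Ψ) t φ - dPhi Ψ t φ * dTheta (dPhi Ψ) t φ)) θ =
      longitudeIntegral (fun t φ => w t φ *
        (dTheta Ψ t φ * dPhi (dPhi Ψ) t φ - dPhi Ψ t φ * dTheta (dPhi Ψ) t φ)) θ -
      m * longitudeIntegral (fun t φ => w t φ * dPhi (dPhi Ψ) t φ) θ := fun {w} hw => by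
    rw [← longitudeIntegral_theta_mul fun _ => m,
      ← longitudeIntegral_sub (hw.mul hq) (hconst.mul (hw.mul hv.dPhi))]
    exact longitudeIntegral_congr fun φ => by ring
  have hmean : longitudeIntegral (fun t φ =>
      (dTheta Ψ t φ - m) * dPhi (dPhi Ψ) t φ - dPhi Ψ t φ * dTheta (dPhi Ψ) t φ) θ =
      -2 * meridionalCross Ψ θ := by
    have hone := hsub (sphSmooth_of_theta (g := fun _ => 1) (by fun_prop))
    simp only [one_mul] at hone
    rw [hone, longitudeIntegral_sub (hΨ.dTheta.mul hv.dPhi) (hv.mul hv.dTheta),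
      longitudeIntegral_dTheta_mul_dPhi_dPhi hΨ pΨ, hv.longitudeIntegral_dPhi pΨ.dPhi,
      ← meridionalCross]
    ring
  rw [fluxRemainder, longitudeIntegral_sinSqPerturbation_mul hΨ
    (((hΨ.dTheta.sub hconst).mul hv.dPhi).sub (hv.mul hv.dTheta)), hmean, hsub hW,
    longitudeIntegral_sinSqLaplacian_mul_dPhi_dPhi hΨ pΨ]
  field_simp
  ring

variable {θ : ℝ} (hθ : θ ∈ Set.Ioo 0 π) (hsteady : ∀ φ, advect Ψ (lapS Ψ) θ φ = 0)
include hθ hsteady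

-- The vorticity equation turns `v ∂_θ ω` into `∂_θ Ψ ∂_φ ω`, and `∂_φ` is integrated by parts.
lemma longitudeIntegral_dTheta_sinSqLaplacian_mul_sq :
    longitudeIntegral (fun t φ => dTheta (sinSqLaplacian Ψ) t φ *
        (dPhi Ψ t φ * dPhi Ψ t φ)) θ =
      2 * cos θ / sin θ * longitudeIntegral (fun t φ => sinSqLaplacian Ψ t φ *
        (dPhi Ψ t φ * dPhi Ψ t φ)) θ -
      longitudeIntegral (fun t φ => sinSqLaplacian Ψ t φ *
        (dTheta Ψ t φ * dPhi (dPhi Ψ) t φ + dPhi Ψ t φ * dTheta (dPhi Ψ) t φ)) θ := by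
  have hv := hΨ.dPhi
  have hW := hΨ.sinSqLaplacian
  have hparts : longitudeIntegral (fun t φ => sinSqLaplacian Ψ t φ *
      (dTheta Ψ t φ * dPhi (dPhi Ψ) t φ + dPhi Ψ t φ * dTheta (dPhi Ψ) t φ)) θ =
      -longitudeIntegral (fun t φ =>
        dPhi (sinSqLaplacian Ψ) t φ * (dTheta Ψ t φ * dPhi Ψ t φ)) θ := by
    rw [← longitudeIntegral_mul_dPhi hW (hΨ.dTheta.mul hv) pΨ.sinSqLaplacian
      (fun t φ => by simp only [pΨ.dTheta t φ, pΨ.dPhi t φ]), SphSmooth.dPhi_mul hΨ.dTheta hv]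
    exact longitudeIntegral_congr fun φ => by rw [hΨ.dTheta_dPhi]; ring
  rw [hparts, ← longitudeIntegral_theta_mul fun _ => 2 * cos θ / sin θ, sub_neg_eq_add,
    ← longitudeIntegral_add ((sphSmooth_of_theta (g := fun _ => 2 * cos θ / sin θ)
      (by fun_prop)).mul (hW.mul (hv.mul hv))) (hW.dPhi.mul (hΨ.dTheta.mul hv))]
  refine longitudeIntegral_congr fun φ => ?_
  linear_combination
    dPhi Ψ θ φ * dPhi_mul_eq_dTheta_mul_of_advect_eq_zero hΨ hθ (hsteady φ)

lemma hasDerivAt_longitudeIntegral_sinSqLaplacian_mul_sq_div :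
    HasDerivAt (fun θ => longitudeIntegral (fun t φ => sinSqLaplacian Ψ t φ *
        (dPhi Ψ t φ * dPhi Ψ t φ)) θ / sin θ ^ 2)
      (-(longitudeIntegral (fun t φ => sinSqLaplacian Ψ t φ *
        (dTheta Ψ t φ * dPhi (dPhi Ψ) t φ - dPhi Ψ t φ * dTheta (dPhi Ψ) t φ)) θ /
          sin θ ^ 2)) θ := by
  have hsin := sin_pos_of_mem_Ioo hθ
  have hv := hΨ.dPhi
  have hW := hΨ.sinSqLaplacian
  have hadvect := hW.mul (hΨ.dTheta.mul hv.dPhi)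
  have hcross := hW.mul (hv.mul hv.dTheta)
  refine ((hasDerivAt_longitudeIntegral_sinSqLaplacian_mul_sq hΨ θ).fun_div
    ((hasDerivAt_sin θ).fun_pow 2) (by positivity)).congr_deriv ?_
  rw [longitudeIntegral_dTheta_sinSqLaplacian_mul_sq hΨ pΨ hθ hsteady]
  simp only [mul_add, mul_sub]
  rw [longitudeIntegral_add hadvect hcross, longitudeIntegral_sub hadvect hcross]
  field_simp
  push_cast
  ring

lemma hasDerivAt_steadyFlux (β : ℝ) :
    HasDerivAt (steadyFlux β Ψ) (steadyFluxDeriv β Ψ θ) θ := by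
  have hsin := sin_pos_of_mem_Ioo hθ
  have hflux : steadyFlux β Ψ =ᶠ[nhds θ] fun t => longitudeIntegral (fun t φ =>
      sinSqLaplacian Ψ t φ * (dPhi Ψ t φ * dPhi Ψ t φ)) t / sin t ^ 2 +
      2 * β * cos t * meridionalSq Ψ t - longitudeMean (dTheta Ψ) t * meridionalCross Ψ t := by
    filter_upwards [isOpen_Ioo.mem_nhds hθ] with t ht
    have hsin := sin_pos_of_mem_Ioo ht
    rw [steadyFlux, longitudeIntegral_sinSqPerturbation_mul hΨ (hΨ.dPhi.mul hΨ.dPhi),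
      ← meridionalSq]
    field_simp
  have hmean := (hΨ.dTheta.hasDerivAt_longitudeMean θ).fun_mul (hasDerivAt_meridionalCross hΨ θ)
  have hsq := ((hasDerivAt_cos θ).const_mul (2 * β)).fun_mul (hasDerivAt_meridionalSq hΨ θ)
  refine ((((hasDerivAt_longitudeIntegral_sinSqLaplacian_mul_sq_div hΨ pΨ hθ hsteady).add
    hsq).sub hmean).congr_of_eventuallyEq hflux).congr_deriv ?_
  rw [steadyFluxDeriv, fluxRemainder_eq hΨ pΨ β hθ]
  field_simp
  ring

end Flux

/-! ### The energy of the meridional velocity -/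

section Energy
open Real

lemma abs_mul_le_half_add {x y s : ℝ} (hs : 0 < s) :
    |x * y| ≤ 1 / 2 * (s * (x * x)) + 1 / 2 * (1 / s * (y * y)) := by
  have hsq : (s * |x| - |y|) ^ 2 / s = s * (x * x) - 2 * |x * y| + 1 / s * (y * y) := by
    rw [← abs_mul_abs_self x, ← abs_mul_abs_self y, abs_mul]
    field_simp
    ring
  linarith [div_nonneg (sq_nonneg (s * |x| - |y|)) hs.le]

lemma abs_longitudeIntegral_mul_mul_le {u v w : SphereFun} (hu : SphSmooth u) (hv : SphSmooth v)
    {θ M s : ℝ} (hM : ∀ φ, |w θ φ| ≤ M) (hs : 0 < s) :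
    |longitudeIntegral (fun t φ => w t φ * (u t φ * v t φ)) θ| ≤
      M / 2 * (s * longitudeIntegral (fun t φ => u t φ * u t φ) θ +
        longitudeIntegral (fun t φ => v t φ * v t φ) θ / s) := by
  have hconst (c : ℝ) : SphSmooth fun _ _ => c := sphSmooth_of_theta (g := fun _ => c) (by fun_prop)
  have hsu := (hconst (M / 2 * s)).mul (hu.mul hu)
  have hsv := (hconst (M / 2 / s)).mul (hv.mul hv)
  have hle := abs_longitudeIntegral_le_of_abs_le (u := fun t φ => w t φ * (u t φ * v t φ))
    (hsu.add hsv) (θ := θ) fun φ => by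
      rw [abs_mul]
      refine (mul_le_mul (hM φ) (abs_mul_le_half_add hs) (abs_nonneg _)
        ((abs_nonneg _).trans (hM φ))).trans_eq ?_
      field_simp
  rw [longitudeIntegral_add hsu hsv, longitudeIntegral_theta_mul fun _ => M / 2 * s,
    longitudeIntegral_theta_mul fun _ => M / 2 / s] at hle
  exact hle.trans_eq (by ring)

lemma longitudeIntegral_mul_self (u : SphereFun) (θ : ℝ) :
    longitudeIntegral (fun t φ => u t φ * u t φ) θ = ∫ φ in (0 : ℝ)..(2 * π), u θ φ ^ 2 := by
  simp only [longitudeIntegral, sq]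

lemma longitudeIntegral_mul_self_nonneg (u : SphereFun) (θ : ℝ) :
    0 ≤ longitudeIntegral (fun t φ => u t φ * u t φ) θ :=
  intervalIntegral.integral_nonneg two_pi_pos.le fun _ _ => mul_self_nonneg _

lemma meridionalEnergy_nonneg (Ψ : SphereFun) {θ : ℝ} (hθ : θ ∈ Set.Ioo 0 π) :
    0 ≤ meridionalEnergy Ψ θ :=
  have hsin := (sin_pos_of_mem_Ioo hθ).le
  add_nonneg (mul_nonneg hsin (longitudeIntegral_mul_self_nonneg _ θ))
    (div_nonneg (longitudeIntegral_mul_self_nonneg _ θ) hsin)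

variable {Ψ : SphereFun} (hΨ : SphSmooth Ψ)
include hΨ

lemma continuous_meridionalSq : Continuous (meridionalSq Ψ) :=
  (hΨ.dPhi.mul hΨ.dPhi).continuous_longitudeIntegral

lemma continuous_meridionalCross : Continuous (meridionalCross Ψ) :=
  (hΨ.dPhi.mul hΨ.dPhi.dTheta).continuous_longitudeIntegral

lemma continuous_meridionalThetaSq : Continuous (meridionalThetaSq Ψ) :=
  (hΨ.dPhi.dTheta.mul hΨ.dPhi.dTheta).continuous_longitudeIntegral

lemma continuous_meridionalPhiSq : Continuous (meridionalPhiSq Ψ) :=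
  (hΨ.dPhi.dPhi.mul hΨ.dPhi.dPhi).continuous_longitudeIntegral

lemma intervalIntegrable_sin_mul_meridionalSq :
    IntervalIntegrable (fun θ => 2 * sin θ * meridionalSq Ψ θ) volume 0 π := by
  have := continuous_meridionalSq hΨ
  exact Continuous.intervalIntegrable (by fun_prop) _ _

lemma continuousOn_meridionalEnergy : ContinuousOn (meridionalEnergy Ψ) (Set.Ioo 0 π) := by
  have hθ := continuous_meridionalThetaSq hΨ
  have hφ := continuous_meridionalPhiSq hΨ
  exact ContinuousOn.add (by fun_prop)
    (hφ.continuousOn.div (by fun_prop) fun θ hθ => (sin_pos_of_mem_Ioo hθ).ne')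

section Poles
variable (hNorth : ∀ φ, dPhi Ψ 0 φ = 0) (hSouth : ∀ φ, dPhi Ψ π φ = 0)
include hNorth hSouth

lemma exists_meridionalEnergy_le : ∃ M, ∀ θ ∈ Set.Ioo 0 π, meridionalEnergy Ψ θ ≤ M := by
  obtain ⟨C, hC⟩ := hΨ.dPhi.dPhi.exists_abs_le_mul_sin
    (fun φ => by simp only [dPhi] at hNorth ⊢; simp [hNorth])
    (fun φ => by simp only [dPhi] at hSouth ⊢; simp [hSouth])
  obtain ⟨M, hM⟩ := (isCompact_Icc (a := 0) (b := π)).exists_bound_of_continuousOn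
    (continuous_meridionalThetaSq hΨ).continuousOn
  refine ⟨M + 2 * π * C ^ 2, fun θ hθ => ?_⟩
  have hsin := sin_pos_of_mem_Ioo hθ
  have hIcc := Set.Ioo_subset_Icc_self hθ
  have htheta : sin θ * meridionalThetaSq Ψ θ ≤ M :=
    (mul_le_of_le_one_left (longitudeIntegral_mul_self_nonneg _ θ) (sin_le_one θ)).trans
      ((le_abs_self _).trans (hM θ hIcc))
  have hphi : meridionalPhiSq Ψ θ ≤ 2 * π * (C * sin θ) ^ 2 :=
    (le_abs_self _).trans (abs_longitudeIntegral_le fun φ hφ => by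
      rw [← sq, abs_of_nonneg (sq_nonneg _)]
      exact sq_le_sq' (abs_le.1 (hC θ hIcc φ hφ)).1 (abs_le.1 (hC θ hIcc φ hφ)).2)
  refine add_le_add htheta ?_
  rw [div_le_iff₀ hsin]
  refine hphi.trans ?_
  rw [mul_pow, ← mul_assoc, sq (sin θ)]
  exact mul_le_mul_of_nonneg_left (mul_le_of_le_one_left hsin.le (sin_le_one θ)) (by positivity)

lemma intervalIntegrable_meridionalEnergy :
    IntervalIntegrable (meridionalEnergy Ψ) volume 0 π := by
  obtain ⟨M, hM⟩ := exists_meridionalEnergy_le hΨ hNorth hSouth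
  exact intervalIntegrable_of_continuousOn_Ioo_of_bounded pi_pos.le
    (continuousOn_meridionalEnergy hΨ) fun θ hθ =>
      (abs_of_nonneg (meridionalEnergy_nonneg Ψ hθ)).trans_le (hM θ hθ)

end Poles

variable (pΨ : PeriodicPhi Ψ)
include pΨ

lemma meridionalSq_le_meridionalPhiSq (θ : ℝ) : meridionalSq Ψ θ ≤ meridionalPhiSq Ψ θ := by
  rw [meridionalSq, meridionalPhiSq, longitudeIntegral_mul_self, longitudeIntegral_mul_self]
  exact integral_sq_le_integral_deriv_sq (hΨ.dPhi.hasDerivAt_phi θ) (hΨ.dPhi.dPhi.continuous_phi θ)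
    (by simpa using pΨ.dPhi θ 0) (hΨ.longitudeIntegral_dPhi pΨ θ)

lemma longitudeIntegral_sub_longitudeMean_sq_le (θ : ℝ) :
    longitudeIntegral (fun t φ => (dTheta Ψ t φ - longitudeMean (dTheta Ψ) θ) *
      (dTheta Ψ t φ - longitudeMean (dTheta Ψ) θ)) θ ≤ meridionalThetaSq Ψ θ := by
  rw [meridionalThetaSq, longitudeIntegral_mul_self, longitudeIntegral_mul_self,
    funext₂ hΨ.dTheta_dPhi]
  refine integral_sq_le_integral_deriv_sq (fun φ => (hΨ.dTheta.hasDerivAt_phi θ φ).sub_const _)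
    (hΨ.dTheta.dPhi.continuous_phi θ) (by simpa using pΨ.dTheta θ 0) ?_
  rw [intervalIntegral.integral_sub (hΨ.dTheta.intervalIntegrable _ _ _) (by simp),
    intervalIntegral.integral_const, smul_eq_mul, sub_zero, longitudeMean,
    mul_div_cancel₀ _ two_pi_pos.ne', longitudeIntegral, sub_self]

lemma meridionalSq_le_meridionalEnergy {θ : ℝ} (hθ : θ ∈ Set.Ioo 0 π) :
    meridionalSq Ψ θ ≤ meridionalEnergy Ψ θ := by
  have hsin := sin_pos_of_mem_Ioo hθ
  calc meridionalSq Ψ θ ≤ meridionalPhiSq Ψ θ := meridionalSq_le_meridionalPhiSq hΨ pΨ θ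
    _ ≤ meridionalPhiSq Ψ θ / sin θ :=
      le_div_self (longitudeIntegral_mul_self_nonneg _ θ) hsin (sin_le_one θ)
    _ ≤ meridionalEnergy Ψ θ :=
      le_add_of_nonneg_left (mul_nonneg hsin.le (longitudeIntegral_mul_self_nonneg _ θ))

lemma sin_mul_meridionalThetaSq_add_le {θ : ℝ} (hθ : θ ∈ Set.Ioo 0 π) :
    sin θ * meridionalThetaSq Ψ θ + meridionalSq Ψ θ / sin θ ≤ meridionalEnergy Ψ θ :=
  add_le_add_right (div_le_div_of_nonneg_right (meridionalSq_le_meridionalPhiSq hΨ pΨ θ)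
    (sin_pos_of_mem_Ioo hθ).le) _

lemma abs_meridionalCross_le {θ : ℝ} (hθ : θ ∈ Set.Ioo 0 π) :
    |meridionalCross Ψ θ| ≤ 1 / 2 * meridionalEnergy Ψ θ := by
  have hyoung := abs_longitudeIntegral_mul_mul_le hΨ.dPhi.dTheta hΨ.dPhi (w := fun _ _ => 1)
    (θ := θ) (fun _ => abs_one.le) (sin_pos_of_mem_Ioo hθ)
  simp only [one_mul, mul_comm (dTheta (dPhi Ψ) _ _) (dPhi Ψ _ _)] at hyoung
  exact hyoung.trans
    (mul_le_mul_of_nonneg_left (sin_mul_meridionalThetaSq_add_le hΨ pΨ hθ) (by norm_num))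

/-! ### The flux identity controls the energy -/

section Perturbation
variable {β η : ℝ}
  (hη : ∀ θ ∈ Set.Ioo 0 π, ∀ φ, |sinSqPerturbation β Ψ θ φ| ≤ η * sin θ ^ 2)
include hη

lemma abs_fluxRemainder_le {θ : ℝ} (hθ : θ ∈ Set.Ioo 0 π) :
    |fluxRemainder β Ψ θ| ≤ η * meridionalEnergy Ψ θ := by
  have hsin := sin_pos_of_mem_Ioo hθ
  have hM : 0 ≤ η * sin θ ^ 2 := (abs_nonneg _).trans (hη θ hθ 0)
  have hW := hΨ.sinSqPerturbation β
  have hdev : SphSmooth fun t φ => dTheta Ψ t φ - longitudeMean (dTheta Ψ) θ :=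
    hΨ.dTheta.sub (sphSmooth_of_theta (g := fun _ => longitudeMean (dTheta Ψ) θ) (by fun_prop))
  have hzonal := abs_longitudeIntegral_mul_mul_le hdev hΨ.dPhi.dPhi (hη θ hθ) hsin
  have hcross := abs_longitudeIntegral_mul_mul_le hΨ.dPhi.dTheta hΨ.dPhi (hη θ hθ) hsin
  have hzonal' : sin θ * longitudeIntegral (fun t φ =>
      (dTheta Ψ t φ - longitudeMean (dTheta Ψ) θ) *
        (dTheta Ψ t φ - longitudeMean (dTheta Ψ) θ)) θ + meridionalPhiSq Ψ θ / sin θ ≤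
      meridionalEnergy Ψ θ :=
    add_le_add_left (mul_le_mul_of_nonneg_left
      (longitudeIntegral_sub_longitudeMean_sq_le hΨ pΨ θ) hsin.le) _
  have hsum := add_le_add
    (hzonal.trans (mul_le_mul_of_nonneg_left hzonal' (by positivity)))
    (hcross.trans (mul_le_mul_of_nonneg_left (sin_mul_meridionalThetaSq_add_le hΨ pΨ hθ)
      (by positivity)))
  simp only [fluxRemainder, mul_sub, mul_comm (dPhi Ψ _ _) (dTheta (dPhi Ψ) _ _)]
  rw [longitudeIntegral_sub (hW.mul (hdev.mul hΨ.dPhi.dPhi))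
    (hW.mul (hΨ.dPhi.dTheta.mul hΨ.dPhi)), abs_div, abs_of_pos (pow_pos hsin 2),
    div_le_iff₀ (pow_pos hsin 2)]
  exact (abs_sub _ _).trans (hsum.trans_eq (by ring))

lemma abs_steadyFluxDeriv_sub_le {θ : ℝ} (hθ : θ ∈ Set.Ioo 0 π) :
    |steadyFluxDeriv β Ψ θ - β * (meridionalEnergy Ψ θ - 2 * sin θ * meridionalSq Ψ θ)| ≤
      7 / 2 * η * meridionalEnergy Ψ θ := by
  have hsin := sin_pos_of_mem_Ioo hθ
  have hE := meridionalEnergy_nonneg Ψ hθ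
  have hvel := abs_longitudeMean_dTheta_add_le hΨ pΨ hη hθ
  have hshear := abs_longitudeMean_dTheta_mul_cot_sub_le hΨ pΨ hη hθ
  have hsplit : steadyFluxDeriv β Ψ θ -
      β * (meridionalEnergy Ψ θ - 2 * sin θ * meridionalSq Ψ θ) =
      -fluxRemainder β Ψ θ -
        (longitudeMean (dTheta Ψ) θ + β * sin θ) / sin θ * meridionalEnergy Ψ θ +
        (longitudeMean (dTheta Ψ) θ * cos θ / sin θ - longitudeMean (dTheta (dTheta Ψ)) θ) *
          meridionalCross Ψ θ := by
    rw [steadyFluxDeriv, meridionalEnergy]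
    field_simp
    ring
  have hvelE : |(longitudeMean (dTheta Ψ) θ + β * sin θ) / sin θ * meridionalEnergy Ψ θ| ≤
      η * meridionalEnergy Ψ θ := by
    rw [abs_mul, abs_div, abs_of_pos hsin, abs_of_nonneg hE]
    exact mul_le_mul_of_nonneg_right ((div_le_iff₀ hsin).2 hvel) hE
  have hshearE : |(longitudeMean (dTheta Ψ) θ * cos θ / sin θ -
      longitudeMean (dTheta (dTheta Ψ)) θ) * meridionalCross Ψ θ| ≤
      3 * η * (1 / 2 * meridionalEnergy Ψ θ) := by
    rw [abs_mul]
    exact mul_le_mul hshear (abs_meridionalCross_le hΨ pΨ hθ) (abs_nonneg _)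
      ((abs_nonneg _).trans hshear)
  rw [hsplit]
  refine (abs_add_le _ _).trans ((add_le_add_left (abs_sub _ _) _).trans ?_)
  rw [abs_neg]
  linarith [abs_fluxRemainder_le hΨ pΨ hη hθ]

end Perturbation

end Energy

section FluxIdentity
open Real

variable {Ψ : SphereFun} (hΨ : SphSmooth Ψ) (pΨ : PeriodicPhi Ψ)
include hΨ pΨ

lemma continuousOn_fluxRemainder (β : ℝ) :
    ContinuousOn (fluxRemainder β Ψ) (Set.Ioo 0 π) := by
  have hsin : ∀ θ ∈ Set.Ioo 0 π, sin θ ≠ 0 := fun θ hθ => (sin_pos_of_mem_Ioo hθ).ne'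
  have hsin2 : ∀ θ ∈ Set.Ioo 0 π, sin θ ^ 2 ≠ 0 := fun θ hθ => pow_ne_zero 2 (hsin θ hθ)
  have hW := (hΨ.sinSqLaplacian.mul ((hΨ.dTheta.mul hΨ.dPhi.dPhi).sub
    (hΨ.dPhi.mul hΨ.dPhi.dTheta))).continuous_longitudeIntegral
  have hmean := hΨ.dTheta.continuous_longitudeMean
  have hcross := continuous_meridionalCross hΨ
  have hphi := continuous_meridionalPhiSq hΨ
  have hcurv := (hΨ.dPhi.mul hΨ.dPhi.dTheta.dTheta).continuous_longitudeIntegral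
  refine ContinuousOn.congr ?_ fun θ hθ => fluxRemainder_eq hΨ pΨ β hθ
  exact ((hW.continuousOn.div (by fun_prop) hsin2).sub (hmean.continuousOn.mul
    (((hphi.continuousOn.div (by fun_prop) hsin2).sub
      ((continuousOn_cos.div continuousOn_sin hsin).mul hcross.continuousOn)).sub
        hcurv.continuousOn))).sub (by fun_prop)

lemma continuousOn_steadyFluxDeriv (β : ℝ) :
    ContinuousOn (steadyFluxDeriv β Ψ) (Set.Ioo 0 π) := by
  have hsin : ∀ θ ∈ Set.Ioo 0 π, sin θ ≠ 0 := fun θ hθ => (sin_pos_of_mem_Ioo hθ).ne'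
  have hmean := hΨ.dTheta.continuous_longitudeMean
  have hmean' := hΨ.dTheta.dTheta.continuous_longitudeMean
  have hsq := continuous_meridionalSq hΨ
  have htheta := continuous_meridionalThetaSq hΨ
  have hphi := (continuous_meridionalPhiSq hΨ).continuousOn.div
    (continuous_sin.pow 2).continuousOn fun θ hθ => pow_ne_zero 2 (hsin θ hθ)
  have hcot := (hmean.mul continuous_cos).continuousOn.div continuousOn_sin hsin
  exact (((continuousOn_fluxRemainder hΨ pΨ β).neg.sub
    (hmean.continuousOn.mul (htheta.continuousOn.add hphi))).add
      ((hcot.sub hmean'.continuousOn).mul (continuous_meridionalCross hΨ).continuousOn)).sub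
        (by fun_prop)

lemma abs_meridionalEnergy_sub_le {θ : ℝ} (hθ : θ ∈ Set.Ioo 0 π) :
    |meridionalEnergy Ψ θ - 2 * sin θ * meridionalSq Ψ θ| ≤ meridionalEnergy Ψ θ := by
  have hsq : 0 ≤ meridionalSq Ψ θ := longitudeIntegral_mul_self_nonneg _ θ
  have hle : sin θ * meridionalSq Ψ θ ≤ meridionalEnergy Ψ θ :=
    (mul_le_of_le_one_left hsq (sin_le_one θ)).trans (meridionalSq_le_meridionalEnergy hΨ pΨ hθ)
  have hnonneg := mul_nonneg (sin_pos_of_mem_Ioo hθ).le hsq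
  exact abs_le.2 ⟨by linarith, by linarith⟩

variable {β η : ℝ}
  (hη : ∀ θ ∈ Set.Ioo 0 π, ∀ φ, |sinSqPerturbation β Ψ θ φ| ≤ η * sin θ ^ 2)
include hη

lemma abs_steadyFluxDeriv_le {θ : ℝ} (hθ : θ ∈ Set.Ioo 0 π) :
    |steadyFluxDeriv β Ψ θ| ≤ (7 / 2 * η + |β|) * meridionalEnergy Ψ θ := by
  have hmain : |β * (meridionalEnergy Ψ θ - 2 * sin θ * meridionalSq Ψ θ)| ≤
      |β| * meridionalEnergy Ψ θ := by
    rw [abs_mul]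
    exact mul_le_mul_of_nonneg_left (abs_meridionalEnergy_sub_le hΨ pΨ hθ) (abs_nonneg β)
  rw [add_mul]
  exact (sub_le_iff_le_add.1 (abs_sub_abs_le_abs_sub _ _)).trans
    (add_le_add (abs_steadyFluxDeriv_sub_le hΨ pΨ hη hθ) hmain)

omit pΨ in
lemma abs_steadyFlux_le {θ : ℝ} (hθ : θ ∈ Set.Ioo 0 π) :
    |steadyFlux β Ψ θ| ≤
      η * meridionalSq Ψ θ + |longitudeMean (dTheta Ψ) θ * meridionalCross Ψ θ| := by
  have hsin := pow_pos (sin_pos_of_mem_Ioo hθ) 2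
  refine (abs_sub _ _).trans (add_le_add_left ?_ _)
  rw [abs_div, abs_of_pos hsin, div_le_iff₀ hsin]
  refine (abs_longitudeIntegral_mul_mul_le hΨ.dPhi hΨ.dPhi (hη θ hθ) one_pos).trans_eq ?_
  rw [← meridionalSq]
  ring

omit pΨ in
lemma tendsto_steadyFlux {a : ℝ} {l : Filter ℝ} (hl : l ≤ nhds a) (hIoo : Set.Ioo 0 π ∈ l)
    (ha : ∀ φ, dPhi Ψ a φ = 0) : Filter.Tendsto (steadyFlux β Ψ) l (nhds 0) := by
  have hsq := continuous_meridionalSq hΨ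
  have hcross := continuous_meridionalCross hΨ
  have hmean := hΨ.dTheta.continuous_longitudeMean
  have hbound : Continuous fun θ =>
      η * meridionalSq Ψ θ + |longitudeMean (dTheta Ψ) θ * meridionalCross Ψ θ| := by fun_prop
  refine squeeze_zero_norm' (Filter.eventually_of_mem hIoo fun θ => abs_steadyFlux_le hΨ hη) ?_
  simpa [meridionalSq, meridionalCross, longitudeIntegral, ha] using (hbound.tendsto a).mono_left hl

variable (hNorth : ∀ φ, dPhi Ψ 0 φ = 0) (hSouth : ∀ φ, dPhi Ψ π φ = 0)
include hNorth hSouth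

lemma intervalIntegrable_steadyFluxDeriv :
    IntervalIntegrable (steadyFluxDeriv β Ψ) volume 0 π := by
  obtain ⟨M, hM⟩ := exists_meridionalEnergy_le hΨ hNorth hSouth
  have hη0 : 0 ≤ η := by
    simpa using (abs_nonneg _).trans (hη (π / 2) ⟨by positivity, by linarith [pi_pos]⟩ 0)
  exact intervalIntegrable_of_continuousOn_Ioo_of_bounded pi_pos.le
    (continuousOn_steadyFluxDeriv hΨ pΨ β) fun θ hθ => (abs_steadyFluxDeriv_le hΨ pΨ hη hθ).trans
      (mul_le_mul_of_nonneg_left (hM θ hθ) (by positivity))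

variable (hsteady : ∀ θ ∈ Set.Ioo 0 π, ∀ φ, advect Ψ (lapS Ψ) θ φ = 0)
include hsteady

lemma integral_steadyFluxDeriv_eq_zero :
    ∫ θ in (0 : ℝ)..π, steadyFluxDeriv β Ψ θ = 0 := by
  rw [intervalIntegral.integral_eq_sub_of_hasDerivAt_of_tendsto pi_pos
    (fun θ hθ => hasDerivAt_steadyFlux hΨ pΨ hθ (hsteady θ hθ) β)
    (intervalIntegrable_steadyFluxDeriv hΨ pΨ hη hNorth hSouth)
    (tendsto_steadyFlux hΨ hη nhdsWithin_le_nhds (Ioo_mem_nhdsGT pi_pos) hNorth)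
    (tendsto_steadyFlux hΨ hη nhdsWithin_le_nhds (Ioo_mem_nhdsLT pi_pos) hSouth), sub_self]

lemma abs_integral_meridionalEnergy_sub_le :
    |β * ∫ θ in (0 : ℝ)..π, (meridionalEnergy Ψ θ - 2 * sin θ * meridionalSq Ψ θ)| ≤
      7 / 2 * η * ∫ θ in (0 : ℝ)..π, meridionalEnergy Ψ θ := by
  have hE := intervalIntegrable_meridionalEnergy hΨ hNorth hSouth
  have hJ := intervalIntegrable_steadyFluxDeriv hΨ pΨ hη hNorth hSouth
  have hSq := intervalIntegrable_sin_mul_meridionalSq hΨ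
  have hG := (hE.sub hSq).const_mul β
  have hnear : ∀ᵐ θ, θ ∈ Set.Ioc 0 π → ‖steadyFluxDeriv β Ψ θ -
      β * (meridionalEnergy Ψ θ - 2 * sin θ * meridionalSq Ψ θ)‖ ≤
        7 / 2 * η * meridionalEnergy Ψ θ := by
    filter_upwards [compl_mem_ae_iff.2 (measure_singleton π)] with θ hne hθ
    exact abs_steadyFluxDeriv_sub_le hΨ pΨ hη ⟨hθ.1, hθ.2.lt_of_ne hne⟩
  have hle := intervalIntegral.norm_integral_le_of_norm_le pi_pos.le hnear (hE.const_mul _)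
  rwa [intervalIntegral.integral_sub hJ hG,
    integral_steadyFluxDeriv_eq_zero hΨ pΨ hη hNorth hSouth hsteady, zero_sub, norm_neg,
    intervalIntegral.integral_const_mul, intervalIntegral.integral_const_mul] at hle

end FluxIdentity

/-! ### The spectral gap of the meridional velocity -/

section MeridionalGap
open Real

/-- `8/9` of the energy density `modeEnergy` less `2 A² sin`. Its integral is nonnegative when the
function `A(θ) cos φ` on the sphere is orthogonal to `Y₁¹`. -/
def modeExcess (A A' : ℝ → ℝ) (θ : ℝ) : ℝ := 8 / 9 * modeEnergy A A' θ - 2 * (A θ ^ 2 * sin θ)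

lemma integral_modeExcess_nonneg {A A' : ℝ → ℝ} (hd : ∀ x, HasDerivAt A (A' x) x)
    (hc' : Continuous A') {C : ℝ} (hC : ∀ θ ∈ Set.Icc 0 π, |A θ| ≤ C * sin θ)
    (ho : ∫ θ in (0 : ℝ)..π, A θ * sin θ ^ 2 = 0) :
    IntervalIntegrable (modeExcess A A') volume 0 π ∧ 0 ≤ ∫ θ in (0 : ℝ)..π, modeExcess A A' θ := by
  have hc : Continuous A := continuous_iff_continuousAt.2 fun x => (hd x).continuousAt
  have hE := (intervalIntegrable_modeEnergy hd hc' hC).const_mul (8 / 9)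
  have hsq : IntervalIntegrable (fun θ => 2 * (A θ ^ 2 * sin θ)) volume 0 π :=
    Continuous.intervalIntegrable (by fun_prop) _ _
  refine ⟨hE.sub hsq, ?_⟩
  simp only [modeExcess]
  rw [intervalIntegral.integral_sub hE hsq, intervalIntegral.integral_const_mul,
    intervalIntegral.integral_const_mul]
  linarith [integral_modeEnergy_le_of_orthogonal hd hc' hC ho]

lemma integral_modeExcess_longitudeIntegral_nonneg {v : SphereFun} (hv : SphSmooth v)
    (hNorth : ∀ φ, v 0 φ = 0) (hSouth : ∀ φ, v π φ = 0) {g : ℝ → ℝ}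
    (hg : ContDiff ℝ (⊤ : ℕ∞) g) (hg1 : ∀ φ, |g φ| ≤ 1)
    (ho : ∫ θ in (0 : ℝ)..π, longitudeIntegral (fun θ φ => v θ φ * g φ) θ * sin θ ^ 2 = 0) :
    IntervalIntegrable (modeExcess (longitudeIntegral fun θ φ => v θ φ * g φ)
      (longitudeIntegral fun θ φ => dTheta v θ φ * g φ)) volume 0 π ∧
    0 ≤ ∫ θ in (0 : ℝ)..π, modeExcess (longitudeIntegral fun θ φ => v θ φ * g φ)
      (longitudeIntegral fun θ φ => dTheta v θ φ * g φ) θ := by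
  obtain ⟨C, hC⟩ := hv.exists_abs_le_mul_sin hNorth hSouth
  refine integral_modeExcess_nonneg (C := 2 * π * C) (hv.hasDerivAt_longitudeIntegral_mul hg)
    (hv.dTheta.mul (sphSmooth_of_phi hg)).continuous_longitudeIntegral (fun θ hθ => ?_) ho
  rw [mul_assoc (2 * π)]
  refine abs_longitudeIntegral_le fun φ hφ => ?_
  rw [abs_mul]
  exact (mul_le_of_le_one_right (abs_nonneg _) (hg1 φ)).trans (hC θ hθ φ hφ)

lemma cosMode_one_eq_longitudeIntegral (u : SphereFun) :
    (fun θ => cosMode (u θ) 1) = longitudeIntegral fun θ φ => u θ φ * cos φ := by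
  ext θ
  simp [cosMode, longitudeIntegral]

lemma sinMode_one_eq_longitudeIntegral (u : SphereFun) :
    (fun θ => sinMode (u θ) 1) = longitudeIntegral fun θ φ => u θ φ * sin φ := by
  ext θ
  simp [sinMode, longitudeIntegral]

variable {Ψ : SphereFun} (hΨ : SphSmooth Ψ) (pΨ : PeriodicPhi Ψ)
include hΨ pΨ

lemma modeExcess_add_modeExcess_le {θ : ℝ} (hθ : θ ∈ Set.Ioo 0 π) :
    modeExcess (fun θ => cosMode (dPhi Ψ θ) 1) (fun θ => cosMode (dTheta (dPhi Ψ) θ) 1) θ +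
      modeExcess (fun θ => sinMode (dPhi Ψ θ) 1) (fun θ => sinMode (dTheta (dPhi Ψ) θ) 1) θ ≤
    π * (8 / 9 * meridionalEnergy Ψ θ - 2 * sin θ * meridionalSq Ψ θ) := by
  have hsin := sin_pos_of_mem_Ioo hθ
  have hd := hΨ.dPhi.hasDerivAt_phi θ
  have hc' := hΨ.dPhi.dPhi.continuous_phi θ
  have hp : dPhi Ψ θ (2 * π) = dPhi Ψ θ 0 := by simpa using pΨ.dPhi θ 0
  have htheta := sq_modes_one_div_pi_le_integral_sq (hΨ.dPhi.dTheta.continuous_phi θ)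
  have hphi := sq_modes_one_div_pi_le_integral_sq hc'
  have hgap := four_mul_integral_sq_sub_le_integral_deriv_sq hd hc' hp
    (hΨ.longitudeIntegral_dPhi pΨ θ)
  rw [sq_modes_deriv hd hc' hp, Int.cast_one, one_pow, one_mul] at hphi
  rw [← longitudeIntegral_mul_self, div_le_iff₀' pi_pos, ← meridionalThetaSq] at htheta
  rw [← longitudeIntegral_mul_self (dPhi (dPhi Ψ)), div_le_iff₀' pi_pos, ← meridionalPhiSq] at hphi
  rw [← longitudeIntegral_mul_self (dPhi (dPhi Ψ)), ← longitudeIntegral_mul_self (dPhi Ψ),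
    ← meridionalPhiSq, ← meridionalSq] at hgap
  have hgap' : 4 * (π * meridionalSq Ψ θ) - 3 * (cosMode (dPhi Ψ θ) 1 ^ 2 +
      sinMode (dPhi Ψ θ) 1 ^ 2) ≤ π * meridionalPhiSq Ψ θ := by
    refine le_of_eq_of_le ?_ (mul_le_mul_of_nonneg_left hgap pi_pos.le)
    field_simp
  have hsininv : sin θ ≤ 1 / sin θ := (sin_le_one θ).trans (one_le_one_div hsin (sin_le_one θ))
  have hhigh := sub_nonneg.2 hphi
  have hthetaS := mul_le_mul_of_nonneg_left htheta hsin.le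
  have hgapS := mul_le_mul_of_nonneg_left hgap' hsin.le
  have hhighS := mul_le_mul_of_nonneg_right hsininv hhigh
  have hhigh0 := mul_nonneg hsin.le hhigh
  simp only [modeExcess, modeEnergy, meridionalEnergy, div_eq_mul_one_div (meridionalPhiSq Ψ θ),
    div_eq_mul_one_div (cosMode (dPhi Ψ θ) 1 ^ 2), div_eq_mul_one_div (sinMode (dPhi Ψ θ) 1 ^ 2)]
  linarith

variable (hNorth : ∀ φ, dPhi Ψ 0 φ = 0) (hSouth : ∀ φ, dPhi Ψ π φ = 0)
  (hcoeffCos : coeff (lapS Ψ) 1 1 = 0) (hcoeffSin : coeff (lapS Ψ) 1 (-1) = 0)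
include hNorth hSouth hcoeffCos hcoeffSin

lemma integral_meridionalEnergy_le :
    1 / 9 * ∫ θ in (0 : ℝ)..π, meridionalEnergy Ψ θ ≤
      ∫ θ in (0 : ℝ)..π, (meridionalEnergy Ψ θ - 2 * sin θ * meridionalSq Ψ θ) := by
  have hcosOrth := integral_cosMode_dPhi_mul_sin_sq_eq_zero hΨ pΨ hcoeffSin
  have hsinOrth := integral_sinMode_dPhi_mul_sin_sq_eq_zero hΨ pΨ hcoeffCos
  simp only [congrFun (cosMode_one_eq_longitudeIntegral _)] at hcosOrth
  simp only [congrFun (sinMode_one_eq_longitudeIntegral _)] at hsinOrth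
  obtain ⟨hcosInt, hcos⟩ := integral_modeExcess_longitudeIntegral_nonneg hΨ.dPhi hNorth hSouth
    contDiff_cos abs_cos_le_one hcosOrth
  obtain ⟨hsinInt, hsin⟩ := integral_modeExcess_longitudeIntegral_nonneg hΨ.dPhi hNorth hSouth
    contDiff_sin abs_sin_le_one hsinOrth
  have hE := intervalIntegrable_meridionalEnergy hΨ hNorth hSouth
  have hSq := intervalIntegrable_sin_mul_meridionalSq hΨ
  have hle := intervalIntegral.integral_mono_on_of_le_Ioo pi_pos.le (hcosInt.add hsinInt)
    (((hE.const_mul (8 / 9)).sub hSq).const_mul π) fun θ hθ => by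
      simpa only [cosMode_one_eq_longitudeIntegral, sinMode_one_eq_longitudeIntegral] using
        modeExcess_add_modeExcess_le hΨ pΨ hθ
  rw [intervalIntegral.integral_add hcosInt hsinInt, intervalIntegral.integral_const_mul] at hle
  have hpos := nonneg_of_mul_nonneg_right ((add_nonneg hcos hsin).trans hle) pi_pos
  rw [intervalIntegral.integral_sub (hE.const_mul _) hSq,
    intervalIntegral.integral_const_mul] at hpos
  rw [intervalIntegral.integral_sub hE hSq]
  linarith

variable {β η : ℝ}
  (hη : ∀ θ ∈ Set.Ioo 0 π, ∀ φ, |sinSqPerturbation β Ψ θ φ| ≤ η * sin θ ^ 2)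
  (hsteady : ∀ θ ∈ Set.Ioo 0 π, ∀ φ, advect Ψ (lapS Ψ) θ φ = 0)
include hη hsteady

lemma integral_meridionalEnergy_nonpos (hβ : 63 / 2 * η < |β|) :
    ∫ θ in (0 : ℝ)..π, meridionalEnergy Ψ θ ≤ 0 := by
  have hgap := mul_le_mul_of_nonneg_left
    (integral_meridionalEnergy_le hΨ pΨ hNorth hSouth hcoeffCos hcoeffSin) (abs_nonneg β)
  have hflux := abs_integral_meridionalEnergy_sub_le hΨ pΨ hη hNorth hSouth hsteady
  rw [abs_mul] at hflux
  have hle := hgap.trans ((mul_le_mul_of_nonneg_left (le_abs_self _) (abs_nonneg β)).trans hflux)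
  refine nonpos_of_mul_nonneg_right (a := 63 / 2 * η - |β|) ?_ (sub_neg.2 hβ)
  linarith

end MeridionalGap

section Zonal
open Real

lemma ZonalOn.lapS {Ψ : SphereFun} (hz : ZonalOn Ψ) : ZonalOn (_root_.lapS Ψ) := by
  intro θ hθ φ₁ φ₂
  rcases hθ.1.eq_or_lt with rfl | h0
  · simp [_root_.lapS]
  rcases hθ.2.eq_or_lt with rfl | hπ
  · simp [_root_.lapS]
  have hΨeq : ∀ t ∈ Set.Ioo 0 π, (fun s => Ψ s φ₁) =ᶠ[nhds t] fun s => Ψ s φ₂ := fun t ht =>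
    Filter.eventually_of_mem (isOpen_Ioo.mem_nhds ht) fun s hs =>
      hz s (Set.Ioo_subset_Icc_self hs) φ₁ φ₂
  have hfluxeq : (fun t => sin t * dTheta Ψ t φ₁) =ᶠ[nhds θ] fun t => sin t * dTheta Ψ t φ₂ :=
    Filter.eventually_of_mem (isOpen_Ioo.mem_nhds ⟨h0, hπ⟩) fun t ht =>
      congrArg (sin t * ·) (hΨeq t ht).deriv_eq
  have hphi : ∀ φ, dPhi (dPhi Ψ) θ φ = 0 := fun φ => by
    have hconst : Ψ θ = fun _ => Ψ θ 0 := funext fun ψ => hz θ hθ ψ 0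
    have hdPhi : dPhi Ψ θ = fun _ => 0 := funext fun ψ => by
      change deriv (Ψ θ) ψ = 0
      rw [hconst, deriv_const]
    rw [dPhi, hdPhi, deriv_const]
  simp only [_root_.lapS]
  rw [hfluxeq.deriv_eq, hphi, hphi]

variable {Ψ : SphereFun} (hΨ : SphSmooth Ψ)
include hΨ

lemma dPhi_eq_zero_of_meridionalSq_nonpos (pΨ : PeriodicPhi Ψ) {θ : ℝ}
    (h : meridionalSq Ψ θ ≤ 0) (φ : ℝ) : dPhi Ψ θ φ = 0 := by
  obtain ⟨ψ, hψ, heq⟩ := Function.Periodic.exists_mem_Ico₀ (pΨ.dPhi θ) two_pi_pos φ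
  rw [heq]
  by_contra hne
  exact h.not_gt (intervalIntegral.integral_pos two_pi_pos
    ((hΨ.dPhi.mul hΨ.dPhi).continuous_phi θ).continuousOn (fun _ _ => mul_self_nonneg _)
    ⟨ψ, Set.Ico_subset_Icc_self hψ, mul_self_pos.2 hne⟩)

lemma dPhi_eq_zero_of_integral_meridionalEnergy_nonpos (pΨ : PeriodicPhi Ψ)
    (hNorth : ∀ φ, dPhi Ψ 0 φ = 0) (hSouth : ∀ φ, dPhi Ψ π φ = 0)
    (hE : ∫ θ in (0 : ℝ)..π, meridionalEnergy Ψ θ ≤ 0) {θ : ℝ} (hθ : θ ∈ Set.Icc 0 π) (φ : ℝ) :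
    dPhi Ψ θ φ = 0 := by
  have hc := continuous_meridionalSq hΨ
  have hSq : ∫ θ in (0 : ℝ)..π, meridionalSq Ψ θ ≤ 0 :=
    (intervalIntegral.integral_mono_on_of_le_Ioo pi_pos.le (hc.intervalIntegrable _ _)
      (intervalIntegrable_meridionalEnergy hΨ hNorth hSouth)
      fun _ => meridionalSq_le_meridionalEnergy hΨ pΨ).trans hE
  refine dPhi_eq_zero_of_meridionalSq_nonpos hΨ pΨ (not_lt.1 fun hpos => ?_) φ
  exact hSq.not_gt (intervalIntegral.integral_pos pi_pos hc.continuousOn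
    (fun t _ => longitudeIntegral_mul_self_nonneg _ t) ⟨θ, hθ, hpos⟩)

lemma zonalOn_of_dPhi_eq_zero (h : ∀ θ ∈ Set.Icc 0 π, ∀ φ, dPhi Ψ θ φ = 0) : ZonalOn Ψ :=
  fun θ hθ => is_const_of_deriv_eq_zero (fun φ => (hΨ.hasDerivAt_phi θ φ).differentiableAt) (h θ hθ)

end Zonal

section Perturbation
open Real

lemma abs_sinSqPerturbation_le_of_sobNormSq_le {α ε : ℝ} (hε : 0 < ε) {Ψ : SphereFun}
    (hΨ : SphSmooth Ψ) (pΨ : PeriodicPhi Ψ)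
    (hsob : sobNormSq 4 (fun θ φ => lapS Ψ θ φ + 2 * α * Ynm 1 0 θ φ) ≤ ENNReal.ofReal (ε ^ 2)) :
    (∀ φ, dPhi Ψ 0 φ = 0) ∧ (∀ φ, dPhi Ψ π φ = 0) ∧ ∀ θ ∈ Set.Ioo 0 π, ∀ φ,
      |sinSqPerturbation (α * √(3 / (4 * π))) Ψ θ φ| ≤
        √(2 * π) * (1 + sobolevConstant) * ε * sin θ ^ 2 := by
  have hw := fun θ hθ φ => lapS_add_Ynm_eq_sinSqPerturbation_div α hΨ (θ := θ) hθ φ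
  have hsum := summable_weightedCoeff hε hsob
  refine ⟨dPhi_eq_zero_of_sin_eq_zero hΨ pΨ hw hsum ⟨le_rfl, pi_pos.le⟩ sin_zero,
    dPhi_eq_zero_of_sin_eq_zero hΨ pΨ hw hsum ⟨pi_pos.le, le_rfl⟩ sin_pi, fun θ hθ φ => ?_⟩
  refine (abs_sinSqPerturbation_le hΨ pΨ hw hsum (Set.Ioo_subset_Icc_self hθ) φ).trans
    (mul_le_mul_of_nonneg_right ?_ (sq_nonneg _))
  rw [mul_assoc]
  exact mul_le_mul_of_nonneg_left (tsum_weightedCoeff_le hε hsob) (sqrt_nonneg _)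

end Perturbation

/-- Conditional rigidity of the rigid rotation for the
non-rotating Euler equations: every steady solution whose vorticity `Ω̄ = ΔΨ`
is `ε₀`-close to `−2αY₁⁰` in `H⁴` and is orthogonal to `Y₁^{±1}` must be zonal. -/
theorem rigidity_nonrotating_orthogonal (α : ℝ) (hα : α ≠ 0) :
    ∃ ε₀ : ℝ, 0 < ε₀ ∧
      ∀ Ψ : SphereFun, SphSmooth Ψ → PeriodicPhi Ψ →
        -- steady non-rotating Euler: Ū·∇Ω̄ = 0 with Ū = ∇⊥Ψ, Ω̄ = ΔΨ
        (∀ θ ∈ Set.Ioo (0:ℝ) Real.pi, ∀ φ : ℝ,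
          advect Ψ (lapS Ψ) θ φ = 0) →
        -- ‖Ω̄ + 2αY₁⁰‖_{H⁴} ≤ ε₀
        sobNormSq 4 (fun θ φ => lapS Ψ θ φ + 2*α*Ynm 1 0 θ φ)
          ≤ ENNReal.ofReal (ε₀^2) →
        -- ⟨Ω̄, Y₁^m⟩ = 0 for |m| = 1
        coeff (lapS Ψ) 1 1 = 0 → coeff (lapS Ψ) 1 (-1) = 0 →
        -- conclusion: Ū = Ū(θ)e_φ and Ω̄ = Ω̄(θ)
        ZonalOn Ψ ∧ ZonalOn (lapS Ψ) := by
  have hβ : 0 < |α * √(3 / (4 * Real.pi))| :=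
    abs_pos.2 (mul_ne_zero hα (Real.sqrt_ne_zero'.2 (by positivity)))
  set β := α * √(3 / (4 * Real.pi))
  set c := √(2 * Real.pi) * (1 + sobolevConstant)
  have hc : 0 < c := mul_pos (Real.sqrt_pos.2 Real.two_pi_pos)
    (add_pos_of_pos_of_nonneg one_pos sobolevConstant_nonneg)
  refine ⟨|β| / (64 * c), by positivity, fun Ψ hΨ pΨ hsteady hsob hcos hsin => ?_⟩
  obtain ⟨hNorth, hSouth, hη⟩ :=
    abs_sinSqPerturbation_le_of_sobNormSq_le (by positivity) hΨ pΨ hsob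
  have hη64 : c * (|β| / (64 * c)) = |β| / 64 := by field_simp
  have hE := integral_meridionalEnergy_nonpos hΨ pΨ hNorth hSouth hcos hsin hη hsteady
    (by rw [hη64]; linarith)
  have hΨzonal := zonalOn_of_dPhi_eq_zero hΨ fun θ =>
    dPhi_eq_zero_of_integral_meridionalEnergy_nonpos hΨ pΨ hNorth hSouth hE
  exact ⟨hΨzonal, hΨzonal.lapS⟩
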